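/- For all integers k ≥ 1 and t ≥ 1, every (even hole, pyramid, K_t, S_{k,k,k})-free graph G has treewidth at most (t−1)·(R(t, 4k−1))^3 − 1, where R(t, 4k−1) is the Ramsey number. -/

import Mathlib

open SimpleGraph

variable {V : Type} [Fintype V] [DecidableEq V]

/-- `p` is a chordless (induced) path in `G`: a path such that the only edges of `G`
between its vertices are the edges of the path. -/
def IsInducedPathW (G : SimpleGraph V) {a b : V} (p : G.Walk a b) : Prop :=
  p.IsPath ∧ ∀ u v : V, u ∈ p.support → v ∈ p.support → G.Adj u v → p.toSubgraph.Adj u v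

/-- A hole of length `n` in `G`: an induced (chordless) cycle of length `n ≥ 4`,
given by an injection of `ZMod n` into `G` whose adjacencies are exactly the consecutive ones. -/
def IsHoleEmb (G : SimpleGraph V) (n : ℕ) (f : ZMod n → V) : Prop :=
  4 ≤ n ∧ Function.Injective f ∧
    ∀ i j : ZMod n, G.Adj (f i) (f j) ↔ (j = i + 1 ∨ i = j + 1)

/-- `G` contains an even hole (induced even cycle of length at least 4). -/
def ContainsEvenHole (G : SimpleGraph V) : Prop :=
  ∃ (n : ℕ) (f : ZMod n → V), IsHoleEmb G n f ∧ Even n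

/-- `G` contains a square (hole of length 4). -/
def ContainsSquare (G : SimpleGraph V) : Prop :=
  ∃ f : ZMod 4 → V, IsHoleEmb G 4 f

/-- `G` contains a theta as an induced subgraph: three internally vertex-disjoint chordless
paths from `a` to `b`, each of length at least 2, with no edges between the paths other than
those incident to `a` or `b` specified by the paths. -/
def ContainsTheta (G : SimpleGraph V) : Prop :=
  ∃ (a b : V) (p₁ p₂ p₃ : G.Walk a b),
    (IsInducedPathW G p₁ ∧ IsInducedPathW G p₂ ∧ IsInducedPathW G p₃) ∧
    (2 ≤ p₁.length ∧ 2 ≤ p₂.length ∧ 2 ≤ p₃.length) ∧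
    (∀ w : V, ((w ∈ p₁.support ∧ w ∈ p₂.support) ∨ (w ∈ p₁.support ∧ w ∈ p₃.support) ∨
          (w ∈ p₂.support ∧ w ∈ p₃.support)) → (w = a ∨ w = b)) ∧
    (∀ u w : V, u ≠ a → u ≠ b → w ≠ a → w ≠ b →
      ((u ∈ p₁.support ∧ w ∈ p₂.support) ∨ (u ∈ p₁.support ∧ w ∈ p₃.support) ∨
       (u ∈ p₂.support ∧ w ∈ p₃.support)) → ¬G.Adj u w)

/-- `G` contains a prism as an induced subgraph. -/
def ContainsPrism (G : SimpleGraph V) : Prop :=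
  ∃ (a₁ b₁ a₂ b₂ a₃ b₃ : V) (p₁ : G.Walk a₁ b₁) (p₂ : G.Walk a₂ b₂) (p₃ : G.Walk a₃ b₃),
    (IsInducedPathW G p₁ ∧ IsInducedPathW G p₂ ∧ IsInducedPathW G p₃) ∧
    (1 ≤ p₁.length ∧ 1 ≤ p₂.length ∧ 1 ≤ p₃.length) ∧
    (G.Adj a₁ a₂ ∧ G.Adj a₂ a₃ ∧ G.Adj a₁ a₃) ∧
    (G.Adj b₁ b₂ ∧ G.Adj b₂ b₃ ∧ G.Adj b₁ b₃) ∧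
    (∀ w : V, ¬(w ∈ p₁.support ∧ w ∈ p₂.support) ∧ ¬(w ∈ p₁.support ∧ w ∈ p₃.support) ∧
          ¬(w ∈ p₂.support ∧ w ∈ p₃.support)) ∧
    (∀ u w : V, u ∈ p₁.support → w ∈ p₂.support → G.Adj u w →
      (u = a₁ ∧ w = a₂) ∨ (u = b₁ ∧ w = b₂)) ∧
    (∀ u w : V, u ∈ p₁.support → w ∈ p₃.support → G.Adj u w →
      (u = a₁ ∧ w = a₃) ∨ (u = b₁ ∧ w = b₃)) ∧
    (∀ u w : V, u ∈ p₂.support → w ∈ p₃.support → G.Adj u w →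
      (u = a₂ ∧ w = a₃) ∨ (u = b₂ ∧ w = b₃))

/-- `G` contains a pyramid as an induced subgraph. -/
def ContainsPyramid (G : SimpleGraph V) : Prop :=
  ∃ (a b₁ b₂ b₃ : V) (p₁ : G.Walk a b₁) (p₂ : G.Walk a b₂) (p₃ : G.Walk a b₃),
    (IsInducedPathW G p₁ ∧ IsInducedPathW G p₂ ∧ IsInducedPathW G p₃) ∧
    (1 ≤ p₁.length ∧ 1 ≤ p₂.length ∧ 1 ≤ p₃.length) ∧
    ((2 ≤ p₁.length ∧ 2 ≤ p₂.length) ∨ (2 ≤ p₁.length ∧ 2 ≤ p₃.length) ∨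
     (2 ≤ p₂.length ∧ 2 ≤ p₃.length)) ∧
    (G.Adj b₁ b₂ ∧ G.Adj b₂ b₃ ∧ G.Adj b₁ b₃) ∧
    (∀ w : V, ((w ∈ p₁.support ∧ w ∈ p₂.support) ∨ (w ∈ p₁.support ∧ w ∈ p₃.support) ∨
          (w ∈ p₂.support ∧ w ∈ p₃.support)) → w = a) ∧
    (∀ u w : V, u ∈ p₁.support → w ∈ p₂.support → u ≠ a → w ≠ a → G.Adj u w →
      u = b₁ ∧ w = b₂) ∧
    (∀ u w : V, u ∈ p₁.support → w ∈ p₃.support → u ≠ a → w ≠ a → G.Adj u w →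
      u = b₁ ∧ w = b₃) ∧
    (∀ u w : V, u ∈ p₂.support → w ∈ p₃.support → u ≠ a → w ≠ a → G.Adj u w →
      u = b₂ ∧ w = b₃)

/-- `G` contains the cube as an induced subgraph: a hole of length 6 together with
two non-adjacent vertices `u, v` outside it, `u` adjacent to the even positions and
`v` adjacent to the odd positions. -/
def ContainsCube (G : SimpleGraph V) : Prop :=
  ∃ (f : ZMod 6 → V) (u v : V), IsHoleEmb G 6 f ∧
    u ∉ Set.range f ∧ v ∉ Set.range f ∧ ¬G.Adj u v ∧
    (∀ m : ZMod 6, G.Adj u (f m) ↔ (m = 0 ∨ m = 2 ∨ m = 4)) ∧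
    (∀ m : ZMod 6, G.Adj v (f m) ↔ (m = 1 ∨ m = 3 ∨ m = 5))

/-- `G` contains an even wheel: a hole plus a vertex outside it having at least 3 and
an even number of neighbors on the hole. -/
def ContainsEvenWheel (G : SimpleGraph V) : Prop :=
  ∃ (n : ℕ) (f : ZMod n → V) (u : V), IsHoleEmb G n f ∧ u ∉ Set.range f ∧
    3 ≤ {m : ZMod n | G.Adj u (f m)}.ncard ∧ Even {m : ZMod n | G.Adj u (f m)}.ncard

/-- `G` contains a butterfly: a wheel `(H,v)` with `N_H(v) = {a,b,c,d}`,
`ab, cd ∈ E(G)` and `bc, da ∉ E(G)`. -/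
def ContainsButterfly (G : SimpleGraph V) : Prop :=
  ∃ (n : ℕ) (f : ZMod n → V) (u : V), IsHoleEmb G n f ∧ u ∉ Set.range f ∧
    ∃ i j : ZMod n, i ≠ j ∧ i ≠ j + 1 ∧ i + 1 ≠ j ∧ i + 1 ≠ j + 1 ∧
      ¬G.Adj (f (i + 1)) (f j) ∧ ¬G.Adj (f (j + 1)) (f i) ∧
      (∀ m : ZMod n, G.Adj u (f m) ↔ (m = i ∨ m = i + 1 ∨ m = j ∨ m = j + 1))

/-- A 2-wheel in `G`: a hole `f` together with two distinct centers `u, v` outside the hole,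
each having at least three neighbors on the hole. -/
def Is2WheelCfg (G : SimpleGraph V) (n : ℕ) (f : ZMod n → V) (u v : V) : Prop :=
  IsHoleEmb G n f ∧ u ≠ v ∧ u ∉ Set.range f ∧ v ∉ Set.range f ∧
  3 ≤ {m : ZMod n | G.Adj u (f m)}.ncard ∧ 3 ≤ {m : ZMod n | G.Adj v (f m)}.ncard

/-- The 2-wheel `(f, {u,v})` is nested: the hole splits at `f i` and `f (i+d)` into two arcs,
with all neighbors of `u` on one arc and all neighbors of `v` on the other. -/
def NestedCfg (G : SimpleGraph V) (n : ℕ) (f : ZMod n → V) (u v : V) : Prop :=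
  ∃ (i : ZMod n) (d : ℕ), 1 ≤ d ∧ d < n ∧
    (∀ m : ZMod n, G.Adj u (f m) → ∃ e : ℕ, e ≤ d ∧ m = i + (e : ZMod n)) ∧
    (∀ m : ZMod n, G.Adj v (f m) → ∃ e : ℕ, e ≤ n - d ∧ m = i + (d : ZMod n) + (e : ZMod n))

/-- The 2-wheel `(f, {u,v})` is the cube. -/
def CubeCfg (G : SimpleGraph V) (n : ℕ) (f : ZMod n → V) (u v : V) : Prop :=
  n = 6 ∧ ∃ i : ZMod n,
    (∀ m : ZMod n, G.Adj u (f m) ↔ (m = i ∨ m = i + 2 ∨ m = i + 4)) ∧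
    (∀ m : ZMod n, G.Adj v (f m) ↔ (m = i + 1 ∨ m = i + 3 ∨ m = i + 5))

/-- The 2-wheel `(f, {u,v})` is a cousin wheel: `N_H(u) = {h₁,h₂,h₃}` and
`N_H(v) = {h₂,h₃,h₄}` for four consecutive vertices of the hole (or with `u, v` swapped). -/
def CousinCfg (G : SimpleGraph V) (n : ℕ) (f : ZMod n → V) (u v : V) : Prop :=
  (∃ i : ZMod n,
    (∀ m : ZMod n, G.Adj u (f m) ↔ (m = i ∨ m = i + 1 ∨ m = i + 2)) ∧
    (∀ m : ZMod n, G.Adj v (f m) ↔ (m = i + 1 ∨ m = i + 2 ∨ m = i + 3))) ∨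
  (∃ i : ZMod n,
    (∀ m : ZMod n, G.Adj v (f m) ↔ (m = i ∨ m = i + 1 ∨ m = i + 2)) ∧
    (∀ m : ZMod n, G.Adj u (f m) ↔ (m = i + 1 ∨ m = i + 2 ∨ m = i + 3)))

/-- A `u`-sector of the hole `f`: a subpath from `f i` to `f (i+d)` (`1 ≤ d < n`)
whose two ends are adjacent to `u` and whose internal vertices are not. -/
def IsSector (G : SimpleGraph V) (n : ℕ) (f : ZMod n → V) (u : V) (i : ZMod n) (d : ℕ) : Prop :=
  1 ≤ d ∧ d < n ∧ G.Adj u (f i) ∧ G.Adj u (f (i + (d : ZMod n))) ∧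
    ∀ m : ℕ, 0 < m → m < d → ¬G.Adj u (f (i + (m : ZMod n)))

/-- The class 𝒞: (theta, prism, pyramid, butterfly)-free graphs in which every 2-wheel
with non-adjacent centers is a nested wheel or a cousin wheel. -/
def InClassC (G : SimpleGraph V) : Prop :=
  ¬ContainsTheta G ∧ ¬ContainsPrism G ∧ ¬ContainsPyramid G ∧ ¬ContainsButterfly G ∧
  ∀ (n : ℕ) (f : ZMod n → V) (u v : V), Is2WheelCfg G n f u v → ¬G.Adj u v →
    (NestedCfg G n f u v ∨ CousinCfg G n f u v)

/-- `G` contains `S_{k,k,k}` as an induced subgraph: a root `r` and three legs of `k` edges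
each, with no other adjacencies among these vertices. -/
def ContainsSpider (G : SimpleGraph V) (k : ℕ) : Prop :=
  ∃ (r : V) (f : Fin 3 → Fin k → V),
    (∀ (j : Fin 3) (m : Fin k), f j m ≠ r) ∧
    (∀ (j₁ : Fin 3) (m₁ : Fin k) (j₂ : Fin 3) (m₂ : Fin k),
      f j₁ m₁ = f j₂ m₂ → j₁ = j₂ ∧ m₁ = m₂) ∧
    (∀ (j : Fin 3) (m : Fin k), G.Adj r (f j m) ↔ (m : ℕ) = 0) ∧
    (∀ (j₁ : Fin 3) (m₁ : Fin k) (j₂ : Fin 3) (m₂ : Fin k),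
      G.Adj (f j₁ m₁) (f j₂ m₂) ↔
        (j₁ = j₂ ∧ ((m₁ : ℕ) + 1 = (m₂ : ℕ) ∨ (m₂ : ℕ) + 1 = (m₁ : ℕ))))

/-- A `k`-span-wheel in `G`: a hole `f` of length `n`, with `x = f 0` and `y = f p`
non-adjacent, the two paths `P_A = f 0, f 1, …, f p` and `P_B = f 0, f (n-1), …, f p`,
and centers `c 0, …, c (k-1)` outside the hole such that `{c i} ∪ {x,y}` is independent,
every center has at least three neighbors on the hole and neighbors in the interiors of
both `P_A` and `P_B`, and the neighbors of the centers appear along both `P_A` and `P_B`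
(from `x` to `y`) in the order of the centers. -/
def IsSpanWheel (G : SimpleGraph V) (k n p : ℕ) (f : ZMod n → V) (c : Fin k → V) : Prop :=
  IsHoleEmb G n f ∧
  2 ≤ p ∧ p ≤ n - 2 ∧
  ¬G.Adj (f 0) (f (p : ZMod n)) ∧
  Function.Injective c ∧
  (∀ i : Fin k, c i ∉ Set.range f) ∧
  (∀ i j : Fin k, i ≠ j → ¬G.Adj (c i) (c j)) ∧
  (∀ i : Fin k, ¬G.Adj (c i) (f 0)) ∧
  (∀ i : Fin k, ¬G.Adj (c i) (f (p : ZMod n))) ∧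
  (∀ i : Fin k, 3 ≤ {m : ZMod n | G.Adj (c i) (f m)}.ncard) ∧
  (∀ i : Fin k, ∃ a : ℕ, 0 < a ∧ a < p ∧ G.Adj (c i) (f (a : ZMod n))) ∧
  (∀ i : Fin k, ∃ b : ℕ, p < b ∧ b < n ∧ G.Adj (c i) (f (b : ZMod n))) ∧
  (∀ i j : Fin k, i < j → ∀ a₁ a₂ : ℕ, a₁ ≤ p → a₂ ≤ p →
    G.Adj (c i) (f (a₁ : ZMod n)) → G.Adj (c j) (f (a₂ : ZMod n)) → a₁ ≤ a₂) ∧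
  (∀ i j : Fin k, i < j → ∀ b₁ b₂ : ℕ, p ≤ b₁ → b₁ ≤ n → p ≤ b₂ → b₂ ≤ n →
    G.Adj (c i) (f (b₁ : ZMod n)) → G.Adj (c j) (f (b₂ : ZMod n)) → b₂ ≤ b₁)

/-- `X` separates `s` from `t` in `G`: neither is in `X` and every walk from `s` to `t`
meets `X`. -/
def Separates (G : SimpleGraph V) (X : Set V) (s t : V) : Prop :=
  s ∉ X ∧ t ∉ X ∧ ∀ p : G.Walk s t, ∃ w ∈ p.support, w ∈ X

/-- `X` is a minimal separator of `G`: for some pair `s, t` it is an inclusion-wise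
minimal `st`-separator. -/
def MinSeparator (G : SimpleGraph V) (X : Set V) : Prop :=
  ∃ s t : V, Separates G X s t ∧ ∀ Y ⊆ X, Separates G Y s t → Y = X

/-- `A` is a connected component of `G ∖ C` that is full to `C`. -/
def IsFullComponent (G : SimpleGraph V) (C A : Set V) : Prop :=
  A.Nonempty ∧ Disjoint A C ∧ (G.induce A).Connected ∧
  (∀ a ∈ A, ∀ w : V, G.Adj a w → w ∈ A ∪ C) ∧
  (∀ x ∈ C, ∃ a ∈ A, G.Adj x a)

/-- A tree decomposition of `G` with tree `T` and bags `B`. -/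
def IsTreeDecomp (G : SimpleGraph V) {ι : Type} (T : SimpleGraph ι) (B : ι → Finset V) : Prop :=
  T.IsTree ∧
  (∀ v : V, ∃ i, v ∈ B i) ∧
  (∀ u v : V, G.Adj u v → ∃ i, u ∈ B i ∧ v ∈ B i) ∧
  (∀ (v : V) (i j : ι), v ∈ B i → v ∈ B j →
    ∀ (p : T.Walk i j), p.IsPath → ∀ x ∈ p.support, v ∈ B x)

/-- The treewidth of a finite graph: the least `w` such that `G` has a tree decomposition
all of whose bags have size at most `w + 1`. -/
noncomputable def treewidth (G : SimpleGraph V) : ℕ :=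
  sInf {w : ℕ | ∃ (m : ℕ) (T : SimpleGraph (Fin m)) (B : Fin m → Finset V),
    IsTreeDecomp G T B ∧ ∀ i, (B i).card ≤ w + 1}

/-- A graph is chordal iff it has no hole. -/
def IsChordal (G : SimpleGraph V) : Prop :=
  ¬∃ (n : ℕ) (f : ZMod n → V), IsHoleEmb G n f

/-- `H` is obtained from `G` by a minimal fill-in (minimal chordal completion). -/
def IsMinimalChordalCompletion (G H : SimpleGraph V) : Prop :=
  G ≤ H ∧ IsChordal H ∧ ∀ H' : SimpleGraph V, G ≤ H' → H' ≤ H → IsChordal H' → H' = H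

/-- `Ω` is a potential maximal clique of `G`: a maximal clique of some minimal chordal
completion of `G`. -/
def IsPMC (G : SimpleGraph V) (Ω : Set V) : Prop :=
  ∃ H : SimpleGraph V, IsMinimalChordalCompletion G H ∧ H.IsClique Ω ∧
    ∀ Ω' : Set V, H.IsClique Ω' → Ω ⊆ Ω' → Ω' = Ω

/-- `n` satisfies the Ramsey property for `(t, k)`: every graph on `n` vertices has a
clique of size `t` or an independent set of size `k`. -/
def RamseyProp (n t k : ℕ) : Prop :=
  ∀ G : SimpleGraph (Fin n),
    (∃ S : Finset (Fin n), G.IsNClique t S) ∨ (∃ S : Finset (Fin n), Gᶜ.IsNClique k S)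

/-- The Ramsey number `R(t, k)`. -/
noncomputable def ramseyNumber (t k : ℕ) : ℕ := sInf {n : ℕ | RamseyProp n t k}

namespace TW

/-- cut-style connectivity of a vertex set -/
def Conn (G : SimpleGraph V) (A : Set V) : Prop :=
  A.Nonempty ∧ ∀ S : Set V, (∃ a ∈ A, a ∈ S) →
    (∀ a ∈ A, a ∈ S → ∀ b ∈ A, G.Adj a b → b ∈ S) → A ⊆ S

/-- disjoint and no edges between -/
def Anti (G : SimpleGraph V) (X Y : Set V) : Prop := ∀ x ∈ X, ∀ y ∈ Y, x ≠ y ∧ ¬ G.Adj x y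

/-- `x` has a neighbour in `X` -/
def Att (G : SimpleGraph V) (x : V) (X : Set V) : Prop := ∃ a ∈ X, G.Adj x a

/-- `p 0, …, p n` is an induced path -/
structure IP (G : SimpleGraph V) (p : ℕ → V) (n : ℕ) : Prop where
  inj : ∀ i j, i ≤ n → j ≤ n → p i = p j → i = j
  adj : ∀ i j, i ≤ n → j ≤ n → (G.Adj (p i) (p j) ↔ j = i + 1 ∨ i = j + 1)

/-- segment of a path -/
def seg (p : ℕ → V) (i j : ℕ) : Set V := {a | ∃ t, i ≤ t ∧ t ≤ j ∧ p t = a}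

variable {G : SimpleGraph V}

theorem Anti.symm {X Y : Set V} (h : Anti G X Y) : Anti G Y X :=
  fun y hy x hx => ⟨(h x hx y hy).1.symm, fun e => (h x hx y hy).2 e.symm⟩

theorem Anti.mono {X Y X' Y' : Set V} (h : Anti G X Y) (hX : X' ⊆ X) (hY : Y' ⊆ Y) :
    Anti G X' Y' := fun x hx y hy => h x (hX hx) y (hY hy)

theorem Att.mono {x : V} {X Y : Set V} (h : Att G x X) (hX : X ⊆ Y) : Att G x Y := by
  obtain ⟨a, ha, e⟩ := h; exact ⟨a, hX ha, e⟩

theorem conn_singleton (a : V) : Conn G {a} :=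
  ⟨⟨a, rfl⟩, by rintro S ⟨b, rfl, hb⟩ _ c rfl; exact hb⟩

theorem Conn.union {A B : Set V} (hA : Conn G A) (hB : Conn G B)
    (h : ∃ a ∈ A, ∃ b ∈ B, a = b ∨ G.Adj a b) : Conn G (A ∪ B) := by
  obtain ⟨a, ha, b, hb, hab⟩ := h
  refine ⟨⟨a, Or.inl ha⟩, fun S hS hc => ?_⟩
  have key : ∀ X ⊆ A ∪ B, Conn G X → (∃ x ∈ X, x ∈ S) → X ⊆ S := fun X hX hXc hx =>
    hXc.2 S hx fun a ha haS b hb hab => hc a (hX ha) haS b (hX hb) hab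
  have kA := key A Set.subset_union_left hA
  have kB := key B Set.subset_union_right hB
  have hiff : a ∈ S ↔ b ∈ S := by
    rcases hab with rfl | hab
    · rfl
    · exact ⟨fun h => hc a (Or.inl ha) h b (Or.inr hb) hab,
        fun h => hc b (Or.inr hb) h a (Or.inl ha) hab.symm⟩
  obtain ⟨c, hc1, hc2⟩ := hS
  rcases hc1 with hc1 | hc1
  · have h1 := kA ⟨c, hc1, hc2⟩
    have h2 := kB ⟨b, hb, hiff.1 (h1 ha)⟩
    exact Set.union_subset h1 h2
  · have h1 := kB ⟨c, hc1, hc2⟩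
    have h2 := kA ⟨a, ha, hiff.2 (h1 hb)⟩
    exact Set.union_subset h2 h1

theorem Conn.insert {A : Set V} {x : V} (hA : Conn G A) (h : Att G x A) : Conn G (insert x A) := by
  obtain ⟨a, ha, e⟩ := h
  rw [Set.insert_eq]
  exact (conn_singleton x).union hA ⟨x, rfl, a, ha, Or.inr e⟩

theorem conn_star {x : V} {F : Set (Set V)} (h : ∀ D ∈ F, Conn G D ∧ Att G x D) :
    Conn G (insert x (⋃₀ F)) := by
  refine ⟨⟨x, Or.inl rfl⟩, fun S hS hc => ?_⟩
  have hx : x ∈ S := by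
    obtain ⟨a, ha, haS⟩ := hS
    rcases ha with rfl | ⟨D, hD, haD⟩
    · exact haS
    · obtain ⟨hDc, b, hb, e⟩ := h D hD
      have : D ⊆ S := hDc.2 S ⟨a, haD, haS⟩ fun a ha haS b hb hab =>
        hc a (Or.inr ⟨D, hD, ha⟩) haS b (Or.inr ⟨D, hD, hb⟩) hab
      exact hc b (Or.inr ⟨D, hD, hb⟩) (this hb) x (Or.inl rfl) e.symm
  rintro a (rfl | ⟨D, hD, haD⟩)
  · exact hx
  · obtain ⟨hDc, b, hb, e⟩ := h D hD
    have : D ⊆ S := hDc.2 S ⟨b, hb, hc x (Or.inl rfl) hx b (Or.inr ⟨D, hD, hb⟩) e⟩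
      fun a ha haS b hb hab =>
        hc a (Or.inr ⟨D, hD, ha⟩) haS b (Or.inr ⟨D, hD, hb⟩) hab
    exact this haD

theorem Conn.exit {A P : Set V} (hA : Conn G A) (hP : ∃ a ∈ A, a ∈ P) (hn : ¬ A ⊆ P) :
    ∃ a ∈ A, a ∈ P ∧ ∃ b ∈ A, b ∉ P ∧ G.Adj a b := by
  by_contra hcon
  push Not at hcon
  exact hn (hA.2 P hP fun a ha haP b hb hab => by
    by_contra hbP
    exact hcon a ha haP b hb hbP hab)

/-- maximal connected superset inside `X` -/
theorem exists_comp {X A : Set V} (hA : Conn G A) (hAX : A ⊆ X) :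
    ∃ C, A ⊆ C ∧ C ⊆ X ∧ Conn G C ∧ ∀ c ∈ C, ∀ x ∈ X, G.Adj c x → x ∈ C := by
  obtain ⟨C, hAC, hC⟩ := (Set.toFinite {C : Set V | C ⊆ X ∧ Conn G C}).exists_le_maximal
    (show A ∈ {C : Set V | C ⊆ X ∧ Conn G C} from ⟨hAX, hA⟩)
  refine ⟨C, hAC, hC.1.1, hC.1.2, fun c hc x hx e => ?_⟩
  have : insert x C ∈ {C : Set V | C ⊆ X ∧ Conn G C} :=
    ⟨Set.insert_subset hx hC.1.1, hC.1.2.insert ⟨c, hc, e.symm⟩⟩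
  exact hC.2 this (Set.subset_insert _ _) (Set.mem_insert _ _)

/-- non-cut vertex outside a connected subset -/
theorem exists_noncut {A P : Set V} (hA : Conn G A) (hP : Conn G P) (hPA : P ⊆ A) (hne : P ≠ A) :
    ∃ w ∈ A, w ∉ P ∧ Conn G (A \ {w}) := by
  obtain ⟨C, hPC, hC⟩ := (Set.toFinite {C : Set V | C ⊆ A ∧ C ≠ A ∧ Conn G C}).exists_le_maximal
    (show P ∈ {C : Set V | C ⊆ A ∧ C ≠ A ∧ Conn G C} from ⟨hPA, hne, hP⟩)
  obtain ⟨hCA, hCne, hCc⟩ := hC.1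
  have hns : ¬ A ⊆ C := fun h => hCne (Set.Subset.antisymm hCA h)
  obtain ⟨c, hc⟩ := hCc.1
  obtain ⟨a, _, haC, b, hb, hbC, e⟩ := hA.exit ⟨c, hCA hc, hc⟩ hns
  have h1 : insert b C = A := by
    by_contra hne'
    have : insert b C ∈ {C : Set V | C ⊆ A ∧ C ≠ A ∧ Conn G C} :=
      ⟨Set.insert_subset hb hCA, hne', hCc.insert ⟨a, haC, e.symm⟩⟩
    exact hbC (hC.2 this (Set.subset_insert _ _) (Set.mem_insert _ _))
  refine ⟨b, hb, fun h => hbC (hPC h), ?_⟩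
  have : A \ {b} = C := by
    rw [← h1]; ext x; simp only [Set.mem_diff, Set.mem_insert_iff, Set.mem_singleton_iff]
    grind
  rw [this]; exact hCc

theorem IP.mono {p : ℕ → V} {n m : ℕ} (h : IP G p n) (hm : m ≤ n) : IP G p m :=
  ⟨fun i j hi hj => h.inj i j (hi.trans hm) (hj.trans hm),
    fun i j hi hj => h.adj i j (hi.trans hm) (hj.trans hm)⟩

theorem IP.shift {p : ℕ → V} {n : ℕ} (h : IP G p n) (i m : ℕ) (hm : i + m ≤ n) :
    IP G (fun t => p (i + t)) m :=
  ⟨fun a b ha hb e => by have := h.inj (i+a) (i+b) (by omega) (by omega) e; omega,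
    fun a b ha hb => by rw [h.adj (i+a) (i+b) (by omega) (by omega)]; omega⟩

theorem IP.rev {p : ℕ → V} {n : ℕ} (h : IP G p n) (i : ℕ) (hi : i ≤ n) :
    IP G (fun t => p (i - t)) i :=
  ⟨fun a b ha hb e => by have := h.inj (i-a) (i-b) (by omega) (by omega) e; omega,
    fun a b ha hb => by rw [h.adj (i-a) (i-b) (by omega) (by omega)]; omega⟩

theorem mem_seg {p : ℕ → V} {i j t : ℕ} (h1 : i ≤ t) (h2 : t ≤ j) : p t ∈ seg p i j :=
  ⟨t, h1, h2, rfl⟩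

theorem seg_mono {p : ℕ → V} {i j i' j' : ℕ} (h1 : i' ≤ i) (h2 : j ≤ j') :
    seg p i j ⊆ seg p i' j' := by
  rintro a ⟨t, h3, h4, rfl⟩; exact mem_seg (by omega) (by omega)

theorem conn_seg_of {p : ℕ → V} {i j : ℕ} (hij : i ≤ j)
    (h : ∀ t, i ≤ t → t < j → G.Adj (p t) (p (t+1))) : Conn G (seg p i j) := by
  induction j, hij using Nat.le_induction with
  | base =>
    have : seg p i i = {p i} := by
      ext a; constructor
      · rintro ⟨t, h1, h2, rfl⟩; rw [le_antisymm h2 h1]; rfl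
      · rintro rfl; exact mem_seg le_rfl le_rfl
    rw [this]; exact conn_singleton _
  | succ j hj ih =>
    have : seg p i (j+1) = insert (p (j+1)) (seg p i j) := by
      ext a; constructor
      · rintro ⟨t, h1, h2, rfl⟩
        rcases Nat.lt_or_ge j t with h3 | h3
        · left; rw [show t = j+1 by omega]
        · right; exact mem_seg h1 h3
      · rintro (rfl | ⟨t, h1, h2, rfl⟩)
        · exact mem_seg (by omega) le_rfl
        · exact mem_seg h1 (by omega)
    rw [this]
    exact (ih fun t h1 h2 => h t h1 (by omega)).insert
      ⟨p j, mem_seg hj le_rfl, (h j hj (by omega)).symm⟩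

theorem IP.conn {p : ℕ → V} {n : ℕ} (h : IP G p n) {i j : ℕ} (hij : i ≤ j) (hj : j ≤ n) :
    Conn G (seg p i j) :=
  conn_seg_of hij fun t _ h2 => (h.adj t (t+1) (by omega) (by omega)).2 (Or.inl rfl)

/-- shortest paths -/
theorem path_exists {A : Set V} (hA : Conn G A) {u v : V} (hu : u ∈ A) (hv : v ∈ A) :
    ∃ n p, IP G p n ∧ p 0 = u ∧ p n = v ∧ ∀ i ≤ n, p i ∈ A := by
  classical
  let W : ℕ → V → Prop := fun n w => ∃ p : ℕ → V, p 0 = u ∧ p n = w ∧ (∀ i ≤ n, p i ∈ A) ∧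
    ∀ i < n, G.Adj (p i) (p (i+1))
  have hex : ∃ n, W n v := by
    have := hA.2 {w | ∃ n, W n w} ⟨u, hu, 0, fun _ => u, rfl, rfl, fun _ _ => hu, by simp⟩ ?_ hv
    · exact this
    · rintro a ha ⟨n, p, h0, hn, hpA, hp⟩ b hb hab
      refine ⟨n+1, fun t => if t ≤ n then p t else b, by simp [h0], by simp, ?_, ?_⟩
      · intro i hi; dsimp only; split_ifs with h
        · exact hpA i h
        · exact hb
      · intro i hi
        have h1 : i ≤ n := by omega
        rcases Nat.lt_or_ge i n with h2 | h2
        · simp only [h1, if_true, show i + 1 ≤ n by omega]; exact hp i h2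
        · have : i = n := by omega
          subst this
          simp [hn, hab]
  let n := Nat.find hex
  obtain ⟨p, h0, hn, hpA, hp⟩ : W n v := Nat.find_spec hex
  have hmin : ∀ m, m < n → ¬ W m v := fun m hm => Nat.find_min hex hm
  clear_value n
  -- shortcut
  have hinj : ∀ i j, i < j → j ≤ n → p i ≠ p j := by
    intro i j hij hj e
    refine hmin (n - (j - i)) (by omega)
      ⟨fun t => if t ≤ i then p t else p (t + (j - i)), by simp [h0], ?_, ?_, ?_⟩
    · dsimp only; split_ifs with h
      · have : j = n := by omega
        subst this; rw [show j - (j - i) = i by omega, e, hn]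
      · rw [show n - (j - i) + (j - i) = n by omega, hn]
    · intro t ht; dsimp only; split_ifs with h
      · exact hpA t (by omega)
      · exact hpA _ (by omega)
    · intro t ht
      rcases Nat.lt_trichotomy t i with h | h | h
      · simp only [h.le, if_true, show t + 1 ≤ i by omega]; exact hp t (by omega)
      · subst h; simp only [le_refl, if_true, show ¬ (t + 1 ≤ t) by omega, if_false]
        rw [e, show t + 1 + (j - t) = j + 1 by omega]; exact hp j (by omega)
      · simp only [show ¬ (t ≤ i) by omega, if_false, show ¬ (t + 1 ≤ i) by omega]
        rw [show t + 1 + (j - i) = t + (j - i) + 1 by omega]; exact hp _ (by omega)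
  have hadj : ∀ i j, i + 1 < j → j ≤ n → ¬ G.Adj (p i) (p j) := by
    intro i j hij hj e
    refine hmin (n - (j - i - 1)) (by omega)
      ⟨fun t => if t ≤ i then p t else p (t + (j - i - 1)), by simp [h0], ?_, ?_, ?_⟩
    · dsimp only; split_ifs with h
      · omega
      · rw [show n - (j - i - 1) + (j - i - 1) = n by omega, hn]
    · intro t ht; dsimp only; split_ifs with h
      · exact hpA t (by omega)
      · exact hpA _ (by omega)
    · intro t ht
      rcases Nat.lt_trichotomy t i with h | h | h
      · simp only [h.le, if_true, show t + 1 ≤ i by omega]; exact hp t (by omega)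
      · subst h; simp only [le_refl, if_true, show ¬ (t + 1 ≤ t) by omega, if_false]
        rw [show t + 1 + (j - t - 1) = j by omega]; exact e
      · simp only [show ¬ (t ≤ i) by omega, if_false, show ¬ (t + 1 ≤ i) by omega]
        rw [show t + 1 + (j - i - 1) = t + (j - i - 1) + 1 by omega]; exact hp _ (by omega)
  refine ⟨n, p, ⟨?_, ?_⟩, h0, hn, hpA⟩
  · intro i j hi hj e
    rcases Nat.lt_trichotomy i j with h | h | h
    · exact (hinj i j h hj e).elim
    · exact h
    · exact (hinj j i h hi e.symm).elim
  · intro i j hi hj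
    constructor
    · intro e
      rcases Nat.lt_trichotomy i j with h | h | h
      · by_contra hc; exact hadj i j (by omega) hj e
      · subst h; exact (G.loopless.irrefl _ e).elim
      · by_contra hc; exact hadj j i (by omega) hi e.symm
    · rintro (rfl | rfl)
      · exact hp i (by omega)
      · exact (hp j (by omega)).symm

theorem path_via {X : Set V} (hX : Conn G X) {u v : V} (hu : Att G u X) (hv : Att G v X)
    (huX : u ∉ X) (hvX : v ∉ X) (huv : u ≠ v) (hnuv : ¬ G.Adj u v) :
    ∃ n p, 2 ≤ n ∧ IP G p n ∧ p 0 = u ∧ p n = v ∧ ∀ i, 0 < i → i < n → p i ∈ X := by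
  have hc : Conn G (insert u (insert v X)) :=
    (hX.insert hv).insert (hu.mono (Set.subset_insert _ _))
  obtain ⟨n, p, hp, h0, hn, hA⟩ := path_exists hc (u := u) (v := v) (by simp) (by simp)
  refine ⟨n, p, ?_, hp, h0, hn, fun i hi hin => ?_⟩
  · by_contra h
    have : n = 0 ∨ n = 1 := by omega
    rcases this with rfl | rfl
    · exact huv (h0.symm.trans hn)
    · apply hnuv; rw [← h0, ← hn]; exact (hp.adj 0 1 (by omega) le_rfl).2 (Or.inl rfl)
  · rcases hA i hin.le with h | h | h
    · have := hp.inj i 0 hin.le (by omega) (h.trans h0.symm); omega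
    · have := hp.inj i n hin.le le_rfl (h.trans hn.symm); omega
    · exact h

theorem oddCyc (hEH : ¬ContainsEvenHole G) {p q : ℕ → V} {n m : ℕ} (hp : IP G p n) (hq : IP G q m)
    (hd : ∀ i ≤ n, ∀ j ≤ m, p i ≠ q j)
    (ha : ∀ i ≤ n, ∀ j ≤ m, G.Adj (p i) (q j) ↔ (i = 0 ∧ j = 0) ∨ (i = n ∧ j = m))
    (hnm : 2 ≤ n + m) : Odd (n + m) := by
  by_contra hodd
  rw [Nat.not_odd_iff_even] at hodd
  apply hEH
  have : NeZero (n + m + 2) := ⟨by omega⟩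
  refine ⟨n + m + 2, fun x => if x.val ≤ n then p x.val else q (n + m + 1 - x.val),
    ⟨by omega, ?_, ?_⟩, ?_⟩
  · intro x y e
    have hx := ZMod.val_lt x
    have hy := ZMod.val_lt y
    apply ZMod.val_injective
    dsimp only at e
    split_ifs at e with h1 h2 h2
    · exact hp.inj _ _ h1 h2 e
    · exact (hd _ h1 _ (by omega) e).elim
    · exact (hd _ h2 _ (by omega) e.symm).elim
    · have := hq.inj _ _ (by omega) (by omega) e; omega
  · intro x y
    have hx := ZMod.val_lt x
    have hy := ZMod.val_lt y
    have key : ∀ x y : ZMod (n+m+2), y = x + 1 ↔ (y.val = x.val + 1 ∨ (x.val = n + m + 1 ∧ y.val = 0)) := by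
      intro x y
      have hx := ZMod.val_lt x
      have hy := ZMod.val_lt y
      have h1 : (x + 1).val = (x.val + 1) % (n + m + 2) := by
        rw [ZMod.val_add, ZMod.val_one'' (by omega)]
      rw [← (ZMod.val_injective _).eq_iff, h1]
      rcases Nat.lt_or_ge (x.val + 1) (n + m + 2) with h | h
      · rw [Nat.mod_eq_of_lt h]; omega
      · rw [show x.val + 1 = n + m + 2 by omega, Nat.mod_self]; omega
    rw [key, key]
    dsimp only
    split_ifs with h1 h2 h2
    · rw [hp.adj _ _ h1 h2]; omega
    · rw [ha _ h1 _ (by omega)]; omega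
    · rw [G.adj_comm, ha _ h2 _ (by omega)]; omega
    · rw [hq.adj _ _ (by omega) (by omega)]; omega
  · have : n + m + 2 = (n + m) + 2 := rfl
    rw [this]; exact hodd.add (by decide)

/-- two induced `u`-`v` paths with anticomplete interiors form a hole -/
theorem oddCyc2 (hEH : ¬ContainsEvenHole G) {p q : ℕ → V} {n m : ℕ} (hp : IP G p n) (hq : IP G q m)
    (hn : 2 ≤ n) (hm : 2 ≤ m) (h0 : p 0 = q 0) (h1 : p n = q m)
    (ha : ∀ i, 0 < i → i < n → ∀ j, 0 < j → j < m → p i ≠ q j ∧ ¬ G.Adj (p i) (q j)) :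
    Odd (n + m) := by
  have := oddCyc hEH hp (hq.shift 1 (m-2) (by omega)) ?_ ?_ (by omega)
  · rw [Nat.odd_iff] at *; omega
  · intro i hi j hj e
    rcases Nat.eq_zero_or_pos i with rfl | hi0
    · rw [h0] at e; have := hq.inj _ _ (by omega) (by omega) e; omega
    · rcases Nat.lt_or_ge i n with hin | hin
      · exact (ha i hi0 hin (1+j) (by omega) (by omega)).1 e
      · rw [show i = n by omega, h1] at e; have := hq.inj _ _ (by omega) (by omega) e; omega
  · intro i hi j hj
    rcases Nat.eq_zero_or_pos i with rfl | hi0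
    · rw [h0, hq.adj _ _ (by omega) (by omega)]; omega
    · rcases Nat.lt_or_ge i n with hin | hin
      · have := (ha i hi0 hin (1+j) (by omega) (by omega)).2
        constructor
        · intro h; exact (this h).elim
        · omega
      · have : i = n := by omega
        subst this
        rw [h1, hq.adj _ _ (by omega) (by omega)]; omega

theorem theta (hEH : ¬ContainsEvenHole G) {u v : V} {X Y Z : Set V} (huv : u ≠ v)
    (hnuv : ¬ G.Adj u v) (hX : Conn G X) (hY : Conn G Y) (hZ : Conn G Z)
    (hXY : Anti G X Y) (hXZ : Anti G X Z) (hYZ : Anti G Y Z)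
    (uX : Att G u X) (uY : Att G u Y) (uZ : Att G u Z)
    (vX : Att G v X) (vY : Att G v Y) (vZ : Att G v Z)
    (u1 : u ∉ X) (u2 : u ∉ Y) (u3 : u ∉ Z) (v1 : v ∉ X) (v2 : v ∉ Y) (v3 : v ∉ Z) : False := by
  obtain ⟨n1, p1, hn1, hp1, h10, h1n, hA1⟩ := path_via hX uX vX u1 v1 huv hnuv
  obtain ⟨n2, p2, hn2, hp2, h20, h2n, hA2⟩ := path_via hY uY vY u2 v2 huv hnuv
  obtain ⟨n3, p3, hn3, hp3, h30, h3n, hA3⟩ := path_via hZ uZ vZ u3 v3 huv hnuv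
  have o1 := oddCyc2 hEH hp1 hp2 hn1 hn2 (by rw [h10, h20]) (by rw [h1n, h2n])
    fun i a b j c d => hXY _ (hA1 i a b) _ (hA2 j c d)
  have o2 := oddCyc2 hEH hp1 hp3 hn1 hn3 (by rw [h10, h30]) (by rw [h1n, h3n])
    fun i a b j c d => hXZ _ (hA1 i a b) _ (hA3 j c d)
  have o3 := oddCyc2 hEH hp2 hp3 hn2 hn3 (by rw [h20, h30]) (by rw [h2n, h3n])
    fun i a b j c d => hYZ _ (hA2 i a b) _ (hA3 j c d)
  rw [Nat.odd_iff] at *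
  omega

theorem IP.toWalk {p : ℕ → V} {n : ℕ} (hp : IP G p n) {a b : V} (ha : p 0 = a) (hb : p n = b) :
    ∃ w : G.Walk a b, IsInducedPathW G w ∧ w.length = n ∧
      ∀ v, v ∈ w.support ↔ ∃ i ≤ n, p i = v := by
  subst ha; subst hb
  have key : ∀ m ≤ n, ∃ w : G.Walk (p 0) (p m), w.length = m ∧
      w.support = (List.range (m+1)).map p ∧ ∀ i < m, s(p i, p (i+1)) ∈ w.edges := by
    intro m hm
    induction m with
    | zero => exact ⟨Walk.nil, rfl, by simp, by simp⟩
    | succ m ih =>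
      obtain ⟨w, h1, h2, h3⟩ := ih (by omega)
      refine ⟨w.concat ((hp.adj m (m+1) (by omega) hm).2 (Or.inl rfl)), by simp [h1], ?_, ?_⟩
      · rw [Walk.support_concat, h2, List.range_succ (n := m+1)]; simp
      · intro i hi
        rw [Walk.edges_concat]
        rcases Nat.lt_or_ge i m with h | h
        · simp [h3 i h]
        · rw [show i = m by omega]; simp
  obtain ⟨w, h1, h2, h3⟩ := key n le_rfl
  have hs : ∀ v, v ∈ w.support ↔ ∃ i ≤ n, p i = v := by
    intro v; rw [h2]; simp [Nat.lt_succ_iff]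
  refine ⟨w, ⟨?_, ?_⟩, h1, hs⟩
  · rw [Walk.isPath_def, h2]
    refine List.Nodup.map_on ?_ List.nodup_range
    intro i hi j hj e
    simp at hi hj
    exact hp.inj i j (by omega) (by omega) e
  · intro u v hu hv e
    rw [hs] at hu hv
    obtain ⟨i, hi, rfl⟩ := hu
    obtain ⟨j, hj, rfl⟩ := hv
    rw [Walk.adj_toSubgraph_iff_mem_edges]
    rcases (hp.adj i j hi hj).1 e with rfl | rfl
    · exact h3 i (by omega)
    · rw [Sym2.eq_swap]; exact h3 j (by omega)

theorem pyramid (hPyr : ¬ContainsPyramid G) {a b1 b2 b3 : V} {X1 X2 X3 : Set V}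
    (h12 : G.Adj b1 b2) (h23 : G.Adj b2 b3) (h13 : G.Adj b1 b3)
    (hX1 : Conn G X1) (hX2 : Conn G X2) (hX3 : Conn G X3)
    (hb1 : b1 ∈ X1) (hb2 : b2 ∈ X2) (hb3 : b3 ∈ X3)
    (aX1 : Att G a X1) (aX2 : Att G a X2) (aX3 : Att G a X3)
    (a1 : a ∉ X1) (a2 : a ∉ X2) (a3 : a ∉ X3)
    (c12 : ∀ u ∈ X1, ∀ v ∈ X2, u ≠ v ∧ (G.Adj u v → u = b1 ∧ v = b2))
    (c13 : ∀ u ∈ X1, ∀ v ∈ X3, u ≠ v ∧ (G.Adj u v → u = b1 ∧ v = b3))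
    (c23 : ∀ u ∈ X2, ∀ v ∈ X3, u ≠ v ∧ (G.Adj u v → u = b2 ∧ v = b3))
    (n12 : (¬ G.Adj a b1 ∧ ¬ G.Adj a b2) ∨ (¬ G.Adj a b1 ∧ ¬ G.Adj a b3) ∨
      (¬ G.Adj a b2 ∧ ¬ G.Adj a b3)) : False := by
  have key : ∀ (X : Set V) (b : V), Conn G X → b ∈ X → Att G a X → a ∉ X →
      ∃ w : G.Walk a b, IsInducedPathW G w ∧ 1 ≤ w.length ∧ (¬ G.Adj a b → 2 ≤ w.length) ∧
      ∀ v ∈ w.support, v = a ∨ v ∈ X := by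
    intro X b hX hb aX haX
    obtain ⟨n, p, hp, h0, hn, hA⟩ := path_exists (hX.insert aX) (u := a) (v := b)
      (Or.inl rfl) (Or.inr hb)
    obtain ⟨w, hw, hl, hs⟩ := hp.toWalk h0 hn
    have hn1 : 1 ≤ n := by
      by_contra h
      have : n = 0 := by omega
      subst this; rw [h0] at hn; subst hn; exact haX hb
    refine ⟨w, hw, by omega, ?_, ?_⟩
    · intro hab
      by_contra h
      have : n = 1 := by omega
      subst this; apply hab; rw [← h0, ← hn]; exact (hp.adj 0 1 (by omega) le_rfl).2 (Or.inl rfl)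
    · intro v hv; obtain ⟨i, hi, rfl⟩ := (hs v).1 hv
      exact hA i hi
  obtain ⟨w1, i1, l1, m1, s1⟩ := key X1 b1 hX1 hb1 aX1 a1
  obtain ⟨w2, i2, l2, m2, s2⟩ := key X2 b2 hX2 hb2 aX2 a2
  obtain ⟨w3, i3, l3, m3, s3⟩ := key X3 b3 hX3 hb3 aX3 a3
  refine hPyr ⟨a, b1, b2, b3, w1, w2, w3, ⟨i1, i2, i3⟩, ⟨l1, l2, l3⟩, ?_, ⟨h12, h23, h13⟩,
    ?_, ?_, ?_, ?_⟩
  · rcases n12 with h | h | h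
    · exact Or.inl ⟨m1 h.1, m2 h.2⟩
    · exact Or.inr (Or.inl ⟨m1 h.1, m3 h.2⟩)
    · exact Or.inr (Or.inr ⟨m2 h.1, m3 h.2⟩)
  · intro w hw; grind
  · intro u w hu hw hua hwa e
    exact (c12 u ((s1 u hu).resolve_left hua) w ((s2 w hw).resolve_left hwa)).2 e
  · intro u w hu hw hua hwa e
    exact (c13 u ((s1 u hu).resolve_left hua) w ((s3 w hw).resolve_left hwa)).2 e
  · intro u w hu hw hua hwa e
    exact (c23 u ((s2 u hu).resolve_left hua) w ((s3 w hw).resolve_left hwa)).2 e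

theorem prism (hEH : ¬ContainsEvenHole G) {b1 b2 b3 c1 c2 c3 : V} {X1 X2 X3 : Set V}
    (hb12 : G.Adj b1 b2) (hb23 : G.Adj b2 b3) (hb13 : G.Adj b1 b3)
    (hc12 : G.Adj c1 c2) (hc23 : G.Adj c2 c3) (hc13 : G.Adj c1 c3)
    (hX1 : Conn G X1) (hX2 : Conn G X2) (hX3 : Conn G X3)
    (b1X : b1 ∈ X1) (b2X : b2 ∈ X2) (b3X : b3 ∈ X3)
    (c1X : c1 ∈ X1) (c2X : c2 ∈ X2) (c3X : c3 ∈ X3)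
    (c12 : ∀ u ∈ X1, ∀ v ∈ X2, u ≠ v ∧ (G.Adj u v → (u = b1 ∧ v = b2) ∨ (u = c1 ∧ v = c2)))
    (c13 : ∀ u ∈ X1, ∀ v ∈ X3, u ≠ v ∧ (G.Adj u v → (u = b1 ∧ v = b3) ∨ (u = c1 ∧ v = c3)))
    (c23 : ∀ u ∈ X2, ∀ v ∈ X3, u ≠ v ∧ (G.Adj u v → (u = b2 ∧ v = b3) ∨ (u = c2 ∧ v = c3)))
    (n1 : b1 = c1 → (b2 ≠ c2 ∧ ¬ G.Adj b2 c2) ∧ (b3 ≠ c3 ∧ ¬ G.Adj b3 c3))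
    (n2 : b2 = c2 → (b1 ≠ c1 ∧ ¬ G.Adj b1 c1) ∧ (b3 ≠ c3 ∧ ¬ G.Adj b3 c3))
    (n3 : b3 = c3 → (b1 ≠ c1 ∧ ¬ G.Adj b1 c1) ∧ (b2 ≠ c2 ∧ ¬ G.Adj b2 c2)) : False := by
  have key : ∀ (X : Set V) (b c : V), Conn G X → b ∈ X → c ∈ X →
      ∃ n p, IP G p n ∧ p 0 = b ∧ p n = c ∧ (∀ i ≤ n, p i ∈ X) ∧ (b ≠ c → 1 ≤ n) ∧
      (b ≠ c ∧ ¬ G.Adj b c → 2 ≤ n) := by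
    intro X b c hX hb hc
    obtain ⟨n, p, hp, h0, hn, hA⟩ := path_exists hX hb hc
    have h1 : b ≠ c → 1 ≤ n := by
      intro hbc
      by_contra h
      have : n = 0 := by omega
      subst this; exact hbc (h0.symm.trans hn)
    refine ⟨n, p, hp, h0, hn, hA, h1, ?_⟩
    rintro ⟨hbc, hab⟩
    by_contra h
    have := h1 hbc
    have : n = 1 := by omega
    subst this; apply hab; rw [← h0, ← hn]; exact (hp.adj 0 1 (by omega) le_rfl).2 (Or.inl rfl)
  have key2 : ∀ (X Y : Set V) (b c b' c' : V) (n m : ℕ) (p q : ℕ → V), IP G p n → IP G q m →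
      p 0 = b → p n = c → q 0 = b' → q m = c' → (∀ i ≤ n, p i ∈ X) → (∀ i ≤ m, q i ∈ Y) →
      G.Adj b b' → G.Adj c c' →
      (∀ u ∈ X, ∀ v ∈ Y, u ≠ v ∧ (G.Adj u v → (u = b ∧ v = b') ∨ (u = c ∧ v = c'))) →
      2 ≤ n + m → Odd (n + m) := by
    intro X Y b c b' c' n m p q hp hq p0 pn q0 qm hX hY hb hc hXY hnm
    refine oddCyc hEH hp hq (fun i hi j hj => (hXY _ (hX i hi) _ (hY j hj)).1) ?_ hnm
    intro i hi j hj
    constructor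
    · intro e
      rcases (hXY _ (hX i hi) _ (hY j hj)).2 e with ⟨h1, h2⟩ | ⟨h1, h2⟩
      · left; rw [← p0] at h1; rw [← q0] at h2
        exact ⟨hp.inj _ _ hi (by omega) h1, hq.inj _ _ hj (by omega) h2⟩
      · right; rw [← pn] at h1; rw [← qm] at h2
        exact ⟨hp.inj _ _ hi (by omega) h1, hq.inj _ _ hj (by omega) h2⟩
    · rintro (⟨rfl, rfl⟩ | ⟨rfl, rfl⟩)
      · rw [p0, q0]; exact hb
      · rw [pn, qm]; exact hc
  obtain ⟨m1, p1, i1, s1, t1, u1, v1, w1⟩ := key X1 b1 c1 hX1 b1X c1X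
  obtain ⟨m2, p2, i2, s2, t2, u2, v2, w2⟩ := key X2 b2 c2 hX2 b2X c2X
  obtain ⟨m3, p3, i3, s3, t3, u3, v3, w3⟩ := key X3 b3 c3 hX3 b3X c3X
  have s12 : 2 ≤ m1 + m2 := by
    by_cases e1 : b1 = c1
    · have := w2 (n1 e1).1; omega
    · by_cases e2 : b2 = c2
      · have := w1 (n2 e2).1; omega
      · have := v1 e1; have := v2 e2; omega
  have s13 : 2 ≤ m1 + m3 := by
    by_cases e1 : b1 = c1
    · have := w3 (n1 e1).2; omega
    · by_cases e2 : b3 = c3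
      · have := w1 (n3 e2).1; omega
      · have := v1 e1; have := v3 e2; omega
  have s23 : 2 ≤ m2 + m3 := by
    by_cases e1 : b2 = c2
    · have := w3 (n2 e1).2; omega
    · by_cases e2 : b3 = c3
      · have := w2 (n3 e2).2; omega
      · have := v2 e1; have := v3 e2; omega
  have o1 := key2 X1 X2 _ _ _ _ _ _ _ _ i1 i2 s1 t1 s2 t2 u1 u2 hb12 hc12 c12 s12
  have o2 := key2 X1 X3 _ _ _ _ _ _ _ _ i1 i3 s1 t1 s3 t3 u1 u3 hb13 hc13 c13 s13
  have o3 := key2 X2 X3 _ _ _ _ _ _ _ _ i2 i3 s2 t2 s3 t3 u2 u3 hb23 hc23 c23 s23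
  rw [Nat.odd_iff] at *
  omega

/-- shrink a connected set ending at `z` -/
theorem peel {Z : Set V} {z d : V} (hZ : Conn G Z) (hz : z ∈ Z) (hd : d ∉ Z) (dZ : Att G d Z)
    (hdz : ¬ G.Adj d z) : ∃ Z0 ⊆ Z \ {z}, Conn G Z0 ∧ Att G d Z0 ∧ Att G z Z0 := by
  obtain ⟨n, p, hp, h0, hn, hA⟩ := path_exists (hZ.insert dZ) (u := d) (v := z)
      (Or.inl rfl) (Or.inr hz)
  have hn2 : 2 ≤ n := by
    by_contra h
    have : n = 0 ∨ n = 1 := by omega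
    rcases this with rfl | rfl
    · rw [h0] at hn; subst hn; exact hd hz
    · apply hdz; rw [← h0, ← hn]; exact (hp.adj 0 1 (by omega) le_rfl).2 (Or.inl rfl)
  refine ⟨seg p 1 (n-1), ?_, hp.conn (by omega) (by omega), ⟨p 1, mem_seg le_rfl (by omega), ?_⟩,
    ⟨p (n-1), mem_seg (by omega) le_rfl, ?_⟩⟩
  · rintro a ⟨t, h1, h2, rfl⟩
    refine ⟨(hA t (by omega)).resolve_left ?_, ?_⟩
    · rw [← h0]; intro e; have := hp.inj _ _ (by omega) (by omega) e; omega
    · rintro (e : p t = z); rw [← hn] at e; have := hp.inj _ _ (by omega) (by omega) e; omega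
  · rw [← h0]; exact (hp.adj 0 1 (by omega) (by omega)).2 (Or.inl rfl)
  · rw [← hn]; exact (hp.adj _ _ (by omega) (by omega)).2 (by omega)

def Md (G : SimpleGraph V) (A : Set V) (z x y : V) : Prop :=
  ∃ X Y, Conn G X ∧ Conn G Y ∧ Anti G X Y ∧ x ∈ X ∧ y ∈ Y ∧ X ⊆ insert x A ∧ Y ⊆ insert y A ∧
    Att G z X ∧ Att G z Y

def Cl (G : SimpleGraph V) (A : Set V) (d x y z : V) : Prop :=
  d ∈ A ∧ ∃ X Y Z, Conn G X ∧ Conn G Y ∧ Conn G Z ∧ Anti G X Y ∧ Anti G X Z ∧ Anti G Y Z ∧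
    x ∈ X ∧ y ∈ Y ∧ z ∈ Z ∧ X ⊆ insert x A ∧ Y ⊆ insert y A ∧ Z ⊆ insert z A ∧
    d ∉ X ∧ d ∉ Y ∧ d ∉ Z ∧ Att G d X ∧ Att G d Y ∧ Att G d Z

/-- disjoint with the single cross edge `b c` -/
def Cross (G : SimpleGraph V) (X Y : Set V) (b c : V) : Prop :=
  ∀ u ∈ X, ∀ v ∈ Y, u ≠ v ∧ (G.Adj u v → u = b ∧ v = c)

def Tri (G : SimpleGraph V) (A : Set V) (d1 d2 d3 x y z : V) : Prop :=
  (G.Adj d1 d2 ∧ G.Adj d2 d3 ∧ G.Adj d1 d3) ∧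
  ∃ X Y Z, Conn G X ∧ Conn G Y ∧ Conn G Z ∧ Cross G X Y d1 d2 ∧ Cross G X Z d1 d3 ∧
    Cross G Y Z d2 d3 ∧ x ∈ X ∧ y ∈ Y ∧ z ∈ Z ∧ d1 ∈ X ∧ d2 ∈ Y ∧ d3 ∈ Z ∧
    X ⊆ insert x A ∧ Y ⊆ insert y A ∧ Z ⊆ insert z A

/-- two anticomplete sides and three independent vertices -/
structure Ctx (G : SimpleGraph V) (A B : Set V) (x y z : V) : Prop where
  anti : Anti G A B
  xA : x ∉ A
  yA : y ∉ A
  zA : z ∉ A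
  xB : x ∉ B
  yB : y ∉ B
  zB : z ∉ B
  xy : x ≠ y
  xz : x ≠ z
  yz : y ≠ z
  nxy : ¬ G.Adj x y
  nxz : ¬ G.Adj x z
  nyz : ¬ G.Adj y z

theorem Cross.symm {X Y : Set V} {b c : V} (h : Cross G X Y b c) : Cross G Y X c b :=
  fun v hv u hu => ⟨(h u hu v hv).1.symm, fun e => ((h u hu v hv).2 e.symm).symm⟩

theorem Md.swap {A : Set V} {z x y : V} (h : Md G A z x y) : Md G A z y x := by
  obtain ⟨X, Y, h1, h2, h3, h4, h5, h6, h7, h8, h9⟩ := h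
  exact ⟨Y, X, h2, h1, h3.symm, h5, h4, h7, h6, h9, h8⟩

theorem Cl.swap12 {A : Set V} {d x y z : V} (h : Cl G A d x y z) : Cl G A d y x z := by
  obtain ⟨hd, X, Y, Z, a1, a2, a3, b1, b2, b3, c1, c2, c3, e1, e2, e3, f1, f2, f3, g1, g2, g3⟩ := h
  exact ⟨hd, Y, X, Z, a2, a1, a3, b1.symm, b3, b2, c2, c1, c3, e2, e1, e3, f2, f1, f3, g2, g1, g3⟩

theorem Cl.swap23 {A : Set V} {d x y z : V} (h : Cl G A d x y z) : Cl G A d x z y := by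
  obtain ⟨hd, X, Y, Z, a1, a2, a3, b1, b2, b3, c1, c2, c3, e1, e2, e3, f1, f2, f3, g1, g2, g3⟩ := h
  exact ⟨hd, X, Z, Y, a1, a3, a2, b2, b1, b3.symm, c1, c3, c2, e1, e3, e2, f1, f3, f2, g1, g3, g2⟩

theorem Tri.swap12 {A : Set V} {d1 d2 d3 x y z : V} (h : Tri G A d1 d2 d3 x y z) :
    Tri G A d2 d1 d3 y x z := by
  obtain ⟨⟨t1, t2, t3⟩, X, Y, Z, a1, a2, a3, b1, b2, b3, c1, c2, c3, e1, e2, e3, f1, f2, f3⟩ := h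
  exact ⟨⟨t1.symm, t3, t2⟩, Y, X, Z, a2, a1, a3, b1.symm, b3, b2, c2, c1, c3, e2, e1, e3,
    f2, f1, f3⟩

theorem Tri.swap23 {A : Set V} {d1 d2 d3 x y z : V} (h : Tri G A d1 d2 d3 x y z) :
    Tri G A d1 d3 d2 x z y := by
  obtain ⟨⟨t1, t2, t3⟩, X, Y, Z, a1, a2, a3, b1, b2, b3, c1, c2, c3, e1, e2, e3, f1, f2, f3⟩ := h
  exact ⟨⟨t3, t2.symm, t1⟩, X, Z, Y, a1, a3, a2, b2, b1, b3.symm, c1, c3, c2, e1, e3, e2,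
    f1, f3, f2⟩

theorem Ctx.swap12 {A B : Set V} {x y z : V} (h : Ctx G A B x y z) : Ctx G A B y x z :=
  ⟨h.anti, h.yA, h.xA, h.zA, h.yB, h.xB, h.zB, h.xy.symm, h.yz, h.xz,
    fun e => h.nxy e.symm, h.nyz, h.nxz⟩

theorem Ctx.swap23 {A B : Set V} {x y z : V} (h : Ctx G A B x y z) : Ctx G A B x z y :=
  ⟨h.anti, h.xA, h.zA, h.yA, h.xB, h.zB, h.yB, h.xz, h.xy, h.yz.symm,
    h.nxz, h.nxy, fun e => h.nyz e.symm⟩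

theorem Ctx.flip {A B : Set V} {x y z : V} (h : Ctx G A B x y z) : Ctx G B A x y z :=
  ⟨h.anti.symm, h.xB, h.yB, h.zB, h.xA, h.yA, h.zA, h.xy, h.xz, h.yz, h.nxy, h.nxz, h.nyz⟩

/-- combine cross conditions on two sides -/
theorem cross_comb {A B : Set V} (hAB : Anti G A B) {x y : V} {X Y X' Y' : Set V}
    {R R' : V → V → Prop}
    (hx : x ∈ X) (hx' : x ∈ X') (hy : y ∈ Y) (hy' : y ∈ Y')
    (hX : X ⊆ insert x A) (hY : Y ⊆ insert y A) (hX' : X' ⊆ insert x B) (hY' : Y' ⊆ insert y B)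
    (h : ∀ u ∈ X, ∀ v ∈ Y, u ≠ v ∧ (G.Adj u v → R u v))
    (h' : ∀ u ∈ X', ∀ v ∈ Y', u ≠ v ∧ (G.Adj u v → R' u v)) :
    ∀ u ∈ X ∪ X', ∀ v ∈ Y ∪ Y', u ≠ v ∧ (G.Adj u v → R u v ∨ R' u v) := by
  have l1 : ∀ u ∈ X, ∀ v ∈ Y', u ≠ v ∧ (G.Adj u v → R u v ∨ R' u v) := by
    intro u hu v hv
    rcases hX hu with rfl | hu1
    · exact ⟨(h' u hx' v hv).1, fun e => Or.inr ((h' u hx' v hv).2 e)⟩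
    · rcases hY' hv with rfl | hv1
      · exact ⟨(h u hu v hy).1, fun e => Or.inl ((h u hu v hy).2 e)⟩
      · exact ⟨(hAB u hu1 v hv1).1, fun e => ((hAB u hu1 v hv1).2 e).elim⟩
  have l2 : ∀ u ∈ X', ∀ v ∈ Y, u ≠ v ∧ (G.Adj u v → R u v ∨ R' u v) := by
    intro u hu v hv
    rcases hX' hu with rfl | hu1
    · exact ⟨(h u hx v hv).1, fun e => Or.inl ((h u hx v hv).2 e)⟩
    · rcases hY hv with rfl | hv1
      · exact ⟨(h' u hu v hy').1, fun e => Or.inr ((h' u hu v hy').2 e)⟩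
      · exact ⟨(hAB v hv1 u hu1).1.symm, fun e => ((hAB v hv1 u hu1).2 e.symm).elim⟩
  rintro u (hu | hu) v (hv | hv)
  · exact ⟨(h u hu v hv).1, fun e => Or.inl ((h u hu v hv).2 e)⟩
  · exact l1 u hu v hv
  · exact l2 u hu v hv
  · exact ⟨(h' u hu v hv).1, fun e => Or.inr ((h' u hu v hv).2 e)⟩

theorem anti_comb {A B : Set V} (hAB : Anti G A B) {x y : V} {X Y X' Y' : Set V}
    (hx : x ∈ X) (hx' : x ∈ X') (hy : y ∈ Y) (hy' : y ∈ Y')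
    (hX : X ⊆ insert x A) (hY : Y ⊆ insert y A) (hX' : X' ⊆ insert x B) (hY' : Y' ⊆ insert y B)
    (h : Anti G X Y) (h' : Anti G X' Y') : Anti G (X ∪ X') (Y ∪ Y') := by
  have := cross_comb (R := fun _ _ => False) (R' := fun _ _ => False) hAB hx hx' hy hy' hX hY hX' hY' h h'
  intro u hu v hv
  exact ⟨(this u hu v hv).1, fun e => by simpa using (this u hu v hv).2 e⟩

/-- `X ∪ X'` versus a piece `Z0 ⊆ A` -/
theorem anti_one {A B : Set V} (hAB : Anti G A B) {x : V} {X X' Z0 : Set V}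
    (hx : x ∈ X) (hX' : X' ⊆ insert x B) (hZ : Z0 ⊆ A) (h : Anti G X Z0) : Anti G (X ∪ X') Z0 := by
  rintro u (hu | hu) v hv
  · exact h u hu v hv
  · rcases hX' hu with rfl | hu1
    · exact h u hx v hv
    · exact ⟨(hAB v (hZ hv) u hu1).1.symm, fun e => (hAB v (hZ hv) u hu1).2 e.symm⟩

theorem cross_one {A B : Set V} (hAB : Anti G A B) {x b c : V} {X X' Z0 : Set V}
    (hx : x ∈ X) (hX' : X' ⊆ insert x B) (hZ : Z0 ⊆ A) (h : Cross G X Z0 b c) :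
    Cross G (X ∪ X') Z0 b c := by
  rintro u (hu | hu) v hv
  · exact h u hu v hv
  · rcases hX' hu with rfl | hu1
    · exact h u hx v hv
    · exact ⟨(hAB v (hZ hv) u hu1).1.symm, fun e => ((hAB v (hZ hv) u hu1).2 e.symm).elim⟩

theorem conn_share {X X' : Set V} {x : V} (h : Conn G X) (h' : Conn G X') (hx : x ∈ X)
    (hx' : x ∈ X') : Conn G (X ∪ X') := h.union h' ⟨x, hx, x, hx', Or.inl rfl⟩

theorem cl_cl (hEH : ¬ContainsEvenHole G) {A B : Set V} {x y z d d' : V} (c : Ctx G A B x y z)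
    (h : Cl G A d x y z) (h' : Cl G B d' x y z) : False := by
  obtain ⟨hd, X, Y, Z, a1, a2, a3, b1, b2, b3, c1, c2, c3, e1, e2, e3, f1, f2, f3, g1, g2, g3⟩ := h
  obtain ⟨hd', X', Y', Z', a1', a2', a3', b1', b2', b3', c1', c2', c3', e1', e2', e3', f1', f2', f3',
    g1', g2', g3'⟩ := h'
  have dB : d ∉ B := fun h => (c.anti d hd d h).1 rfl
  have dA' : d' ∉ A := fun h => (c.anti d' h d' hd').1 rfl
  have out : ∀ w (W W' : Set V), w ∉ A → w ∉ B → W ⊆ insert w A → W' ⊆ insert w B →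
      d ∉ W → d' ∉ W' → d ∉ W ∪ W' ∧ d' ∉ W ∪ W' := by
    intro w W W' hwA hwB hW hW' h1 h2
    have k1 : d ≠ w := fun e => hwA (e ▸ hd)
    have k2 : d' ≠ w := fun e => hwB (e ▸ hd')
    constructor
    · rintro (h | h)
      · exact h1 h
      · rcases hW' h with h | h
        · exact k1 h
        · exact dB h
    · rintro (h | h)
      · rcases hW h with h | h
        · exact k2 h
        · exact dA' h
      · exact h2 h
  have o1 := out x X X' c.xA c.xB e1 e1' f1 f1'
  have o2 := out y Y Y' c.yA c.yB e2 e2' f2 f2'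
  have o3 := out z Z Z' c.zA c.zB e3 e3' f3 f3'
  exact theta hEH (c.anti d hd d' hd').1 (c.anti d hd d' hd').2
    (conn_share a1 a1' c1 c1') (conn_share a2 a2' c2 c2') (conn_share a3 a3' c3 c3')
    (anti_comb c.anti c1 c1' c2 c2' e1 e2 e1' e2' b1 b1')
    (anti_comb c.anti c1 c1' c3 c3' e1 e3 e1' e3' b2 b2')
    (anti_comb c.anti c2 c2' c3 c3' e2 e3 e2' e3' b3 b3')
    (g1.mono Set.subset_union_left) (g2.mono Set.subset_union_left) (g3.mono Set.subset_union_left)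
    (g1'.mono Set.subset_union_right) (g2'.mono Set.subset_union_right)
    (g3'.mono Set.subset_union_right) o1.1 o2.1 o3.1 o1.2 o2.2 o3.2

theorem cl_tri (hPyr : ¬ContainsPyramid G) {A B : Set V} {x y z d d1 d2 d3 : V}
    (c : Ctx G A B x y z) (h : Cl G A d x y z) (h' : Tri G B d1 d2 d3 x y z) : False := by
  obtain ⟨hd, X, Y, Z, a1, a2, a3, b1, b2, b3, c1, c2, c3, e1, e2, e3, f1, f2, f3, g1, g2, g3⟩ := h
  obtain ⟨⟨t1, t2, t3⟩, X', Y', Z', a1', a2', a3', b1', b2', b3', c1', c2', c3', i1, i2, i3,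
    e1', e2', e3'⟩ := h'
  have dB : d ∉ B := fun h => (c.anti d hd d h).1 rfl
  have out : ∀ w (W W' : Set V), w ∉ A → W' ⊆ insert w B → d ∉ W → d ∉ W ∪ W' := by
    intro w W W' hwA hW' h1
    have k1 : d ≠ w := fun e => hwA (e ▸ hd)
    rintro (h | h)
    · exact h1 h
    · rcases hW' h with h | h
      · exact k1 h
      · exact dB h
  have cr : ∀ w1 w2 (W1 W2 W1' W2' : Set V) (d1 d2 : V), w1 ∈ W1 → w1 ∈ W1' → w2 ∈ W2 → w2 ∈ W2' →
      W1 ⊆ insert w1 A → W2 ⊆ insert w2 A → W1' ⊆ insert w1 B → W2' ⊆ insert w2 B →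
      Anti G W1 W2 → Cross G W1' W2' d1 d2 → Cross G (W1 ∪ W1') (W2 ∪ W2') d1 d2 := by
    intro w1 w2 W1 W2 W1' W2' d1 d2 h1 h2 h3 h4 h5 h6 h7 h8 h9 h10
    have := cross_comb (R := fun _ _ => False) (R' := fun u v => u = d1 ∧ v = d2) c.anti
      h1 h2 h3 h4 h5 h6 h7 h8 h9 h10
    intro u hu v hv
    exact ⟨(this u hu v hv).1, fun e => by simpa using (this u hu v hv).2 e⟩
  have nB : ∀ b ∈ B, ¬ G.Adj d b := fun b hb => (c.anti d hd b hb).2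
  refine pyramid hPyr t1 t2 t3
    (conn_share a1 a1' c1 c1') (conn_share a2 a2' c2 c2') (conn_share a3 a3' c3 c3')
    (Or.inr i1) (Or.inr i2) (Or.inr i3)
    (g1.mono Set.subset_union_left) (g2.mono Set.subset_union_left) (g3.mono Set.subset_union_left)
    (out x X X' c.xA e1' f1) (out y Y Y' c.yA e2' f2) (out z Z Z' c.zA e3' f3)
    (cr x y X Y X' Y' d1 d2 c1 c1' c2 c2' e1 e2 e1' e2' b1 b1')
    (cr x z X Z X' Z' d1 d3 c1 c1' c3 c3' e1 e3 e1' e3' b2 b2')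
    (cr y z Y Z Y' Z' d2 d3 c2 c2' c3 c3' e2 e3 e2' e3' b3 b3') ?_
  rcases e1' i1 with rfl | k1
  · rcases e2' i2 with rfl | k2
    · exact (c.nxy t1).elim
    · rcases e3' i3 with rfl | k3
      · exact (c.nxz t3).elim
      · exact Or.inr (Or.inr ⟨nB _ k2, nB _ k3⟩)
  · rcases e2' i2 with rfl | k2
    · rcases e3' i3 with rfl | k3
      · exact (c.nyz t2).elim
      · exact Or.inr (Or.inl ⟨nB _ k1, nB _ k3⟩)
    · exact Or.inl ⟨nB _ k1, nB _ k2⟩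

theorem tri_tri (hEH : ¬ContainsEvenHole G) {A B : Set V} {x y z d1 d2 d3 d1' d2' d3' : V}
    (c : Ctx G A B x y z) (h : Tri G A d1 d2 d3 x y z) (h' : Tri G B d1' d2' d3' x y z) :
    False := by
  obtain ⟨⟨s1, s2, s3⟩, X, Y, Z, a1, a2, a3, b1, b2, b3, c1, c2, c3, j1, j2, j3,
    e1, e2, e3⟩ := h
  obtain ⟨⟨t1, t2, t3⟩, X', Y', Z', a1', a2', a3', b1', b2', b3', c1', c2', c3', i1, i2, i3,
    e1', e2', e3'⟩ := h'
  have far : ∀ w d d' : V, w ∉ A → w ∉ B → d = w ∨ d ∈ A → d' = w ∨ d' ∈ B →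
      (d = d' → d = w ∧ d' = w) ∧ (d ≠ w → d' ≠ w → d ≠ d' ∧ ¬ G.Adj d d') := by
    intro w d d' hA hB hd hd'
    have := c.anti
    rcases hd with rfl | hd
    · rcases hd' with rfl | hd'
      · exact ⟨fun _ => ⟨rfl, rfl⟩, fun h => (h rfl).elim⟩
      · exact ⟨fun e => (hB (e ▸ hd')).elim, fun h => (h rfl).elim⟩
    · rcases hd' with rfl | hd'
      · exact ⟨fun e => (hA (e ▸ hd)).elim, fun _ h => (h rfl).elim⟩
      · exact ⟨fun e => ((this d hd d' hd').1 e).elim, fun _ _ => this d hd d' hd'⟩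
  have F1 := far x d1 d1' c.xA c.xB (e1 j1) (e1' i1)
  have F2 := far y d2 d2' c.yA c.yB (e2 j2) (e2' i2)
  have F3 := far z d3 d3' c.zA c.zB (e3 j3) (e3' i3)
  have nxy := c.nxy
  have nxz := c.nxz
  have nyz := c.nyz
  have u1 : d1 = x → d2 ≠ y := by rintro rfl rfl; exact nxy s1
  have u2 : d1 = x → d3 ≠ z := by rintro rfl rfl; exact nxz s3
  have u3 : d2 = y → d3 ≠ z := by rintro rfl rfl; exact nyz s2
  have v1 : d1' = x → d2' ≠ y := by rintro rfl rfl; exact nxy t1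
  have v2 : d1' = x → d3' ≠ z := by rintro rfl rfl; exact nxz t3
  have v3 : d2' = y → d3' ≠ z := by rintro rfl rfl; exact nyz t2
  refine prism hEH s1 s2 s3 t1 t2 t3
    (conn_share a1 a1' c1 c1') (conn_share a2 a2' c2 c2') (conn_share a3 a3' c3 c3')
    (Or.inl j1) (Or.inl j2) (Or.inl j3) (Or.inr i1) (Or.inr i2) (Or.inr i3)
    (cross_comb c.anti c1 c1' c2 c2' e1 e2 e1' e2' b1 b1')
    (cross_comb c.anti c1 c1' c3 c3' e1 e3 e1' e3' b2 b2')
    (cross_comb c.anti c2 c2' c3 c3' e2 e3 e2' e3' b3 b3') ?_ ?_ ?_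
  · intro e; have h1 := F1.1 e
    exact ⟨F2.2 (u1 h1.1) (v1 h1.2), F3.2 (u2 h1.1) (v2 h1.2)⟩
  · intro e; have h1 := F2.1 e
    exact ⟨F1.2 (fun h => u1 h h1.1) (fun h => v1 h h1.2), F3.2 (u3 h1.1) (v3 h1.2)⟩
  · intro e; have h1 := F3.1 e
    exact ⟨F1.2 (fun h => u2 h h1.1) (fun h => v2 h h1.2),
      F2.2 (fun h => u3 h h1.1) (fun h => v3 h h1.2)⟩

theorem cl_md (hEH : ¬ContainsEvenHole G) {A B : Set V} {x y z d : V} (c : Ctx G A B x y z)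
    (h : Cl G A d x y z) (h' : Md G B z x y) : G.Adj d z := by
  by_contra hdz
  obtain ⟨hd, X, Y, Z, a1, a2, a3, b1, b2, b3, c1, c2, c3, e1, e2, e3, f1, f2, f3, g1, g2, g3⟩ := h
  obtain ⟨X', Y', a1', a2', b1', c1', c2', e1', e2', g1', g2'⟩ := h'
  obtain ⟨Z0, hZ0, z1, z2, z3⟩ := peel a3 c3 f3 g3 hdz
  have dB : d ∉ B := fun h => (c.anti d hd d h).1 rfl
  have Z0A : Z0 ⊆ A := fun w hw => (e3 (hZ0 hw).1).resolve_left (hZ0 hw).2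
  have out : ∀ w (W W' : Set V), w ∉ A → W' ⊆ insert w B → d ∉ W → d ∉ W ∪ W' := by
    intro w W W' hwA hW' h1
    have k1 : d ≠ w := fun e => hwA (e ▸ hd)
    rintro (h | h)
    · exact h1 h
    · rcases hW' h with h | h
      · exact k1 h
      · exact dB h
  refine theta hEH (fun e : d = z => c.zA (e ▸ hd)) hdz
    (conn_share a1 a1' c1 c1') (conn_share a2 a2' c2 c2') z1
    (anti_comb c.anti c1 c1' c2 c2' e1 e2 e1' e2' b1 b1')
    (anti_one c.anti c1 e1' Z0A (b2.mono subset_rfl fun w hw => (hZ0 hw).1))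
    (anti_one c.anti c2 e2' Z0A (b3.mono subset_rfl fun w hw => (hZ0 hw).1))
    (g1.mono Set.subset_union_left) (g2.mono Set.subset_union_left) z2
    (g1'.mono Set.subset_union_right) (g2'.mono Set.subset_union_right) z3
    (out x X X' c.xA e1' f1) (out y Y Y' c.yA e2' f2) (fun h => f3 (hZ0 h).1) ?_ ?_
    (fun h => (hZ0 h).2 rfl)
  · rintro (h | h)
    · exact (b2 z h z c3).1 rfl
    · exact (e1' h).elim (fun e => c.xz e.symm) c.zB
  · rintro (h | h)
    · exact (b3 z h z c3).1 rfl
    · exact (e2' h).elim (fun e => c.yz e.symm) c.zB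

theorem peel2 {Z : Set V} {z d : V} (hZ : Conn G Z) (hz : z ∈ Z) (hd : d ∈ Z) (hdz : d ≠ z) :
    ∃ Z0 ⊆ Z \ {z}, Conn G Z0 ∧ d ∈ Z0 ∧ Att G z Z0 := by
  obtain ⟨n, p, hp, h0, hn, hA⟩ := path_exists hZ hd hz
  have hn1 : 1 ≤ n := by
    by_contra h
    have : n = 0 := by omega
    subst this; exact hdz (h0.symm.trans hn)
  refine ⟨seg p 0 (n-1), ?_, hp.conn (by omega) (by omega), h0 ▸ mem_seg le_rfl (by omega),
    ⟨p (n-1), mem_seg (by omega) le_rfl, ?_⟩⟩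
  · rintro a ⟨t, h1, h2, rfl⟩
    refine ⟨hA t (by omega), ?_⟩
    rintro (e : p t = z); rw [← hn] at e; have := hp.inj _ _ (by omega) (by omega) e; omega
  · rw [← hn]; exact (hp.adj _ _ (by omega) (by omega)).2 (by omega)

theorem tri_md (hPyr : ¬ContainsPyramid G) {A B : Set V} {x y z d1 d2 d3 : V}
    (c : Ctx G A B x y z) (h : Tri G A d1 d2 d3 x y z) (h' : Md G B z x y) : d3 = z := by
  by_contra hdz
  obtain ⟨⟨s1, s2, s3⟩, X, Y, Z, a1, a2, a3, b1, b2, b3, c1, c2, c3, j1, j2, j3,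
    e1, e2, e3⟩ := h
  obtain ⟨X', Y', a1', a2', b1', c1', c2', e1', e2', g1', g2'⟩ := h'
  obtain ⟨Z0, hZ0, z1, z2, z3⟩ := peel2 a3 c3 j3 hdz
  have Z0A : Z0 ⊆ A := fun w hw => (e3 (hZ0 hw).1).resolve_left (hZ0 hw).2
  have c12 := cross_comb (R := fun u v => u = d1 ∧ v = d2) (R' := fun _ _ => False)
    c.anti c1 c1' c2 c2' e1 e2 e1' e2' b1 b1'
  refine pyramid hPyr s1 s2 s3 (conn_share a1 a1' c1 c1') (conn_share a2 a2' c2 c2') z1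
    (Or.inl j1) (Or.inl j2) z2
    (g1'.mono Set.subset_union_right) (g2'.mono Set.subset_union_right) z3 ?_ ?_
    (fun h => (hZ0 h).2 rfl) ?_
    (cross_one c.anti c1 e1' Z0A fun u hu v hv => b2 u hu v (hZ0 hv).1)
    (cross_one c.anti c2 e2' Z0A fun u hu v hv => b3 u hu v (hZ0 hv).1) (Or.inl ⟨?_, ?_⟩)
  · rintro (h | h)
    · exact (b2 z h z c3).1 rfl
    · exact (e1' h).elim (fun e => c.xz e.symm) c.zB
  · rintro (h | h)
    · exact (b3 z h z c3).1 rfl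
    · exact (e2' h).elim (fun e => c.yz e.symm) c.zB
  · intro u hu v hv
    exact ⟨(c12 u hu v hv).1, fun e => by simpa using (c12 u hu v hv).2 e⟩
  · intro e; exact hdz ((b2 d1 j1 z c3).2 e.symm).2.symm
  · intro e; exact hdz ((b3 d2 j2 z c3).2 e.symm).2.symm

theorem md_md (hEH : ¬ContainsEvenHole G) {A B : Set V} {x y z : V} (c : Ctx G A B x y z)
    (h : Md G A z x y) (h' : Md G B x y z) : False := by
  obtain ⟨X, Y, a1, a2, b, c1, c2, e1, e2, g1, g2⟩ := h
  obtain ⟨Y', Z', a1', a2', b', c1', c2', e1', e2', g1', g2'⟩ := h'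
  have zX : z ∉ X := fun h => (e1 h).elim (fun e => c.xz e.symm) c.zA
  have xZ : x ∉ Z' := fun h => (e2' h).elim (fun e => c.xz e) c.xB
  obtain ⟨X0, hX0, x1, x2, x3⟩ := peel a1 c1 zX g1 (fun e => c.nxz e.symm)
  obtain ⟨Z0, hZ0, z1, z2, z3⟩ := peel a2' c2' xZ g2' c.nxz
  have X0A : X0 ⊆ A := fun w hw => (e1 (hX0 hw).1).resolve_left (hX0 hw).2
  have Z0B : Z0 ⊆ B := fun w hw => (e2' (hZ0 hw).1).resolve_left (hZ0 hw).2
  have k1 : Anti G (Y ∪ Y') X0 := anti_one c.anti c2 e1' X0A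
    (b.symm.mono subset_rfl fun w hw => (hX0 hw).1)
  have k2 : Anti G (Y' ∪ Y) Z0 := anti_one c.anti.symm c1' e2 Z0B
    (b'.mono subset_rfl fun w hw => (hZ0 hw).1)
  rw [Set.union_comm] at k2
  refine theta hEH c.xz c.nxz (conn_share a2 a1' c2 c1') x1 z1 k1 k2 (c.anti.mono X0A Z0B)
    (g1'.mono Set.subset_union_right) x3 z2 (g2.mono Set.subset_union_left) x2 z3
    ?_ (fun h => (hX0 h).2 rfl) (fun h => xZ (hZ0 h).1) ?_ (fun h => zX (hX0 h).1)
    (fun h => (hZ0 h).2 rfl)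
  · rintro (h | h)
    · exact (e2 h).elim (fun e => c.xy e) c.xA
    · exact (e1' h).elim (fun e => c.xy e) c.xB
  · rintro (h | h)
    · exact (e2 h).elim (fun e => c.yz e.symm) c.zA
    · exact (e1' h).elim (fun e => c.yz e.symm) c.zB

theorem firstlast {Q : ℕ → Prop} {n : ℕ} (h : ∃ i ≤ n, Q i) :
    ∃ f l, f ≤ l ∧ l ≤ n ∧ Q f ∧ Q l ∧ ∀ i ≤ n, Q i → f ≤ i ∧ i ≤ l := by
  classical
  obtain ⟨i, hi, hQ⟩ := h
  have hex : ∃ i, i ≤ n ∧ Q i := ⟨i, hi, hQ⟩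
  have hl := Nat.findGreatest_spec (P := Q) hi hQ
  refine ⟨Nat.find hex, Nat.findGreatest Q n, Nat.find_min' hex ⟨Nat.findGreatest_le n, hl⟩,
    Nat.findGreatest_le n, (Nat.find_spec hex).2, hl, fun j hj hQj =>
    ⟨Nat.find_min' hex ⟨hj, hQj⟩, Nat.le_findGreatest hj hQj⟩⟩

theorem IP.anti_seg {p : ℕ → V} {n : ℕ} (hp : IP G p n) {i j i' j' : ℕ} (h : j + 2 ≤ i')
    (hj : j' ≤ n) : Anti G (seg p i j) (seg p i' j') := by
  rintro a ⟨s, h1, h2, rfl⟩ b ⟨t, h3, h4, rfl⟩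
  refine ⟨fun e => ?_, fun e => ?_⟩
  · have := hp.inj _ _ (by omega) (by omega) e; omega
  · have := (hp.adj _ _ (by omega) (by omega)).1 e; omega

theorem IP.cross_seg {p : ℕ → V} {n : ℕ} (hp : IP G p n) {i j j' : ℕ} (hj : j' ≤ n) :
    Cross G (seg p i j) (seg p (j+1) j') (p j) (p (j+1)) := by
  rintro a ⟨s, h1, h2, rfl⟩ b ⟨t, h3, h4, rfl⟩
  refine ⟨fun e => ?_, fun e => ?_⟩
  · have := hp.inj _ _ (by omega) (by omega) e; omega
  · have := (hp.adj _ _ (by omega) (by omega)).1 e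
    have h5 : s = j := by omega
    have h6 : t = j + 1 := by omega
    subst h5; subst h6; exact ⟨rfl, rfl⟩

theorem IP.nmem_seg {p : ℕ → V} {n : ℕ} (hp : IP G p n) {i j t : ℕ} (hj : j ≤ n) (ht : t ≤ n)
    (h : t < i ∨ j < t) : p t ∉ seg p i j := by
  rintro ⟨s, h1, h2, e⟩
  have := hp.inj _ _ (by omega) (by omega) e; omega

theorem IP.step {p : ℕ → V} {n : ℕ} (hp : IP G p n) {i : ℕ} (hi : i + 1 ≤ n) :
    G.Adj (p i) (p (i+1)) := (hp.adj _ _ (by omega) hi).2 (Or.inl rfl)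

theorem leg {A : Set V} {p r : ℕ → V} {n s : ℕ} {x y z : V} (hp : IP G p n) (hr : IP G r s)
    (hn : 2 ≤ n) (p0 : p 0 = x) (pn : p n = y) (r0 : r 0 = z)
    (pA : ∀ i, 0 < i → i < n → p i ∈ A) (rA : ∀ i, 0 < i → i ≤ s → r i ∈ A)
    (hd : ∀ i ≤ n, ∀ j ≤ s, p i ≠ r j) (hna : ∀ j < s, ∀ i ≤ n, ¬ G.Adj (r j) (p i))
    {f l : ℕ} (hfl : f ≤ l) (hln : l ≤ n) (hf : G.Adj (r s) (p f)) (hl : G.Adj (r s) (p l))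
    (hout : ∀ i ≤ n, G.Adj (r s) (p i) → f ≤ i ∧ i ≤ l) :
    (f = l ∧ 0 < f ∧ f < n ∧ Cl G A (p f) x y z) ∨ (f = l ∧ f = 0 ∧ Md G A x y z) ∨
    (f = l ∧ f = n ∧ Md G A y x z) ∨ (l = f + 1 ∧ Tri G A (p f) (p l) (r s) x y z) ∨
    (f + 2 ≤ l ∧ s = 0 ∧ Md G A z x y) ∨ (f + 2 ≤ l ∧ 0 < s ∧ Cl G A (r s) x y z) := by
  have sub1 : ∀ j < n, seg p 0 j ⊆ insert x A := by
    rintro j hj a ⟨t, h1, h2, rfl⟩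
    rcases Nat.eq_zero_or_pos t with rfl | h
    · exact Or.inl p0
    · exact Or.inr (pA t h (by omega))
  have sub2 : ∀ j, 0 < j → seg p j n ⊆ insert y A := by
    rintro j hj a ⟨t, h1, h2, rfl⟩
    rcases Nat.lt_or_ge t n with h | h
    · exact Or.inr (pA t (by omega) h)
    · rw [show t = n by omega]; exact Or.inl pn
  have sub3 : ∀ j ≤ s, seg r 0 j ⊆ insert z A := by
    rintro j hj a ⟨t, h1, h2, rfl⟩
    rcases Nat.eq_zero_or_pos t with rfl | h
    · exact Or.inl r0
    · exact Or.inr (rA t h (by omega))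
  have xm : ∀ j, x ∈ seg p 0 j := fun j => p0 ▸ mem_seg le_rfl (by omega)
  have ym : ∀ j ≤ n, y ∈ seg p j n := fun j h => pn ▸ mem_seg h le_rfl
  have zm : ∀ j, z ∈ seg r 0 j := fun j => r0 ▸ mem_seg le_rfl (by omega)
  -- segments of p away from the contact are anticomplete to the leg
  have pr : ∀ i j, j ≤ n → (j < f ∨ l < i) → Anti G (seg p i j) (seg r 0 s) := by
    rintro i j hj hij a ⟨t, h1, h2, rfl⟩ b ⟨u, h3, h4, rfl⟩
    refine ⟨hd t (by omega) u h4, fun e => ?_⟩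
    rcases Nat.lt_or_ge u s with h | h
    · exact hna u h t (by omega) e.symm
    · rw [show u = s by omega] at e
      have := hout t (by omega) e.symm; omega
  have pr2 : ∀ i j, j ≤ n → ∀ s' < s, Anti G (seg p i j) (seg r 0 s') := by
    rintro i j hj s' hs' a ⟨t, h1, h2, rfl⟩ b ⟨u, h3, h4, rfl⟩
    exact ⟨hd t (by omega) u (by omega), fun e => hna u (by omega) t (by omega) e.symm⟩
  have rp : ∀ i j, j ≤ n → ∀ u ≤ s, r u ∉ seg p i j := by
    rintro i j hj u hu ⟨t, h1, h2, e⟩; exact hd t (by omega) u hu e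
  have pr' : ∀ i ≤ n, p i ∉ seg r 0 s := by
    rintro i hi ⟨t, h1, h2, e⟩; exact hd i hi t h2 e.symm
  rcases Nat.lt_trichotomy l (f+1) with h | h | h
  · have hfl' : f = l := by omega
    subst hfl'
    rcases Nat.eq_zero_or_pos f with rfl | hf0
    · right; left
      refine ⟨rfl, rfl, seg p 1 n, seg r 0 s, hp.conn (by omega) le_rfl, hr.conn (by omega) le_rfl,
        pr 1 n le_rfl (by omega), ym _ (by omega), zm _, sub2 1 (by omega), sub3 s le_rfl,
        ⟨p 1, mem_seg le_rfl (by omega), ?_⟩, ⟨r s, mem_seg (by omega) le_rfl, ?_⟩⟩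
      · rw [← p0]; exact hp.step (by omega)
      · rw [← p0]; exact hf.symm
    · rcases Nat.lt_or_ge f n with hfn | hfn
      · left
        refine ⟨rfl, hf0, hfn, pA f hf0 hfn, seg p 0 (f-1), seg p (f+1) n, seg r 0 s,
          hp.conn (by omega) (by omega), hp.conn (by omega) le_rfl, hr.conn (by omega) le_rfl,
          hp.anti_seg (by omega) le_rfl, pr _ _ (by omega) (by omega), pr _ _ (by omega) (by omega),
          xm _, ym _ (by omega), zm _, sub1 _ (by omega), sub2 _ (by omega), sub3 s le_rfl,
          hp.nmem_seg (by omega) (by omega) (by omega), hp.nmem_seg (by omega) (by omega) (by omega),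
          pr' _ (by omega),
          ⟨p (f-1), mem_seg (by omega) le_rfl, (hp.adj _ _ (by omega) (by omega)).2 (by omega)⟩,
          ⟨p (f+1), mem_seg le_rfl (by omega), hp.step (by omega)⟩,
          ⟨r s, mem_seg (by omega) le_rfl, hf.symm⟩⟩
      · have : f = n := by omega
        subst this
        right; right; left
        refine ⟨rfl, rfl, seg p 0 (f-1), seg r 0 s, hp.conn (by omega) (by omega),
          hr.conn (by omega) le_rfl,
          pr _ _ (by omega) (by omega), xm _, zm _, sub1 _ (by omega), sub3 s le_rfl,
          ⟨p (f-1), mem_seg (by omega) le_rfl, ?_⟩, ⟨r s, mem_seg (by omega) le_rfl, ?_⟩⟩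
        · rw [← pn]; exact (hp.adj _ _ (by omega) (by omega)).2 (by omega)
        · rw [← pn]; exact hf.symm
  · subst h
    right; right; right; left
    have crs : ∀ i j k, j ≤ n → i ≤ k → k ≤ j → (∀ t, i ≤ t → t ≤ j → f ≤ t → t ≤ f+1 → t = k) →
        Cross G (seg p i j) (seg r 0 s) (p k) (r s) := by
      rintro i j k hj h5 h6 hk a ⟨t, h1, h2, rfl⟩ b ⟨u, h3, h4, rfl⟩
      refine ⟨hd t (by omega) u h4, fun e => ?_⟩
      rcases Nat.lt_or_ge u s with h | h
      · exact (hna u h t (by omega) e.symm).elim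
      · have hu : u = s := by omega
        subst hu
        have h7 := hout t (by omega) e.symm
        rw [hk t h1 h2 h7.1 h7.2]; exact ⟨rfl, rfl⟩
    refine ⟨rfl, ⟨hp.step hln, hl.symm, hf.symm⟩, seg p 0 f, seg p (f+1) n, seg r 0 s,
      hp.conn (by omega) (by omega), hp.conn (by omega) le_rfl, hr.conn (by omega) le_rfl,
      hp.cross_seg le_rfl, crs _ _ _ (by omega) (by omega) (by omega) (by omega),
      crs _ _ _ (by omega) (by omega) (by omega) (by omega), xm _, ym _ (by omega), zm _,
      mem_seg (by omega) le_rfl, mem_seg le_rfl (by omega), mem_seg (by omega) le_rfl,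
      sub1 _ (by omega), sub2 _ (by omega), sub3 s le_rfl⟩
  · right; right; right; right
    rcases Nat.eq_zero_or_pos s with rfl | hs
    · left
      refine ⟨by omega, rfl, seg p 0 f, seg p l n, hp.conn (by omega) (by omega),
        hp.conn (by omega) le_rfl, hp.anti_seg (by omega) le_rfl, xm _, ym _ hln,
        sub1 _ (by omega), sub2 _ (by omega), ⟨p f, mem_seg (by omega) le_rfl, ?_⟩,
        ⟨p l, mem_seg le_rfl (by omega), ?_⟩⟩
      · rw [← r0]; exact hf
      · rw [← r0]; exact hl
    · right
      refine ⟨by omega, hs, rA s hs le_rfl, seg p 0 f, seg p l n, seg r 0 (s-1),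
        hp.conn (by omega) (by omega),
        hp.conn (by omega) le_rfl, hr.conn (by omega) (by omega), hp.anti_seg (by omega) le_rfl,
        pr2 _ _ (by omega) _ (by omega), pr2 _ _ (by omega) _ (by omega),
        xm _, ym _ hln, zm _,
        sub1 _ (by omega), sub2 _ (by omega), sub3 _ (by omega), rp _ _ (by omega) _ le_rfl,
        rp _ _ (by omega) _ le_rfl, hr.nmem_seg (by omega) le_rfl (by omega),
        ⟨p f, mem_seg (by omega) le_rfl, hf⟩,
        ⟨p l, mem_seg le_rfl (by omega), hl⟩,
        ⟨r (s-1), mem_seg (by omega) le_rfl, (hr.adj _ _ (by omega) (by omega)).2 (by omega)⟩⟩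

/-- shortest contact path from `z` to `P` -/
theorem contact {C P : Set V} (hC : Conn G C) {z : V} (hz : z ∈ C) (hzP : z ∉ P)
    (hP : ∃ a ∈ C, a ∈ P) :
    ∃ s r, IP G r s ∧ r 0 = z ∧ (∀ i ≤ s, r i ∈ C ∧ r i ∉ P) ∧ Att G (r s) P ∧
      ∀ i < s, ¬ Att G (r i) P := by
  classical
  obtain ⟨a, ha, haP⟩ := hP
  obtain ⟨m, r, hr, h0, hm, hA⟩ := path_exists hC hz ha
  have hex : ∃ s, s ≤ m ∧ Att G (r s) P := by
    have hex2 : ∃ e, e ≤ m ∧ r e ∈ P := ⟨m, le_rfl, hm ▸ haP⟩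
    have h1 := Nat.find_spec hex2
    have h2 : Nat.find hex2 ≠ 0 := by
      intro h; rw [h, h0] at h1; exact hzP h1.2
    refine ⟨Nat.find hex2 - 1, by omega, _, h1.2, ?_⟩
    exact (hr.adj _ _ (by omega) (by omega)).2 (by omega)
  have hs := Nat.find_spec hex
  have hmin : ∀ i, i < Nat.find hex → ¬ Att G (r i) P := fun i hi h =>
    Nat.find_min hex hi ⟨by omega, h⟩
  refine ⟨Nat.find hex, r, hr.mono hs.1, h0, fun i hi => ⟨hA i (by omega), fun hiP => ?_⟩, hs.2,
    hmin⟩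
  rcases Nat.eq_zero_or_pos i with rfl | hi0
  · rw [h0] at hiP; exact hzP hiP
  · refine hmin (i-1) (by omega) ⟨_, hiP, ?_⟩
    exact (hr.adj _ _ (by omega) (by omega)).2 (by omega)

theorem trich {A B : Set V} {x y z : V} (c : Ctx G A B x y z) (hB : Conn G B)
    (xB : Att G x B) (yB : Att G y B) (zB : Att G z B) :
    (∃ d, Cl G B d x y z) ∨ (∃ d1 d2 d3, Tri G B d1 d2 d3 x y z) ∨ Md G B x y z ∨ Md G B y x z ∨
      Md G B z x y := by
  obtain ⟨n, p, hn, hp, p0, pn, pB⟩ := path_via hB xB yB c.xB c.yB c.xy c.nxy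
  have hpz : ∀ i ≤ n, p i ≠ z := by
    intro i hi e
    rcases Nat.eq_zero_or_pos i with rfl | hi0
    · exact c.xz (p0.symm.trans e)
    · rcases Nat.lt_or_ge i n with h | h
      · exact c.zB (e ▸ pB i hi0 h)
      · have : i = n := by omega
        subst this; exact c.yz (pn.symm.trans e)
  obtain ⟨s, r, hr, r0, h1, ⟨a, ⟨t, ht0, ht, rfl⟩, ha⟩, h3⟩ := contact (P := seg p 0 n)
    (hB.insert zB) (z := z) (Or.inl rfl) (by rintro ⟨t, h1, h2, e⟩; exact hpz t h2 e)
    ⟨p 1, Or.inr (pB 1 (by omega) (by omega)), mem_seg (by omega) (by omega)⟩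
  obtain ⟨f, l, hfl, hln, hf, hl, hout⟩ := firstlast (Q := fun i => G.Adj (r s) (p i)) ⟨t, ht, ha⟩
  have := leg (A := B) hp hr hn p0 pn r0 pB (fun i hi his => ?_) (fun i hi j hj e => ?_)
    (fun j hj i hi e => h3 j hj ⟨p i, mem_seg (by omega) hi, e⟩) hfl hln hf hl hout
  · rcases this with h | h | h | h | h | h
    · exact Or.inl ⟨_, h.2.2.2⟩
    · exact Or.inr (Or.inr (Or.inl h.2.2))
    · exact Or.inr (Or.inr (Or.inr (Or.inl h.2.2)))
    · exact Or.inr (Or.inl ⟨_, _, _, h.2⟩)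
    · exact Or.inr (Or.inr (Or.inr (Or.inr h.2.2)))
    · exact Or.inl ⟨_, h.2.2⟩
  · refine (h1 i his).1.resolve_left fun e => ?_
    have := hr.inj i 0 his (by omega) (e.trans r0.symm); omega
  · exact (h1 j hj).2 (e ▸ mem_seg (by omega) hi)

/-- `w` is one of `x y z` and is a middle of the three with respect to `B` -/
def MdS (G : SimpleGraph V) (B : Set V) (x y z w : V) : Prop :=
  (w = x ∧ Md G B x y z) ∨ (w = y ∧ Md G B y x z) ∨ (w = z ∧ Md G B z x y)

/-- the full hypotheses -/
structure Cfg (G : SimpleGraph V) (A B : Set V) (x y z : V) : Prop extends Ctx G A B x y z where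
  connB : Conn G B
  atx : Att G x B
  aty : Att G y B
  atz : Att G z B

theorem alpha (hEH : ¬ContainsEvenHole G) (hPyr : ¬ContainsPyramid G) {A B : Set V} {x y z d : V}
    (c : Cfg G A B x y z) (h : Cl G A d x y z) :
    (∃ w, MdS G B x y z w) ∧ ∀ w, MdS G B x y z w → G.Adj d w := by
  have cc := c.toCtx
  constructor
  · rcases trich cc c.connB c.atx c.aty c.atz with ⟨d', h'⟩ | ⟨d1, d2, d3, h'⟩ | h' | h' | h'
    · exact (cl_cl hEH cc h h').elim
    · exact (cl_tri hPyr cc h h').elim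
    · exact ⟨x, Or.inl ⟨rfl, h'⟩⟩
    · exact ⟨y, Or.inr (Or.inl ⟨rfl, h'⟩)⟩
    · exact ⟨z, Or.inr (Or.inr ⟨rfl, h'⟩)⟩
  · rintro w (⟨rfl, h'⟩ | ⟨rfl, h'⟩ | ⟨rfl, h'⟩)
    · exact cl_md hEH cc.swap12.swap23 h.swap12.swap23 h'
    · exact cl_md hEH cc.swap23 h.swap23 h'
    · exact cl_md hEH cc h h'

theorem beta (hEH : ¬ContainsEvenHole G) (hPyr : ¬ContainsPyramid G) {A B : Set V}
    {x y z d1 d2 d3 : V} (c : Cfg G A B x y z) (h : Tri G A d1 d2 d3 x y z) :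
    (∃ w, MdS G B x y z w) ∧ ∀ w, MdS G B x y z w →
      (w = x ∧ d1 = x) ∨ (w = y ∧ d2 = y) ∨ (w = z ∧ d3 = z) := by
  have cc := c.toCtx
  constructor
  · rcases trich cc c.connB c.atx c.aty c.atz with ⟨d', h'⟩ | ⟨e1, e2, e3, h'⟩ | h' | h' | h'
    · exact (cl_tri hPyr cc.flip h' h).elim
    · exact (tri_tri hEH cc h h').elim
    · exact ⟨x, Or.inl ⟨rfl, h'⟩⟩
    · exact ⟨y, Or.inr (Or.inl ⟨rfl, h'⟩)⟩
    · exact ⟨z, Or.inr (Or.inr ⟨rfl, h'⟩)⟩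
  · rintro w (⟨rfl, h'⟩ | ⟨rfl, h'⟩ | ⟨rfl, h'⟩)
    · exact Or.inl ⟨rfl, tri_md hPyr cc.swap12.swap23 h.swap12.swap23 h'⟩
    · exact Or.inr (Or.inl ⟨rfl, tri_md hPyr cc.swap23 h.swap23 h'⟩)
    · exact Or.inr (Or.inr ⟨rfl, tri_md hPyr cc h h'⟩)

theorem gamma (hEH : ¬ContainsEvenHole G) {A B : Set V} {x y z : V} (c : Ctx G A B x y z)
    (h : Md G A z x y) : ∀ w, MdS G B x y z w → w = z := by
  rintro w (⟨rfl, h'⟩ | ⟨rfl, h'⟩ | ⟨rfl, h'⟩)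
  · exact (md_md hEH c h h'.swap.swap).elim
  · exact (md_md hEH c.swap12 h.swap h').elim
  · rfl

theorem Md.two {A : Set V} {z x y : V} (h : Md G A z x y) (hx : ¬ G.Adj z x) (hy : ¬ G.Adj z y) :
    ∃ a ∈ A, ∃ b ∈ A, G.Adj z a ∧ G.Adj z b ∧ a ≠ b ∧ ¬ G.Adj a b := by
  obtain ⟨X, Y, _, _, h3, _, _, h6, h7, ⟨a, ha, ea⟩, ⟨b, hb, eb⟩⟩ := h
  refine ⟨a, (h6 ha).resolve_left ?_, b, (h7 hb).resolve_left ?_, ea, eb, (h3 a ha b hb).1,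
    (h3 a ha b hb).2⟩
  · rintro rfl; exact hx ea
  · rintro rfl; exact hy eb

/-- extend a path at both ends -/
def ext (x : V) (p : ℕ → V) (n : ℕ) (y : V) : ℕ → V :=
  fun t => if t = 0 then x else if t ≤ n + 1 then p (t - 1) else y

theorem ext_mid {x : V} {p : ℕ → V} {n : ℕ} {y : V} {t : ℕ} (ht : t ≤ n) :
    ext x p n y (t+1) = p t := by
  unfold ext; rw [if_neg (by omega), if_pos (by omega)]; rfl

theorem ext_zero {x : V} {p : ℕ → V} {n : ℕ} {y : V} : ext x p n y 0 = x := rfl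

theorem ext_last {x : V} {p : ℕ → V} {n : ℕ} {y : V} : ext x p n y (n+2) = y := by
  unfold ext; rw [if_neg (by omega), if_neg (by omega)]

theorem ext_cases {n t : ℕ} (h : t ≤ n + 2) : t = 0 ∨ (∃ i ≤ n, t = i + 1) ∨ t = n + 2 := by
  rcases Nat.eq_zero_or_pos t with h0 | h0
  · exact Or.inl h0
  · rcases Nat.lt_or_ge t (n+2) with h1 | h1
    · exact Or.inr (Or.inl ⟨t-1, by omega, by omega⟩)
    · exact Or.inr (Or.inr (by omega))

theorem IP.ext {p : ℕ → V} {n : ℕ} (hp : IP G p n) {x y : V} (hx : ∀ i ≤ n, x ≠ p i)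
    (hy : ∀ i ≤ n, y ≠ p i) (hxy : x ≠ y) (hnxy : ¬ G.Adj x y)
    (hx' : ∀ i ≤ n, (G.Adj x (p i) ↔ i = 0)) (hy' : ∀ i ≤ n, (G.Adj y (p i) ↔ i = n)) :
    IP G (ext x p n y) (n + 2) := by
  constructor
  · intro i j hi hj e
    rcases ext_cases hi with rfl | ⟨i, hi', rfl⟩ | rfl
    · rcases ext_cases hj with rfl | ⟨j, hj', rfl⟩ | rfl
      · rfl
      · rw [ext_mid hj'] at e; exact (hx _ hj' e).elim
      · rw [ext_last] at e; exact (hxy e).elim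
    · rw [ext_mid hi'] at e
      rcases ext_cases hj with rfl | ⟨j, hj', rfl⟩ | rfl
      · exact (hx _ hi' e.symm).elim
      · rw [ext_mid hj'] at e; rw [hp.inj i j hi' hj' e]
      · rw [ext_last] at e; exact (hy _ hi' e.symm).elim
    · rw [ext_last] at e
      rcases ext_cases hj with rfl | ⟨j, hj', rfl⟩ | rfl
      · exact (hxy e.symm).elim
      · rw [ext_mid hj'] at e; exact (hy _ hj' e).elim
      · rfl
  · intro i j hi hj
    rcases ext_cases hi with rfl | ⟨i, hi', rfl⟩ | rfl
    · rcases ext_cases hj with rfl | ⟨j, hj', rfl⟩ | rfl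
      · simp
      · rw [ext_mid hj', ext_zero, hx' j hj']; omega
      · rw [ext_last, ext_zero]; simp only [hnxy, false_iff]; omega
    · rw [ext_mid hi']
      rcases ext_cases hj with rfl | ⟨j, hj', rfl⟩ | rfl
      · rw [ext_zero, G.adj_comm, hx' i hi']; omega
      · rw [ext_mid hj', hp.adj i j hi' hj']; omega
      · rw [ext_last, G.adj_comm, hy' i hi']; omega
    · rw [ext_last]
      rcases ext_cases hj with rfl | ⟨j, hj', rfl⟩ | rfl
      · rw [ext_zero, G.adj_comm]; simp only [hnxy, false_iff]; omega
      · rw [ext_mid hj', hy' j hj']; omega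
      · rw [ext_last]; simp

/-- a path in `A` from `x` to `y` (ends private) together with `z` attached to it -/
structure Mid (G : SimpleGraph V) (A : Set V) (p : ℕ → V) (n : ℕ) (x y z : V) : Prop where
  ip : IP G p n
  pA : ∀ i ≤ n, p i ∈ A
  hx : ∀ i ≤ n, (G.Adj x (p i) ↔ i = 0)
  hy : ∀ i ≤ n, (G.Adj y (p i) ↔ i = n)

theorem mid {A B : Set V} {p : ℕ → V} {n : ℕ} {x y z : V} (c : Ctx G A B x y z)
    (m : Mid G A p n x y z) {f l : ℕ} (hfl : f ≤ l) (hln : l ≤ n) (hf : G.Adj z (p f))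
    (hl : G.Adj z (p l)) (hout : ∀ i ≤ n, G.Adj z (p i) → f ≤ i ∧ i ≤ l) :
    (f = l ∧ Cl G A (p f) x y z) ∨ (l = f + 1 ∧ Tri G A (p f) (p l) z x y z) ∨
    (f + 2 ≤ l ∧ Md G A z x y) := by
  have hp := m.ip.ext (x := x) (y := y) (fun i hi e => c.xA (e ▸ m.pA i hi))
    (fun i hi e => c.yA (e ▸ m.pA i hi)) c.xy c.nxy m.hx m.hy
  have := leg (A := A) (f := f+1) (l := l+1) hp (r := fun _ => z) (s := 0)
    ⟨fun i j hi hj _ => by omega, fun i j hi hj => by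
      simp; omega⟩ (by omega) ext_zero ext_last rfl ?_ (by omega) ?_ (by omega) (by omega)
      (by omega) (by rw [ext_mid (by omega)]; exact hf) (by rw [ext_mid (by omega)]; exact hl) ?_
  · rw [ext_mid (by omega), ext_mid (by omega)] at this
    rcases this with h | h | h | h | h | h
    · exact Or.inl ⟨by omega, h.2.2.2⟩
    · omega
    · omega
    · exact Or.inr (Or.inl ⟨by omega, h.2⟩)
    · exact Or.inr (Or.inr ⟨by omega, h.2.2⟩)
    · omega
  · intro i h1 h2
    rcases ext_cases h2.le with rfl | ⟨i, hi', rfl⟩ | rfl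
    · omega
    · rw [ext_mid hi']; exact m.pA i hi'
    · omega
  · intro i hi j hj
    rcases ext_cases hi with rfl | ⟨i, hi', rfl⟩ | rfl
    · exact c.xz
    · rw [ext_mid hi']; exact fun e => c.zA (e ▸ m.pA i hi')
    · rw [ext_last]; exact c.yz
  · intro i hi e
    rcases ext_cases hi with rfl | ⟨i, hi', rfl⟩ | rfl
    · exact (c.nxz e.symm).elim
    · rw [ext_mid hi'] at e; have := hout i hi' e; omega
    · rw [ext_last] at e; exact (c.nyz e.symm).elim

theorem mp1x (hEH : ¬ContainsEvenHole G) (hPyr : ¬ContainsPyramid G) {A B : Set V} {p : ℕ → V}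
    {n : ℕ} {x y z : V} (c : Cfg G A B x y z) (m : Mid G A p n x y z) (hM : Md G B x y z) :
    ∀ i ≤ n, G.Adj z (p i) → i = 0 := by
  intro i hi e
  obtain ⟨f, l, hfl, hln, hf, hl, hout⟩ := firstlast (Q := fun i => G.Adj z (p i)) ⟨i, hi, e⟩
  have hS : MdS G B x y z x := Or.inl ⟨rfl, hM⟩
  rcases mid c.toCtx m hfl hln hf hl hout with ⟨h1, h2⟩ | ⟨h1, h2⟩ | ⟨h1, h2⟩
  · have := (alpha hEH hPyr c h2).2 x hS
    rw [G.adj_comm, m.hx f (by omega)] at this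
    have := hout i hi e
    omega
  · rcases (beta hEH hPyr c h2).2 x hS with h | h | h
    · exact (c.xA (h.2 ▸ m.pA f (by omega))).elim
    · exact (c.xy h.1).elim
    · exact (c.xz h.1).elim
  · exact (c.xz (gamma hEH c.toCtx h2 x hS)).elim

theorem mp1y (hEH : ¬ContainsEvenHole G) (hPyr : ¬ContainsPyramid G) {A B : Set V} {p : ℕ → V}
    {n : ℕ} {x y z : V} (c : Cfg G A B x y z) (m : Mid G A p n x y z) (hM : Md G B y x z) :
    ∀ i ≤ n, G.Adj z (p i) → i = n := by
  intro i hi e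
  obtain ⟨f, l, hfl, hln, hf, hl, hout⟩ := firstlast (Q := fun i => G.Adj z (p i)) ⟨i, hi, e⟩
  have hS : MdS G B x y z y := Or.inr (Or.inl ⟨rfl, hM⟩)
  rcases mid c.toCtx m hfl hln hf hl hout with ⟨h1, h2⟩ | ⟨h1, h2⟩ | ⟨h1, h2⟩
  · have := (alpha hEH hPyr c h2).2 y hS
    rw [G.adj_comm, m.hy f (by omega)] at this
    have := hout i hi e
    omega
  · rcases (beta hEH hPyr c h2).2 y hS with h | h | h
    · exact (c.xy h.1.symm).elim
    · exact (c.yA (h.2 ▸ m.pA l (by omega))).elim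
    · exact (c.yz h.1).elim
  · exact (c.yz (gamma hEH c.toCtx h2 y hS)).elim

theorem mp2 (hEH : ¬ContainsEvenHole G) (hPyr : ¬ContainsPyramid G) {A B : Set V} {p : ℕ → V}
    {n : ℕ} {x y z : V} (c : Cfg G A B x y z) (m : Mid G A p n x y z)
    (hz : ∃ i ≤ n, G.Adj z (p i))
    (hno : ∀ i j, i ≤ n → j ≤ n → i + 2 ≤ j → ¬ (G.Adj z (p i) ∧ G.Adj z (p j))) :
    ∃ w, MdS G B x y z w := by
  obtain ⟨f, l, hfl, hln, hf, hl, hout⟩ := firstlast (Q := fun i => G.Adj z (p i)) hz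
  rcases mid c.toCtx m hfl hln hf hl hout with ⟨h1, h2⟩ | ⟨h1, h2⟩ | ⟨h1, h2⟩
  · exact (alpha hEH hPyr c h2).1
  · exact (beta hEH hPyr c h2).1
  · exact (hno f l (by omega) hln h1 ⟨hf, hl⟩).elim

theorem IP.le_card {p : ℕ → V} {n : ℕ} (hp : IP G p n) : n ≤ Fintype.card V := by
  have : Function.Injective (fun i : Fin (n+1) => p i) := fun i j e =>
    Fin.ext (hp.inj i j (by omega) (by omega) e)
  have := Fintype.card_le_of_injective _ this
  simp at this; omega

theorem IP.concat {r p : ℕ → V} {s n : ℕ} (hr : IP G r s) (hp : IP G p n)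
    (hd : ∀ i ≤ s, ∀ j ≤ n, r i ≠ p j)
    (ha : ∀ i ≤ s, ∀ j ≤ n, (G.Adj (r i) (p j) ↔ i = s ∧ j = 0)) :
    IP G (fun t => if t ≤ s then r t else p (t - s - 1)) (s + n + 1) := by
  constructor
  · intro i j hi hj e
    split_ifs at e with h1 h2 h2
    · exact hr.inj i j h1 h2 e
    · exact (hd i h1 _ (by omega) e).elim
    · exact (hd j h2 _ (by omega) e.symm).elim
    · have := hp.inj _ _ (by omega) (by omega) e; omega
  · intro i j hi hj
    split_ifs with h1 h2 h2
    · exact hr.adj i j h1 h2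
    · rw [ha i h1 _ (by omega)]; omega
    · rw [G.adj_comm, ha j h2 _ (by omega)]; omega
    · rw [hp.adj _ _ (by omega) (by omega)]; omega

/-- two sides, an independent set attached to both -/
structure Side (G : SimpleGraph V) (A B : Set V) (I : Set V) : Prop where
  cA : Conn G A
  cB : Conn G B
  anti : Anti G A B
  ind : ∀ x ∈ I, ∀ y ∈ I, ¬ G.Adj x y
  nA : ∀ x ∈ I, x ∉ A
  nB : ∀ x ∈ I, x ∉ B
  aA : ∀ x ∈ I, Att G x A
  aB : ∀ x ∈ I, Att G x B

theorem Side.cfg {A B I : Set V} (h : Side G A B I) {x y z : V} (hx : x ∈ I) (hy : y ∈ I)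
    (hz : z ∈ I) (xy : x ≠ y) (xz : x ≠ z) (yz : y ≠ z) : Cfg G A B x y z :=
  { anti := h.anti, xA := h.nA x hx, yA := h.nA y hy, zA := h.nA z hz, xB := h.nB x hx,
    yB := h.nB y hy, zB := h.nB z hz, xy := xy, xz := xz, yz := yz, nxy := h.ind x hx y hy,
    nxz := h.ind x hx z hz, nyz := h.ind y hy z hz, connB := h.cB, atx := h.aB x hx,
    aty := h.aB y hy, atz := h.aB z hz }

theorem Side.flip {A B I : Set V} (h : Side G A B I) : Side G B A I :=
  ⟨h.cB, h.cA, h.anti.symm, h.ind, h.nB, h.nA, h.aB, h.aA⟩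

theorem Side.sub {A B I J : Set V} (h : Side G A B I) (hJ : J ⊆ I) : Side G A B J :=
  ⟨h.cA, h.cB, h.anti, fun x hx y hy => h.ind x (hJ hx) y (hJ hy), fun x hx => h.nA x (hJ hx),
    fun x hx => h.nB x (hJ hx), fun x hx => h.aA x (hJ hx), fun x hx => h.aB x (hJ hx)⟩

/-- `x` has `a` as its unique neighbour in `A` -/
def Priv (G : SimpleGraph V) (A I : Set V) (a x : V) : Prop := x ∈ I ∧ ∀ b ∈ A, (G.Adj x b ↔ b = a)

/-- Step 1 of the W-lemma -/
theorem wstep1 (hEH : ¬ContainsEvenHole G) (hPyr : ¬ContainsPyramid G) {A B I : Set V}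
    (h : Side G A B I) {p : ℕ → V} {n : ℕ} (hn : 1 ≤ n) (hp : IP G p n) (pA : ∀ i ≤ n, p i ∈ A)
    {x0 xn xw w : V} (h0 : Priv G A I (p 0) x0) (h1 : Priv G A I (p n) xn)
    (hmax : ∀ m q, IP G q m → (∀ i ≤ m, q i ∈ A) → (∃ x, Priv G A I (q 0) x) →
      (∃ x, Priv G A I (q m) x) → m ≤ n)
    (hw : w ∈ A) (hwp : w ∉ seg p 0 n) (hxw : Priv G A I w xw) :
    ∃ f l, f + 2 ≤ l ∧ l ≤ n ∧ G.Adj w (p f) ∧ G.Adj w (p l) := by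
  have wp : ∀ i ≤ n, p i ≠ w := fun i hi e => hwp ⟨i, by omega, hi, e⟩
  have pv : ∀ {a b x y : V}, a ∈ A → b ∈ A → Priv G A I a x → Priv G A I b y → a ≠ b → x ≠ y := by
    intro a b x y ha hb hx hy hab e
    subst e
    exact hab (((hy.2 a ha).1 ((hx.2 a ha).2 rfl)))
  have h0n : p 0 ≠ p n := fun e => by have := hp.inj _ _ (by omega) le_rfl e; omega
  have e1 : x0 ≠ xn := pv (pA 0 (by omega)) (pA n le_rfl) h0 h1 h0n
  have e2 : x0 ≠ xw := pv (pA 0 (by omega)) hw h0 hxw (wp 0 (by omega))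
  have e3 : xn ≠ xw := pv (pA n le_rfl) hw h1 hxw (wp n le_rfl)
  have c := h.cfg h0.1 h1.1 hxw.1 e1 e2 e3
  obtain ⟨s, r, hr, r0, k1, ⟨a, ⟨t, _, ht, rfl⟩, ha⟩, k3⟩ := contact (P := seg p 0 n) h.cA hw hwp
    ⟨p 0, pA 0 (by omega), mem_seg le_rfl (by omega)⟩
  obtain ⟨f, l, hfl, hln, hf, hl, hout⟩ := firstlast (Q := fun i => G.Adj (r s) (p i)) ⟨t, ht, ha⟩
  have hpe := hp.ext (x := x0) (y := xn) (fun i hi e => c.xA (e ▸ pA i hi))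
    (fun i hi e => c.yA (e ▸ pA i hi)) e1 c.nxy
    (fun i hi => by
      rw [h0.2 _ (pA i hi)]
      exact ⟨fun e => hp.inj _ _ hi (by omega) e, fun e => by rw [e]⟩)
    (fun i hi => by
      rw [h1.2 _ (pA i hi)]
      exact ⟨fun e => hp.inj _ _ hi (by omega) e, fun e => by rw [e]⟩)
  have rp : ∀ i ≤ s, ∀ j ≤ n, r i ≠ p j := fun i hi j hj e => (k1 i hi).2 (e ▸ mem_seg (by omega) hj)
  have rA : ∀ i ≤ s, r i ∈ A := fun i hi => (k1 i hi).1
  have k3' : ∀ i < s, ∀ j ≤ n, ¬ G.Adj (r i) (p j) := fun i hi j hj e =>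
    k3 i hi ⟨_, mem_seg (by omega) hj, e⟩
  -- extended leg
  obtain ⟨re, hre, re0, rez⟩ : ∃ re : ℕ → V, IP G re (s+1) ∧ (∀ i, re (i+1) = r i) ∧ re 0 = xw := by
    refine ⟨fun t => if t ≤ 0 then xw else r (t - 0 - 1), ?_, fun i => by simp, by simp⟩
    have := IP.concat (r := fun _ => xw) (s := 0) (n := s) (p := r) (G := G)
      ⟨fun i j _ _ _ => by omega, fun i j _ _ => by simp; omega⟩ hr
      (fun i _ j hj e => c.zA (e ▸ rA j hj)) fun i hi j hj => ?_
    · rw [show 0 + s + 1 = s + 1 by omega] at this; exact this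
    · rw [hxw.2 _ (rA j hj)]
      constructor
      · intro e; exact ⟨by omega, hr.inj _ _ hj (by omega) (e.trans r0.symm)⟩
      · rintro ⟨_, rfl⟩; exact r0
  have rlast := re0 s
  have nx0 : ∀ i ≤ s, ¬ G.Adj x0 (r i) := fun i hi e =>
    rp i hi 0 (by omega) ((h0.2 _ (rA i hi)).1 e)
  have nxn : ∀ i ≤ s, ¬ G.Adj xn (r i) := fun i hi e =>
    rp i hi n le_rfl ((h1.2 _ (rA i hi)).1 e)
  have := leg (A := A) (f := f+1) (l := l+1) hpe hre (by omega) ext_zero ext_last (z := xw) rez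
    ?_ ?_ ?_ ?_ (by omega) (by omega) (by rw [ext_mid (by omega), rlast]; exact hf)
    (by rw [ext_mid (by omega), rlast]; exact hl) ?_
  · rw [ext_mid (by omega), ext_mid (by omega), rlast] at this
    have mds : ∀ w', MdS G B x0 xn xw w' → w' = x0 ∨ w' = xn ∨ w' = xw := by
      rintro w' (⟨rfl, _⟩ | ⟨rfl, _⟩ | ⟨rfl, _⟩) <;> simp
    rcases this with h | h | h | h | h | h
    · exfalso
      obtain ⟨hfl', -, -, hcl⟩ := h
      have hfl' : f = l := by omega
      subst hfl'
      have hex : f = 0 ∨ f = n := by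
        obtain ⟨⟨w', hw'⟩, hadj⟩ := alpha hEH hPyr c hcl
        have := (hadj w' hw').symm
        rcases mds w' hw' with rfl | rfl | rfl
        · left; exact hp.inj _ _ hln (by omega) ((h0.2 _ (pA f hln)).1 this)
        · right; exact hp.inj _ _ hln le_rfl ((h1.2 _ (pA f hln)).1 this)
        · exact (wp f hln ((hxw.2 _ (pA f hln)).1 this)).elim
      rcases hex with rfl | rfl
      · have hc := IP.concat hr hp rp fun i hi j hj => ?_
        · have := hmax _ _ hc ?_ ⟨xw, ?_⟩ ⟨xn, ?_⟩
          · omega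
          · intro i hi; split_ifs with h
            · exact rA i h
            · exact pA _ (by omega)
          · simpa [r0] using hxw
          · rw [if_neg (by omega), show s + n + 1 - s - 1 = n by omega]; exact h1
        · constructor
          · intro e
            rcases Nat.lt_or_ge i s with h | h
            · exact (k3' i h j hj e).elim
            · have : i = s := by omega
              subst this; have := hout j hj e; omega
          · rintro ⟨rfl, rfl⟩; exact hf
      · have hc := IP.concat hr (hp.rev f le_rfl) (fun i hi j hj => rp i hi _ (by omega))
          fun i hi j hj => ?_
        · have := hmax _ _ hc ?_ ⟨xw, ?_⟩ ⟨x0, ?_⟩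
          · omega
          · intro i hi; split_ifs with h
            · exact rA i h
            · exact pA _ (by omega)
          · simpa [r0] using hxw
          · rw [if_neg (by omega), show f - (s + f + 1 - s - 1) = 0 by omega]; exact h0
        · constructor
          · intro e
            rcases Nat.lt_or_ge i s with h | h
            · exact (k3' i h _ (by omega) e).elim
            · have : i = s := by omega
              subst this; have := hout _ (by omega) e; omega
          · rintro ⟨rfl, rfl⟩; exact hf
    · omega
    · omega
    · exfalso
      obtain ⟨⟨w', hw'⟩, hd⟩ := beta hEH hPyr c h.2
      rcases hd w' hw' with h | h | h
      · exact c.xA (h.2 ▸ pA f (by omega))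
      · exact c.yA (h.2 ▸ pA l (by omega))
      · exact c.zA (h.2 ▸ rA s (by omega))
    · omega
    · obtain ⟨⟨w', hw'⟩, hadj⟩ := alpha hEH hPyr c h.2.2
      have := (hadj w' hw').symm
      rcases mds w' hw' with rfl | rfl | rfl
      · exact (nx0 s le_rfl this).elim
      · exact (nxn s le_rfl this).elim
      · have := (hxw.2 _ (rA s le_rfl)).1 this
        exact ⟨f, l, by omega, hln, this ▸ hf, this ▸ hl⟩
  · intro i h1 h2
    rcases ext_cases h2.le with rfl | ⟨i, hi', rfl⟩ | rfl
    · omega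
    · rw [ext_mid hi']; exact pA i hi'
    · omega
  · intro i h1 h2
    obtain ⟨j, rfl⟩ : ∃ j, i = j + 1 := ⟨i-1, by omega⟩
    rw [re0]; exact rA j (by omega)
  · intro i hi j hj
    rcases Nat.eq_zero_or_pos j with rfl | hj0
    · rw [rez]
      rcases ext_cases hi with rfl | ⟨i, hi', rfl⟩ | rfl
      · exact e2
      · rw [ext_mid hi']; exact fun e => c.zA (e ▸ pA i hi')
      · rw [ext_last]; exact e3
    · obtain ⟨j, rfl⟩ : ∃ j', j = j' + 1 := ⟨j-1, by omega⟩
      rw [re0]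
      rcases ext_cases hi with rfl | ⟨i, hi', rfl⟩ | rfl
      · rw [ext_zero]; intro e; exact c.xA (e.symm ▸ rA j (by omega))
      · rw [ext_mid hi']; exact (rp j (by omega) i hi').symm
      · rw [ext_last]; intro e; exact c.yA (e.symm ▸ rA j (by omega))
  · intro j hj i hi
    rcases Nat.eq_zero_or_pos j with rfl | hj0
    · rw [rez]
      rcases ext_cases hi with rfl | ⟨i, hi', rfl⟩ | rfl
      · exact fun e => c.nxz e.symm
      · rw [ext_mid hi']; exact fun e => wp i hi' ((hxw.2 _ (pA i hi')).1 e)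
      · rw [ext_last]; exact fun e => c.nyz e.symm
    · obtain ⟨j, rfl⟩ : ∃ j', j = j' + 1 := ⟨j-1, by omega⟩
      rw [re0]
      rcases ext_cases hi with rfl | ⟨i, hi', rfl⟩ | rfl
      · exact fun e => nx0 j (by omega) e.symm
      · rw [ext_mid hi']; exact k3' j (by omega) i hi'
      · rw [ext_last]; exact fun e => nxn j (by omega) e.symm
  · intro i hi e
    rw [rlast] at e
    rcases ext_cases hi with rfl | ⟨i, hi', rfl⟩ | rfl
    · exact (nx0 s le_rfl e.symm).elim
    · rw [ext_mid hi'] at e; have := hout i hi' e; omega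
    · rw [ext_last] at e; exact (nxn s le_rfl e.symm).elim

theorem Priv.conn {A I S : Set V} {a x : V} (hx : Priv G A I a x) (hSA : S ⊆ A) (hS : Conn G S)
    (ha : a ∈ S) : Conn G (insert x S) :=
  hS.insert ⟨a, ha, (hx.2 a (hSA ha)).2 rfl⟩

theorem priv_cross {A B I S T : Set V} {a b x y d e : V} (h : Side G A B I) (hS : S ⊆ A) (hT : T ⊆ A)
    (hx : Priv G A I a x) (hy : Priv G A I b y) (ha : a ∉ T) (hb : b ∉ S) (hxy : x ≠ y)
    (hc : Cross G S T d e) : Cross G (insert x S) (insert y T) d e := by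
  rintro u (rfl | hu) v (rfl | hv)
  · exact ⟨hxy, fun k => (h.ind _ hx.1 _ hy.1 k).elim⟩
  · exact ⟨fun k => h.nA _ hx.1 (k ▸ hT hv), fun k => (ha ((hx.2 v (hT hv)).1 k ▸ hv)).elim⟩
  · exact ⟨fun k => h.nA _ hy.1 (k ▸ hS hu), fun k => (hb ((hy.2 u (hS hu)).1 k.symm ▸ hu)).elim⟩
  · exact hc u hu v hv

theorem priv_anti {A B I S T : Set V} {a b x y : V} (h : Side G A B I) (hS : S ⊆ A) (hT : T ⊆ A)
    (hx : Priv G A I a x) (hy : Priv G A I b y) (ha : a ∉ T) (hb : b ∉ S) (hxy : x ≠ y)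
    (hc : Anti G S T) : Anti G (insert x S) (insert y T) := by
  rintro u (rfl | hu) v (rfl | hv)
  · exact ⟨hxy, fun k => (h.ind _ hx.1 _ hy.1 k).elim⟩
  · exact ⟨fun k => h.nA _ hx.1 (k ▸ hT hv), fun k => (ha ((hx.2 v (hT hv)).1 k ▸ hv)).elim⟩
  · exact ⟨fun k => h.nA _ hy.1 (k ▸ hS hu), fun k => (hb ((hy.2 u (hS hu)).1 k.symm ▸ hu)).elim⟩
  · exact hc u hu v hv

theorem priv_ne {A I : Set V} {a b x y : V} (ha : a ∈ A) (hx : Priv G A I a x) (hy : Priv G A I b y)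
    (hab : a ≠ b) : x ≠ y := by
  intro e
  subst e
  exact hab (((hy.2 a ha).1 ((hx.2 a ha).2 rfl)))

/-- The final contradiction of the W-lemma. -/
theorem wstep2 (hEH : ¬ContainsEvenHole G) (hPyr : ¬ContainsPyramid G) {A B I : Set V}
    (h : Side G A B I) {p : ℕ → V} {n : ℕ} (hp : IP G p n) (pA : ∀ i ≤ n, p i ∈ A)
    {x0 xw w : V} (h0 : Priv G A I (p 0) x0)
    (hw : w ∈ A) (hwp : w ∉ seg p 0 n) (hxw : Priv G A I w xw) {f l : ℕ} (hfl : f + 2 ≤ l)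
    (hln : l ≤ n) (hf : G.Adj w (p f)) (hl : G.Adj w (p l))
    (hout : ∀ i ≤ n, G.Adj w (p i) → f ≤ i ∧ i ≤ l)
    (hpr : ∀ i, f < i → i < l → ∃ x, Priv G A I (p i) x) : False := by
  have wp : ∀ i ≤ n, p i ≠ w := fun i hi e => hwp ⟨i, by omega, hi, e⟩
  have segA : ∀ i j, j ≤ n → seg p i j ⊆ A := by
    rintro i j hj _ ⟨t, _, ht, rfl⟩; exact pA t (by omega)
  have wS : ∀ i j, j ≤ n → w ∉ seg p i j := by
    rintro i j hj ⟨t, _, ht, e⟩; exact wp t (by omega) e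
  have wA : ({w} : Set V) ⊆ A := by rintro _ rfl; exact hw
  have pw : ∀ i ≤ n, p i ∉ ({w} : Set V) := fun i hi e => wp i hi e
  have pne : ∀ i ≤ n, ∀ j ≤ n, i ≠ j → p i ≠ p j := fun i hi j hj hij e => hij (hp.inj _ _ hi hj e)
  have e02 : x0 ≠ xw := priv_ne (pA 0 (by omega)) h0 hxw (wp 0 (by omega))
  have mds : ∀ {B' : Set V} {x y z w' : V}, MdS G B' x y z w' → w' = x ∨ w' = y ∨ w' = z := by
    rintro B' x y z w' (⟨rfl, _⟩ | ⟨rfl, _⟩ | ⟨rfl, _⟩) <;> simp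
  -- (a)
  have ha : ¬ G.Adj w (p (f+1)) := by
    intro hadj
    obtain ⟨xq, hxq⟩ := hpr (f+1) (by omega) (by omega)
    have e01 : x0 ≠ xq := priv_ne (pA 0 (by omega)) h0 hxq (pne _ (by omega) _ (by omega) (by omega))
    have e12 : xq ≠ xw := priv_ne (pA _ (by omega)) hxq hxw (wp _ (by omega))
    have c := h.cfg h0.1 hxq.1 hxw.1 e01 e02 e12
    have tri : Tri G A (p f) (p (f+1)) w x0 xq xw := by
      refine ⟨⟨hp.step (by omega), hadj.symm, hf.symm⟩, insert x0 (seg p 0 f),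
        insert xq (seg p (f+1) (f+1)), insert xw {w},
        h0.conn (segA _ _ (by omega)) (hp.conn (by omega) (by omega)) (mem_seg le_rfl (by omega)),
        hxq.conn (segA _ _ (by omega)) (hp.conn (by omega) (by omega)) (mem_seg le_rfl (by omega)),
        hxw.conn wA (conn_singleton w) rfl,
        priv_cross h (segA _ _ (by omega)) (segA _ _ (by omega)) h0 hxq
          (hp.nmem_seg (by omega) (by omega) (by omega)) (hp.nmem_seg (by omega) (by omega) (by omega))
          e01 (hp.cross_seg (by omega)),
        priv_cross h (segA _ _ (by omega)) wA h0 hxw (pw _ (by omega)) (wS _ _ (by omega)) e02 ?_,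
        priv_cross h (segA _ _ (by omega)) wA hxq hxw (pw _ (by omega)) (wS _ _ (by omega)) e12 ?_,
        Or.inl rfl, Or.inl rfl, Or.inl rfl, Or.inr (mem_seg (by omega) le_rfl),
        Or.inr (mem_seg le_rfl le_rfl), Or.inr rfl,
        Set.insert_subset_insert (segA _ _ (by omega)),
        Set.insert_subset_insert (segA _ _ (by omega)), Set.insert_subset_insert wA⟩
      · rintro _ ⟨t, _, ht, rfl⟩ _ rfl
        refine ⟨wp t (by omega), fun k => ⟨?_, rfl⟩⟩
        have := hout t (by omega) k.symm
        rw [show t = f by omega]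
      · rintro _ ⟨t, h1, ht, rfl⟩ _ rfl
        refine ⟨wp t (by omega), fun k => ⟨?_, rfl⟩⟩
        rw [show t = f + 1 by omega]
    obtain ⟨⟨w', hw'⟩, hd⟩ := beta hEH hPyr c tri
    rcases hd w' hw' with h | h | h
    · exact c.xA (h.2 ▸ pA f (by omega))
    · exact c.yA (h.2 ▸ pA _ (by omega))
    · exact c.zA (h.2 ▸ hw)
  -- (b)
  have hb : f = 0 := by
    by_contra hf0
    obtain ⟨xq, hxq⟩ := hpr (f+1) (by omega) (by omega)
    have e01 : x0 ≠ xq := priv_ne (pA 0 (by omega)) h0 hxq (pne _ (by omega) _ (by omega) (by omega))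
    have e12 : xq ≠ xw := priv_ne (pA _ (by omega)) hxq hxw (wp _ (by omega))
    have c := h.cfg h0.1 hxq.1 hxw.1 e01 e02 e12
    have cl : Cl G A (p f) x0 xq xw := by
      refine ⟨pA f (by omega), insert x0 (seg p 0 (f-1)),
        insert xq (seg p (f+1) (f+1)), insert xw {w},
        h0.conn (segA _ _ (by omega)) (hp.conn (by omega) (by omega)) (mem_seg le_rfl (by omega)),
        hxq.conn (segA _ _ (by omega)) (hp.conn (by omega) (by omega)) (mem_seg le_rfl (by omega)),
        hxw.conn wA (conn_singleton w) rfl,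
        priv_anti h (segA _ _ (by omega)) (segA _ _ (by omega)) h0 hxq
          (hp.nmem_seg (by omega) (by omega) (by omega)) (hp.nmem_seg (by omega) (by omega) (by omega))
          e01 (hp.anti_seg (by omega) (by omega)),
        priv_anti h (segA _ _ (by omega)) wA h0 hxw (pw _ (by omega)) (wS _ _ (by omega)) e02 ?_,
        priv_anti h (segA _ _ (by omega)) wA hxq hxw (pw _ (by omega)) (wS _ _ (by omega)) e12 ?_,
        Or.inl rfl, Or.inl rfl, Or.inl rfl,
        Set.insert_subset_insert (segA _ _ (by omega)),
        Set.insert_subset_insert (segA _ _ (by omega)), Set.insert_subset_insert wA, ?_, ?_, ?_,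
        ⟨p (f-1), Or.inr (mem_seg (by omega) le_rfl), ?_⟩,
        ⟨p (f+1), Or.inr (mem_seg (by omega) le_rfl), hp.step (by omega)⟩,
        ⟨w, Or.inr rfl, hf.symm⟩⟩
      · rintro _ ⟨t, _, ht, rfl⟩ _ rfl
        refine ⟨wp t (by omega), fun k => ?_⟩
        have := hout t (by omega) k.symm
        omega
      · rintro _ ⟨t, h1, ht, rfl⟩ _ rfl
        refine ⟨wp t (by omega), fun k => ?_⟩
        rw [show t = f + 1 by omega] at k
        exact ha k.symm
      · rintro (e | e)
        · exact c.xA (e ▸ pA f (by omega))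
        · exact hp.nmem_seg (by omega) (by omega) (by omega) e
      · rintro (e | e)
        · exact c.yA (e ▸ pA f (by omega))
        · exact hp.nmem_seg (by omega) (by omega) (by omega) e
      · rintro (e | e)
        · exact c.zA (e ▸ pA f (by omega))
        · exact wp f (by omega) e
      · exact (hp.adj _ _ (by omega) (by omega)).2 (by omega)
    obtain ⟨⟨w', hw'⟩, hd⟩ := alpha hEH hPyr c cl
    have := (hd w' hw').symm
    rcases mds hw' with rfl | rfl | rfl
    · have := hp.inj _ _ (by omega) (by omega) ((h0.2 _ (pA f (by omega))).1 this); omega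
    · have := hp.inj _ _ (by omega) (by omega) ((hxq.2 _ (pA f (by omega))).1 this); omega
    · exact wp f (by omega) ((hxw.2 _ (pA f (by omega))).1 this)
  subst hb
  obtain ⟨g, l', hgl, hl', ⟨hg0, hg⟩, -, hg2⟩ := firstlast (n := n)
    (Q := fun i => 0 < i ∧ G.Adj w (p i)) ⟨l, hln, by omega, hl⟩
  have hgl2 := (hg2 l hln ⟨by omega, hl⟩).1
  have hg1 : g ≠ 1 := by rintro rfl; exact ha hg
  have hgn : ∀ i ≤ n, 0 < i → i < g → ¬ G.Adj w (p i) := fun i hi h1 h2 k => by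
    have := hg2 i hi ⟨h1, k⟩; omega
  rcases Nat.lt_or_ge 2 g with hg3 | hg3
  swap
  · have : g = 2 := by omega
    subst this
    obtain ⟨q, q0, q1, q2⟩ : ∃ q : ℕ → V, q 0 = p 0 ∧ q 1 = w ∧ q 2 = p 2 :=
      ⟨fun i => if i = 1 then w else p i, by simp, by simp, by simp⟩
    have n02 : ¬ G.Adj (p 0) (p 2) := fun k => by
      have := (hp.adj 0 2 (by omega) (by omega)).1 k; omega
    have hq : IP G q 2 := by
      constructor
      · intro i j hi hj e
        have a1 := wp 0 (by omega)
        have a2 := wp 2 (by omega)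
        have a3 := pne 0 (by omega) 2 (by omega) (by omega)
        interval_cases i <;> interval_cases j <;> simp_all
      · intro i j hi hj
        interval_cases i <;> interval_cases j <;> simp_all [G.adj_comm]
    have := oddCyc2 hEH (hp.mono (show 2 ≤ n by omega)) hq le_rfl le_rfl q0.symm q2.symm
      (fun i h1 h2 j h3 h4 => by
        rw [show i = 1 by omega, show j = 1 by omega, q1]
        exact ⟨wp 1 (by omega), fun k => ha k.symm⟩)
    revert this; decide
  · obtain ⟨x1, hx1⟩ := hpr 1 (by omega) (by omega)
    obtain ⟨x2, hx2⟩ := hpr 2 (by omega) (by omega)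
    have e1w : x1 ≠ xw := priv_ne (pA _ (by omega)) hx1 hxw (wp _ (by omega))
    have e2w : x2 ≠ xw := priv_ne (pA _ (by omega)) hx2 hxw (wp _ (by omega))
    have e12 : x1 ≠ x2 := priv_ne (pA _ (by omega)) hx1 hx2 (pne _ (by omega) _ (by omega) (by omega))
    have c := h.cfg hx1.1 hxw.1 hx2.1 e1w e12 e2w.symm
    have em : (∅ : Set V) ⊆ A := Set.empty_subset _
    have an : ∀ T : Set V, Anti G ∅ T := fun T u hu => hu.elim
    have U1 : ({w, p 0} : Set V) ⊆ A := by
      rintro _ (rfl | rfl)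
      · exact hw
      · exact pA 0 (by omega)
    have U2 : insert w (seg p 3 g) ⊆ A := by
      rintro _ (rfl | h)
      · exact hw
      · exact segA _ _ (by omega) h
    have n1w : p 1 ∉ ({w, p 0} : Set V) := by
      rintro (e | e)
      · exact wp 1 (by omega) e
      · exact pne 1 (by omega) 0 (by omega) (by omega) e
    have n2w : p 2 ∉ ({w, p 0} : Set V) := by
      rintro (e | e)
      · exact wp 2 (by omega) e
      · exact pne 2 (by omega) 0 (by omega) (by omega) e
    have n2U : p 2 ∉ insert w (seg p 3 g) := by
      rintro (e | e)
      · exact wp 2 (by omega) e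
      · exact hp.nmem_seg (by omega) (by omega) (by omega) e
    have n1U : p 1 ∉ insert w (seg p 3 g) := by
      rintro (e | e)
      · exact wp 1 (by omega) e
      · exact hp.nmem_seg (by omega) (by omega) (by omega) e
    have nAx : ∀ i ≤ n, ∀ x ∈ I, p i ≠ x := fun i hi x hx e => h.nA x hx (e ▸ pA i hi)
    have cl1 : Cl G A (p 1) x1 xw x2 := by
      refine ⟨pA 1 (by omega), insert x1 ∅, insert xw {w, p 0}, insert x2 (seg p 2 2),
        by simpa using conn_singleton x1, hxw.conn U1 ((conn_singleton _).insert ⟨_, rfl, hf⟩) (Or.inl rfl),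
        hx2.conn (segA _ _ (by omega)) (hp.conn le_rfl (by omega)) (mem_seg le_rfl le_rfl),
        priv_anti h em U1 hx1 hxw n1w (fun h => h) e1w (an _),
        priv_anti h em (segA _ _ (by omega)) hx1 hx2 (hp.nmem_seg (by omega) (by omega) (by omega))
          (fun h => h) e12 (an _),
        priv_anti h U1 (segA _ _ (by omega)) hxw hx2 (wS _ _ (by omega)) n2w e2w.symm ?_,
        Or.inl rfl, Or.inl rfl, Or.inl rfl, Set.insert_subset_insert em,
        Set.insert_subset_insert U1, Set.insert_subset_insert (segA _ _ (by omega)),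
        ?_, ?_, ?_, ⟨x1, Or.inl rfl, ((hx1.2 _ (pA 1 (by omega))).2 rfl).symm⟩,
        ⟨p 0, Or.inr (Or.inr rfl), (hp.step (by omega)).symm⟩,
        ⟨p 2, Or.inr (mem_seg le_rfl le_rfl), hp.step (by omega)⟩⟩
      · rintro u hu _ ⟨t, h1, h2, rfl⟩
        have : t = 2 := by omega
        subst this
        refine ⟨fun e => n2w (e ▸ hu), ?_⟩
        rcases hu with rfl | rfl
        · exact hgn 2 (by omega) (by omega) (by omega)
        · intro k; have := (hp.adj 0 2 (by omega) (by omega)).1 k; omega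
      · rintro (e | e)
        · exact nAx 1 (by omega) _ hx1.1 e
        · exact e
      · rintro (e | e)
        · exact nAx 1 (by omega) _ hxw.1 e
        · exact n1w e
      · rintro (e | e)
        · exact nAx 1 (by omega) _ hx2.1 e
        · exact hp.nmem_seg (by omega) (by omega) (by omega) e
    have cl2 : Cl G A (p 2) x2 x1 xw := by
      refine ⟨pA 2 (by omega), insert x2 ∅, insert x1 (seg p 1 1), insert xw (insert w (seg p 3 g)),
        by simpa using conn_singleton x2,
        hx1.conn (segA _ _ (by omega)) (hp.conn le_rfl (by omega)) (mem_seg le_rfl le_rfl),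
        hxw.conn U2 ((hp.conn (by omega) (by omega)).insert ⟨_, mem_seg (by omega) le_rfl, hg⟩) (Or.inl rfl),
        priv_anti h em (segA _ _ (by omega)) hx2 hx1 (hp.nmem_seg (by omega) (by omega) (by omega))
          (fun h => h) e12.symm (an _),
        priv_anti h em U2 hx2 hxw n2U (fun h => h) e2w (an _),
        priv_anti h (segA _ _ (by omega)) U2 hx1 hxw n1U (wS _ _ (by omega)) e1w ?_,
        Or.inl rfl, Or.inl rfl, Or.inl rfl, Set.insert_subset_insert em,
        Set.insert_subset_insert (segA _ _ (by omega)), Set.insert_subset_insert U2,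
        ?_, ?_, ?_, ⟨x2, Or.inl rfl, ((hx2.2 _ (pA 2 (by omega))).2 rfl).symm⟩,
        ⟨p 1, Or.inr (mem_seg le_rfl le_rfl), (hp.step (by omega)).symm⟩,
        ⟨p 3, Or.inr (Or.inr (mem_seg le_rfl (by omega))), hp.step (by omega)⟩⟩
      · rintro _ ⟨t, h1, h2, rfl⟩ v hv
        have : t = 1 := by omega
        subst this
        refine ⟨fun e => n1U (e ▸ hv), ?_⟩
        rcases hv with rfl | hv
        · exact fun k => ha k.symm
        · exact (hp.anti_seg (i := 1) (j := 1) (by omega) (by omega) _ (mem_seg le_rfl le_rfl) v hv).2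
      · rintro (e | e)
        · exact nAx 2 (by omega) _ hx2.1 e
        · exact e
      · rintro (e | e)
        · exact nAx 2 (by omega) _ hx1.1 e
        · exact hp.nmem_seg (by omega) (by omega) (by omega) e
      · rintro (e | e)
        · exact nAx 2 (by omega) _ hxw.1 e
        · exact n2U e
    obtain ⟨⟨w', hw'⟩, hd⟩ := alpha hEH hPyr c cl1
    have k1 := (hd w' hw').symm
    have k2 := ((alpha hEH hPyr c cl2.swap12.swap23).2 w' hw').symm
    have fin : ∀ a x, Priv G A I a x → w' = x → False := by
      rintro a x hx rfl
      have a1 := (hx.2 _ (pA 1 (by omega))).1 k1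
      have a2 := (hx.2 _ (pA 2 (by omega))).1 k2
      exact pne 1 (by omega) 2 (by omega) (by omega) (a1.trans a2.symm)
    rcases mds hw' with e | e | e
    · exact fin _ _ hx1 e
    · exact fin _ _ hxw e
    · exact fin _ _ hx2 e

/-- The W-lemma -/
theorem wlem (hEH : ¬ContainsEvenHole G) (hPyr : ¬ContainsPyramid G) {A0 B I : Set V}
    (h : Side G A0 B I) (hI : I.Nonempty) :
    ∃ n p, IP G p n ∧ (∀ i ≤ n, p i ∈ A0) ∧ (∀ x ∈ I, ∃ i ≤ n, G.Adj x (p i)) ∧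
      (∃ x ∈ I, ∀ i ≤ n, (G.Adj x (p i) ↔ i = 0)) ∧ (∃ x ∈ I, ∀ i ≤ n, (G.Adj x (p i) ↔ i = n)) := by
  obtain ⟨A, ⟨hA1, hA2, hA3⟩, hmin⟩ := (wellFounded_lt (α := Set V)).has_min
    {A | A ⊆ A0 ∧ Conn G A ∧ ∀ x ∈ I, Att G x A} ⟨A0, subset_rfl, h.cA, h.aA⟩
  have hS : Side G A B I := ⟨hA2, h.cB, h.anti.mono hA1 subset_rfl, h.ind,
    fun x hx k => h.nA x hx (hA1 k), h.nB, hA3, h.aB⟩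
  have pr0 : ∀ a ∈ A, A = {a} → ∃ x, Priv G A I a x := by
    intro a ha e
    obtain ⟨x, hx⟩ := hI
    refine ⟨x, hx, fun b hb => ?_⟩
    rw [e] at hb
    obtain ⟨c, hc, hxc⟩ := hA3 x hx
    rw [e] at hc
    obtain rfl : b = a := hb
    obtain rfl : c = b := hc
    simp [hxc]
  have pr : ∀ a ∈ A, Conn G (A \ {a}) → ∃ x, Priv G A I a x := by
    intro a ha hc
    by_contra hno
    refine hmin (A \ {a}) ⟨Set.diff_subset.trans hA1, hc, fun x hx => ?_⟩
      ⟨Set.diff_subset, fun k => (k ha).2 rfl⟩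
    by_contra hat
    refine hno ⟨x, hx, ?_⟩
    have key : ∀ b ∈ A, G.Adj x b → b = a := by
      intro b hb hxb
      by_contra hne
      exact hat ⟨b, ⟨hb, hne⟩, hxb⟩
    obtain ⟨c, hc, hxc⟩ := hA3 x hx
    have := key c hc hxc
    subst this
    exact fun b hb => ⟨key b hb, fun e => e ▸ hxc⟩
  obtain ⟨n, ⟨p, hp, pA, ⟨x0, h0⟩, ⟨xn, h1⟩⟩, hmax⟩ : ∃ n, (∃ p, IP G p n ∧ (∀ i ≤ n, p i ∈ A) ∧
      (∃ x, Priv G A I (p 0) x) ∧ (∃ x, Priv G A I (p n) x)) ∧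
      (∀ m q, IP G q m → (∀ i ≤ m, q i ∈ A) → (∃ x, Priv G A I (q 0) x) →
      (∃ x, Priv G A I (q m) x) → m ≤ n) := by
    classical
    let Q : ℕ → Prop := fun n => ∃ p, IP G p n ∧ (∀ i ≤ n, p i ∈ A) ∧
      (∃ x, Priv G A I (p 0) x) ∧ (∃ x, Priv G A I (p n) x)
    have hQ0 : Q 0 := by
      obtain ⟨a, ha⟩ := hA2.1
      have : ∃ w ∈ A, ∃ x, Priv G A I w x := by
        by_cases e : ({a} : Set V) = A
        · exact ⟨a, ha, pr0 a ha e.symm⟩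
        · obtain ⟨w, hw, -, hc⟩ := exists_noncut hA2 (conn_singleton a) (by rintro _ rfl; exact ha) e
          exact ⟨w, hw, pr w hw hc⟩
      obtain ⟨w, hw, hx⟩ := this
      exact ⟨fun _ => w, ⟨fun i j hi hj _ => by omega, fun i j hi hj => by simp; omega⟩,
        fun _ _ => hw, hx, hx⟩
    refine ⟨Nat.findGreatest Q (Fintype.card V), Nat.findGreatest_spec (Nat.zero_le _) hQ0, ?_⟩
    intro m q h1 h2 h3 h4
    exact Nat.le_findGreatest h1.le_card ⟨q, h1, h2, h3, h4⟩
  have segA : seg p 0 n ⊆ A := by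
    rintro _ ⟨t, _, ht, rfl⟩; exact pA t ht
  by_cases hPA : seg p 0 n = A
  · refine ⟨n, p, hp, fun i hi => hA1 (pA i hi), fun x hx => ?_, ⟨x0, h0.1, fun i hi => ?_⟩,
      ⟨xn, h1.1, fun i hi => ?_⟩⟩
    · obtain ⟨a, ha, hxa⟩ := hA3 x hx
      rw [← hPA] at ha
      obtain ⟨t, _, ht, rfl⟩ := ha
      exact ⟨t, ht, hxa⟩
    · rw [h0.2 _ (pA i hi)]
      exact ⟨fun e => hp.inj _ _ hi (by omega) e, fun e => by rw [e]⟩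
    · rw [h1.2 _ (pA i hi)]
      exact ⟨fun e => hp.inj _ _ hi (by omega) e, fun e => by rw [e]⟩
  · exfalso
    obtain ⟨w, hw, hwp, hwc⟩ := exists_noncut hA2 (hp.conn (Nat.zero_le n) le_rfl) segA hPA
    obtain ⟨xw, hxw⟩ := pr w hw hwc
    have hn : 1 ≤ n := by
      by_contra hn
      obtain ⟨m, q, hq, q0, qm, qA⟩ := path_exists hA2 (pA 0 (by omega)) hw
      have := hmax m q hq qA ⟨x0, q0.symm ▸ h0⟩ ⟨xw, qm.symm ▸ hxw⟩
      have hm : m = 0 := by omega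
      subst hm
      exact hwp ⟨0, le_rfl, by omega, q0.symm.trans qm⟩
    obtain ⟨f', l', hfl', hln', hf', hl'⟩ := wstep1 hEH hPyr hS hn hp pA h0 h1 hmax hw hwp hxw
    obtain ⟨f, l, hfl, hln, hf, hl, hout⟩ := firstlast (Q := fun i => G.Adj w (p i)) (n := n)
      ⟨l', hln', hl'⟩
    have o1 := hout f' (by omega) hf'
    have o2 := hout l' (by omega) hl'
    refine wstep2 hEH hPyr hS hp pA h0 hw hwp hxw (by omega) hln hf hl hout ?_
    intro i hi1 hi2
    refine pr _ (pA i (by omega)) ?_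
    have hC0 : Conn G (insert w (seg p 0 (i-1)) ∪ seg p (i+1) n) :=
      ((hp.conn (by omega) (by omega)).insert ⟨p f, mem_seg (by omega) (by omega), hf⟩).union
        (hp.conn (by omega) le_rfl) ⟨w, Or.inl rfl, p l, mem_seg (by omega) (by omega), Or.inr hl⟩
    have hsub : insert w (seg p 0 (i-1)) ∪ seg p (i+1) n ⊆ A \ {p i} := by
      rintro _ ((rfl | ⟨t, _, ht, rfl⟩) | ⟨t, _, ht, rfl⟩)
      · exact ⟨hw, fun e => hwp (e ▸ mem_seg (by omega) (by omega))⟩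
      · exact ⟨pA t (by omega), fun e => by
          have := hp.inj _ _ (by omega) (by omega) e; omega⟩
      · exact ⟨pA t (by omega), fun e => by
          have := hp.inj _ _ (by omega) (by omega) e; omega⟩
    obtain ⟨C, hC1, hC2, hC3, hC4⟩ := exists_comp hC0 hsub
    have pC : ∀ j ≤ n, j ≠ i → p j ∈ C := by
      intro j hj hji
      apply hC1
      rcases Nat.lt_or_ge j i with h | h
      · exact Or.inl (Or.inr (mem_seg (by omega) (by omega)))
      · exact Or.inr (mem_seg (by omega) (by omega))
    by_cases hCA : C = A \ {p i}
    · rw [← hCA]; exact hC3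
    exfalso
    have hP' : Conn G (insert (p i) C) := hC3.insert ⟨p (i+1), pC _ (by omega) (by omega), hp.step (by omega)⟩
    have hP'A : insert (p i) C ⊆ A := by
      rintro _ (rfl | k)
      · exact pA i (by omega)
      · exact (hC2 k).1
    obtain ⟨w', hw', hwp', hwc'⟩ := exists_noncut hA2 hP' hP'A (fun e => hCA (by
      rw [← e]; ext v
      simp only [Set.mem_diff, Set.mem_insert_iff, Set.mem_singleton_iff]
      exact ⟨fun k => ⟨Or.inr k, (hC2 k).2⟩, fun k => k.1.resolve_left k.2⟩))
    obtain ⟨xw', hxw'⟩ := pr w' hw' hwc'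
    obtain ⟨f2, l2, hfl2, hln2, hf2, hl2⟩ := wstep1 hEH hPyr hS hn hp pA h0 h1 hmax hw' (by
      rintro ⟨t, _, ht, rfl⟩
      by_cases e : t = i
      · exact hwp' (Or.inl (by rw [e]))
      · exact hwp' (Or.inr (pC t ht e))) hxw'
    have : ∃ j ≤ n, j ≠ i ∧ G.Adj w' (p j) := by
      by_cases e : f2 = i
      · exact ⟨l2, hln2, by omega, hl2⟩
      · exact ⟨f2, by omega, e, hf2⟩
    obtain ⟨j, hj, hji, hadj⟩ := this
    exact hwp' (Or.inr (hC4 _ (pC j hj hji) w' ⟨hw', fun e => hwp' (Or.inl e)⟩ hadj.symm))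

theorem ip3 {a b c : V} (hab : G.Adj a b) (hbc : G.Adj b c) (hac : a ≠ c) (hnac : ¬ G.Adj a c) :
    ∃ q : ℕ → V, IP G q 2 ∧ q 0 = a ∧ q 1 = b ∧ q 2 = c := by
  obtain ⟨q, q0, q1, q2⟩ : ∃ q : ℕ → V, q 0 = a ∧ q 1 = b ∧ q 2 = c :=
    ⟨fun i => if i = 0 then a else if i = 1 then b else c, by simp, by simp, by simp⟩
  refine ⟨q, ?_, q0, q1, q2⟩
  have h1 := hab.ne
  have h2 := hbc.ne
  have h3 : ¬ G.Adj c a := fun k => hnac k.symm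
  constructor
  · intro i j hi hj e
    interval_cases i <;> interval_cases j <;> simp_all
  · intro i j hi hj
    interval_cases i <;> interval_cases j <;> simp_all [hab.symm, hbc.symm]

theorem c4 (hEH : ¬ContainsEvenHole G) {u v a b : V} (huv : u ≠ v) (hnuv : ¬ G.Adj u v) (hab : a ≠ b)
    (hnab : ¬ G.Adj a b) (ua : G.Adj u a) (ub : G.Adj u b) (va : G.Adj v a) (vb : G.Adj v b) :
    False := by
  obtain ⟨q, hq, q0, q1, q2⟩ := ip3 ua va.symm huv hnuv
  obtain ⟨r, hr, r0, r1, r2⟩ := ip3 ub vb.symm huv hnuv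
  have := oddCyc2 hEH hq hr le_rfl le_rfl (q0.trans r0.symm) (q2.trans r2.symm)
    (fun i h1 h2 j h3 h4 => by
      rw [show i = 1 by omega, show j = 1 by omega, q1, r1]; exact ⟨hab, hnab⟩)
  revert this; decide

/-- one side is a path with private ends -/
structure BP (G : SimpleGraph V) (A I : Set V) (p : ℕ → V) (n : ℕ) (y y' : V) : Prop where
  side : Side G A (seg p 0 n) I
  ip : IP G p n
  yI : y ∈ I
  yI' : y' ∈ I
  hy : ∀ i ≤ n, (G.Adj y (p i) ↔ i = 0)
  hy' : ∀ i ≤ n, (G.Adj y' (p i) ↔ i = n)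

/-- first and last neighbour -/
structure Rng (G : SimpleGraph V) (p : ℕ → V) (n : ℕ) (u : V) (f l : ℕ) : Prop where
  fl : f ≤ l
  ln : l ≤ n
  hf : G.Adj u (p f)
  hl : G.Adj u (p l)
  out : ∀ i ≤ n, G.Adj u (p i) → f ≤ i ∧ i ≤ l

theorem rng_exists {p : ℕ → V} {n : ℕ} {u : V} (h : Att G u (seg p 0 n)) : ∃ f l, Rng G p n u f l := by
  obtain ⟨_, ⟨t, _, ht, rfl⟩, ha⟩ := h
  obtain ⟨f, l, h1, h2, h3, h4, h5⟩ := firstlast (Q := fun i => G.Adj u (p i)) ⟨t, ht, ha⟩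
  exact ⟨f, l, h1, h2, h3, h4, h5⟩

theorem BP.rev {A I : Set V} {p : ℕ → V} {n : ℕ} {y y' : V} (h : BP G A I p n y y') :
    ∃ p', BP G A I p' n y' y ∧ (∀ i ≤ n, p' i = p (n - i)) ∧ seg p' 0 n = seg p 0 n ∧
      ∀ u f l, Rng G p n u f l → Rng G p' n u (n-l) (n-f) := by
  obtain ⟨p', hp'⟩ : ∃ p' : ℕ → V, ∀ i, p' i = p (n - i) := ⟨fun t => p (n-t), fun _ => rfl⟩
  have hs : seg p' 0 n = seg p 0 n := by
    ext v
    constructor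
    · rintro ⟨t, _, ht, rfl⟩; rw [hp']; exact mem_seg (by omega) (by omega)
    · rintro ⟨t, _, ht, rfl⟩; exact ⟨n - t, by omega, by omega, by rw [hp']; congr 1; omega⟩
  refine ⟨p', ⟨hs ▸ h.side, ?_, h.yI', h.yI, ?_, ?_⟩, fun i _ => hp' i, hs, ?_⟩
  · constructor
    · intro i j hi hj e
      rw [hp', hp'] at e
      have := h.ip.inj _ _ (by omega) (by omega) e; omega
    · intro i j hi hj
      rw [hp', hp', h.ip.adj _ _ (by omega) (by omega)]; omega
  · intro i hi; rw [hp', h.hy' _ (by omega)]; omega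
  · intro i hi; rw [hp', h.hy _ (by omega)]; omega
  · intro u f l r
    have r1 := r.fl
    have r2 := r.ln
    refine ⟨by omega, by omega, ?_, ?_, ?_⟩
    · rw [hp', show n - (n - l) = l by omega]; exact r.hl
    · rw [hp', show n - (n - f) = f by omega]; exact r.hf
    · intro i hi k; rw [hp'] at k; have := r.out _ (by omega) k; omega

theorem BP.nI {A I : Set V} {p : ℕ → V} {n : ℕ} {y y' : V} (h : BP G A I p n y y') {u : V} (hu : u ∈ I)
    {i : ℕ} (hi : i ≤ n) : u ≠ p i := fun e => h.side.nB u hu (e ▸ mem_seg (by omega) hi)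

theorem BP.nS {A I : Set V} {p : ℕ → V} {n : ℕ} {y y' : V} (h : BP G A I p n y y') {u : V} (hu : u ∈ I)
    {i j : ℕ} (hj : j ≤ n) : u ∉ seg p i j := by
  rintro ⟨t, _, ht, e⟩; exact h.nI hu (by omega) e.symm

theorem BP.antiS {A I : Set V} {p : ℕ → V} {n : ℕ} {y y' : V} (h : BP G A I p n y y')
    {i j : ℕ} (hj : j ≤ n) : Anti G (seg p i j) A :=
  h.side.anti.symm.mono (seg_mono (by omega) hj) subset_rfl

theorem BP.pA {A I : Set V} {p : ℕ → V} {n : ℕ} {y y' : V} (h : BP G A I p n y y')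
    {i : ℕ} (hi : i ≤ n) : p i ∉ A := fun k =>
  (h.side.anti _ k _ (mem_seg (by omega) hi)).1 rfl

theorem overlap (hEH : ¬ContainsEvenHole G) {A I : Set V} {p : ℕ → V} {n : ℕ} {y y' : V}
    (h : BP G A I p n y y') {u v : V} (hu : u ∈ I) (hv : v ∈ I) (huv : u ≠ v) {fu lu fv lv : ℕ}
    (ru : Rng G p n u fu lu) (rv : Rng G p n v fv lv) (hz : fv + 2 ≤ lv) (hf : fu ≤ fv) :
    lu ≤ fv + 1 := by
  by_contra hlt
  have r2 := ru.ln
  have r3 := rv.ln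
  exact theta hEH huv (h.side.ind u hu v hv) (h.ip.conn (Nat.zero_le fv) (by omega))
    (h.ip.conn (show fv + 2 ≤ n by omega) le_rfl) h.side.cA (h.ip.anti_seg le_rfl le_rfl)
    (h.antiS (by omega)) (h.antiS (by omega))
    ⟨_, mem_seg (by omega) hf, ru.hf⟩ ⟨_, mem_seg (by omega) r2, ru.hl⟩ (h.side.aA u hu)
    ⟨_, mem_seg (by omega) le_rfl, rv.hf⟩ ⟨_, mem_seg hz r3, rv.hl⟩ (h.side.aA v hv)
    (h.nS hu (by omega)) (h.nS hu (by omega)) (h.side.nA u hu)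
    (h.nS hv (by omega)) (h.nS hv (by omega)) (h.side.nA v hv)

theorem tone (hEH : ¬ContainsEvenHole G) (hPyr : ¬ContainsPyramid G) {A I : Set V} {p : ℕ → V} {n : ℕ}
    {y y' : V} (h : BP G A I p n y y') {u v : V} (hu : u ∈ I) (hv : v ∈ I) (huv : u ≠ v) {c : ℕ}
    (hc : c + 1 ≤ n) (hvc : G.Adj v (p c)) (hvf : ∀ i < c, ¬ G.Adj v (p i))
    (huc : G.Adj u (p (c+1))) (hue : ∃ i < c, G.Adj u (p i)) : G.Adj u (p c) := by
  by_contra hn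
  obtain ⟨i, hi, hui⟩ := hue
  obtain ⟨-, e, -, hec, -, he, hout⟩ := firstlast (n := c - 1) (Q := fun i => G.Adj u (p i))
    ⟨i, by omega, hui⟩
  have nuv := h.side.ind u hu v hv
  have cA : Conn G (insert v A) := h.side.cA.insert (h.side.aA v hv)
  have uA : Att G u (insert v A) := (h.side.aA u hu).mono (Set.subset_insert _ _)
  have unA : u ∉ insert v A := by rintro (k | k); exacts [huv k, h.side.nA u hu k]
  by_cases hv1 : G.Adj v (p (c+1))
  · refine pyramid hPyr (a := u) (b1 := p c) (b2 := p (c+1)) (b3 := v) (X1 := seg p e c)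
      (X2 := seg p (c+1) (c+1)) (X3 := insert v A) (h.ip.step hc) hv1.symm hvc.symm
      (h.ip.conn (by omega) (by omega)) (h.ip.conn (by omega) (by omega)) cA
      (mem_seg (by omega) le_rfl) (mem_seg le_rfl le_rfl) (Or.inl rfl)
      ⟨_, mem_seg le_rfl (by omega), he⟩ ⟨_, mem_seg le_rfl le_rfl, huc⟩ uA
      (h.nS hu (by omega)) (h.nS hu (by omega)) unA (h.ip.cross_seg (by omega)) ?_ ?_
      (Or.inr (Or.inl ⟨hn, nuv⟩))
    · rintro _ ⟨t, h1, h2, rfl⟩ w (rfl | hw)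
      · refine ⟨(h.nI hv (by omega)).symm, fun k => ⟨?_, rfl⟩⟩
        rcases Nat.lt_or_ge t c with h3 | h3
        · exact (hvf t h3 k.symm).elim
        · rw [show t = c by omega]
      · have := h.side.anti.symm _ (mem_seg (i := 0) (by omega) (show t ≤ n by omega)) w hw
        exact ⟨this.1, fun k => (this.2 k).elim⟩
    · rintro _ ⟨t, h1, h2, rfl⟩ w (rfl | hw)
      · refine ⟨(h.nI hv (by omega)).symm, fun k => ⟨?_, rfl⟩⟩
        rw [show t = c + 1 by omega]
      · have := h.side.anti.symm _ (mem_seg (i := 0) (by omega) (show t ≤ n by omega)) w hw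
        exact ⟨this.1, fun k => (this.2 k).elim⟩
  · refine theta hEH (h.nI hu (by omega)) hn (X := seg p e (c-1)) (Y := seg p (c+1) (c+1))
      (Z := insert v A) (h.ip.conn (by omega) (by omega)) (h.ip.conn (by omega) (by omega)) cA
      (h.ip.anti_seg (by omega) (by omega)) ?_ ?_ ⟨_, mem_seg le_rfl (by omega), he⟩
      ⟨_, mem_seg le_rfl le_rfl, huc⟩ uA ⟨p (c-1), mem_seg (by omega) le_rfl, ?_⟩
      ⟨_, mem_seg le_rfl le_rfl, h.ip.step hc⟩ ⟨v, Or.inl rfl, hvc.symm⟩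
      (h.nS hu (by omega)) (h.nS hu (by omega)) unA
      (h.ip.nmem_seg (by omega) (by omega) (by omega)) (h.ip.nmem_seg (by omega) (by omega) (by omega)) ?_
    · rintro _ ⟨t, h1, h2, rfl⟩ w (rfl | hw)
      · exact ⟨(h.nI hv (by omega)).symm, fun k => hvf t (by omega) k.symm⟩
      · exact h.side.anti.symm _ (mem_seg (i := 0) (by omega) (show t ≤ n by omega)) w hw
    · rintro _ ⟨t, h1, h2, rfl⟩ w (rfl | hw)
      · rw [show t = c + 1 by omega]
        exact ⟨(h.nI hv (by omega)).symm, fun k => hv1 k.symm⟩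
      · exact h.side.anti.symm _ (mem_seg (i := 0) (by omega) (show t ≤ n by omega)) w hw
    · exact (h.ip.adj _ _ (by omega) (by omega)).2 (by omega)
    · rintro (k | k)
      · exact h.nI hv (by omega) k.symm
      · exact h.pA (by omega) k

theorem BP.yne {A I : Set V} {p : ℕ → V} {n : ℕ} {y y' : V} (h : BP G A I p n y y') {u : V}
    {fu lu : ℕ} (ru : Rng G p n u fu lu) (hz : fu + 2 ≤ lu) : u ≠ y := by
  rintro rfl
  have := ru.fl; have := ru.ln
  have h1 := (h.hy _ (by omega)).1 ru.hf
  have h2 := (h.hy _ (by omega)).1 ru.hl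
  omega

theorem BP.yne' {A I : Set V} {p : ℕ → V} {n : ℕ} {y y' : V} (h : BP G A I p n y y') {u : V}
    {fu lu : ℕ} (ru : Rng G p n u fu lu) (hz : fu + 2 ≤ lu) : u ≠ y' := by
  rintro rfl
  have := ru.fl; have := ru.ln
  have h1 := (h.hy' _ (by omega)).1 ru.hf
  have h2 := (h.hy' _ (by omega)).1 ru.hl
  omega

theorem BP.yy {A I : Set V} {p : ℕ → V} {n : ℕ} {y y' : V} (h : BP G A I p n y y') (hn : 0 < n) :
    y ≠ y' := by
  rintro rfl
  have := (h.hy' 0 (by omega)).1 ((h.hy 0 (by omega)).2 rfl)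
  omega

theorem BP.mdEnds {A I : Set V} {p : ℕ → V} {n : ℕ} {y y' : V} (h : BP G A I p n y y') {u : V}
    (hu : u ∈ I) {fu lu : ℕ} (ru : Rng G p n u fu lu) (hz : fu + 2 ≤ lu) :
    Md G (seg p 0 n) u y y' := by
  have := ru.fl; have := ru.ln
  refine ⟨insert y (seg p 0 fu), insert y' (seg p lu n),
    (h.ip.conn (by omega) (by omega)).insert ⟨p 0, mem_seg le_rfl (by omega), (h.hy 0 (by omega)).2 rfl⟩,
    (h.ip.conn (by omega) (by omega)).insert ⟨p n, mem_seg (by omega) le_rfl, (h.hy' n (by omega)).2 rfl⟩,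
    ?_, Or.inl rfl, Or.inl rfl, Set.insert_subset_insert (seg_mono le_rfl (by omega)),
    Set.insert_subset_insert (seg_mono (by omega) le_rfl),
    ⟨_, Or.inr (mem_seg (by omega) le_rfl), ru.hf⟩, ⟨_, Or.inr (mem_seg le_rfl (by omega)), ru.hl⟩⟩
  rintro a (rfl | ⟨t, h1, h2, rfl⟩) b (rfl | ⟨t', h3, h4, rfl⟩)
  · exact ⟨h.yy (by omega), h.side.ind _ h.yI _ h.yI'⟩
  · exact ⟨h.nI h.yI (by omega), fun k => by have := (h.hy _ (by omega)).1 k; omega⟩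
  · exact ⟨(h.nI h.yI' (by omega)).symm, fun k => by have := (h.hy' _ (by omega)).1 k.symm; omega⟩
  · exact h.ip.anti_seg (show fu + 2 ≤ lu by omega) le_rfl _ (mem_seg h1 h2) _ (mem_seg h3 h4)

theorem BP.mdTight {A I : Set V} {p : ℕ → V} {n : ℕ} {y y' : V} (h : BP G A I p n y y') {u v : V}
    (hu : u ∈ I) (hv : v ∈ I) {fu fv lv c : ℕ}
    (ru : Rng G p n u fu (c+1)) (rv : Rng G p n v c lv) (hz : fu + 2 ≤ c + 1)
    (hvz : c + 2 ≤ lv) (hvc : G.Adj v (p (c+1))) :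
    Md G (seg p 0 n) u y v := by
  have := ru.fl; have := ru.ln; have := rv.fl; have := rv.ln
  refine ⟨insert y (seg p 0 fu), insert v (seg p (c+1) (c+1)),
    (h.ip.conn (by omega) (by omega)).insert ⟨p 0, mem_seg le_rfl (by omega), (h.hy 0 (by omega)).2 rfl⟩,
    (h.ip.conn (by omega) (by omega)).insert ⟨_, mem_seg le_rfl le_rfl, hvc⟩,
    ?_, Or.inl rfl, Or.inl rfl, Set.insert_subset_insert (seg_mono le_rfl (by omega)),
    Set.insert_subset_insert (seg_mono (by omega) (by omega)),
    ⟨_, Or.inr (mem_seg (by omega) le_rfl), ru.hf⟩, ⟨_, Or.inr (mem_seg le_rfl (by omega)), ru.hl⟩⟩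
  rintro a (rfl | ⟨t, h1, h2, rfl⟩) b (rfl | ⟨t', h3, h4, rfl⟩)
  · exact ⟨(h.yne rv hvz).symm, h.side.ind _ h.yI _ hv⟩
  · exact ⟨h.nI h.yI (by omega), fun k => by have := (h.hy _ (by omega)).1 k; omega⟩
  · exact ⟨(h.nI hv (by omega)).symm, fun k => by have := rv.out _ (by omega) k.symm; omega⟩
  · exact h.ip.anti_seg (show fu + 2 ≤ c + 1 by omega) (show c + 1 ≤ n by omega) _ (mem_seg h1 h2) _
      (mem_seg h3 h4)

/-- tight pairs are complete to the middle edge -/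
theorem tight0 (hEH : ¬ContainsEvenHole G) (hPyr : ¬ContainsPyramid G) {A I : Set V} {p : ℕ → V} {n : ℕ}
    {y y' : V} (h : BP G A I p n y y') {u v : V} (hu : u ∈ I) (hv : v ∈ I) (huv : u ≠ v)
    {fu lv c : ℕ} (ru : Rng G p n u fu (c+1)) (rv : Rng G p n v c lv) (hz : fu + 2 ≤ c + 1)
    (hvz : c + 2 ≤ lv) : G.Adj u (p c) :=
  tone hEH hPyr h hu hv huv ru.ln rv.hf
    (fun i hi k => by have := rv.out i (by have := rv.ln; omega) k; omega) ru.hl ⟨fu, by omega, ru.hf⟩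

theorem holeAB (hEH : ¬ContainsEvenHole G) {A B I : Set V} (h : Side G A B I) {s t : V} (hs : s ∈ I)
    (ht : t ∈ I) (hst : s ≠ t) {a p : ℕ → V} {m n : ℕ} (ha : IP G a m) (hp : IP G p n)
    (aA : ∀ i ≤ m, a i ∈ A) (pB : ∀ i ≤ n, p i ∈ B)
    (i j i' j' : ℕ) (hij : i ≤ j) (hj : j ≤ m) (hij' : i' ≤ j') (hj' : j' ≤ n)
    (h1 : ∀ k, i ≤ k → k ≤ j → (G.Adj s (a k) ↔ k = i)) (h2 : ∀ k, i ≤ k → k ≤ j → (G.Adj t (a k) ↔ k = j))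
    (h3 : ∀ k, i' ≤ k → k ≤ j' → (G.Adj s (p k) ↔ k = i'))
    (h4 : ∀ k, i' ≤ k → k ≤ j' → (G.Adj t (p k) ↔ k = j')) : Odd ((j - i) + (j' - i')) := by
  have e1 := IP.ext (ha.shift i (j-i) (by omega)) (x := s) (y := t)
    (fun k hk e => h.nA s hs (e ▸ aA _ (by omega))) (fun k hk e => h.nA t ht (e ▸ aA _ (by omega)))
    hst (h.ind s hs t ht) (fun k hk => by rw [h1 _ (by omega) (by omega)]; omega)
    (fun k hk => by rw [h2 _ (by omega) (by omega)]; omega)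
  have e2 := IP.ext (hp.shift i' (j'-i') (by omega)) (x := s) (y := t)
    (fun k hk e => h.nB s hs (e ▸ pB _ (by omega))) (fun k hk e => h.nB t ht (e ▸ pB _ (by omega)))
    hst (h.ind s hs t ht) (fun k hk => by rw [h3 _ (by omega) (by omega)]; omega)
    (fun k hk => by rw [h4 _ (by omega) (by omega)]; omega)
  have := oddCyc2 hEH e1 e2 (by omega) (by omega) rfl (by rw [ext_last, ext_last]) (by
    intro k k1 k2 k' k3 k4
    obtain ⟨k, rfl⟩ : ∃ q, k = q + 1 := ⟨k-1, by omega⟩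
    obtain ⟨k', rfl⟩ : ∃ q, k' = q + 1 := ⟨k'-1, by omega⟩
    rw [ext_mid (by omega), ext_mid (by omega)]
    exact h.anti _ (aA _ (by omega)) _ (pB _ (by omega)))
  rw [Nat.odd_iff] at this ⊢
  omega

theorem tight_fin (hEH : ¬ContainsEvenHole G) (hPyr : ¬ContainsPyramid G) {J : Set V} {a p : ℕ → V}
    {m n : ℕ} {y y' : V} (hA : BP G (seg p 0 n) J a m y y') (hB : BP G (seg a 0 m) J p n y y') {u v : V}
    (hu : u ∈ J) (hv : v ∈ J) (huv : u ≠ v) {fu lv c : ℕ} (ru : Rng G p n u fu (c+1))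
    (rv : Rng G p n v c lv) (hz : fu + 2 ≤ c + 1) (hvz : c + 2 ≤ lv) (uc : G.Adj u (p c))
    (md1 : Md G (seg p 0 n) u y v) (md2 : Md G (seg p 0 n) v y' u)
    (ncom : ∀ i ≤ m, G.Adj u (a i) → G.Adj v (a i) → False) : False := by
  obtain ⟨f, l, ra⟩ := rng_exists (hA.side.aB u hu)
  obtain ⟨g, k, rb⟩ := rng_exists (hA.side.aB v hv)
  have a1 := ra.fl
  have a2 := ra.ln
  have a3 := rb.fl
  have a4 := rb.ln
  have b1 := ru.fl
  have b2 := ru.ln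
  have b3 := rv.fl
  have b4 := rv.ln
  have uy := hB.yne ru hz
  have uy' := hB.yne' ru hz
  have vy := hB.yne rv hvz
  have vy' := hB.yne' rv hvz
  have yy := hB.yy (by omega)
  have fg : f < g := by
    rcases lt_trichotomy f g with h | h | h
    · exact h
    · exact (ncom f (by omega) ra.hf (h ▸ rb.hf)).elim
    · have mid : Mid G (seg a 0 m) a f y u v := ⟨hA.ip.mono (by omega), fun i hi => mem_seg (by omega) (by omega),
        fun i hi => hA.hy i (by omega), fun i hi => ⟨fun e => by have := ra.out i (by omega) e; omega,
          fun e => e ▸ ra.hf⟩⟩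
      have := mp1y hEH hPyr (hB.side.cfg hB.yI hu hv uy.symm vy.symm huv) mid md1 g (by omega) rb.hf
      omega
  have lk : l < k := by
    rcases lt_trichotomy l k with h | h | h
    · exact h
    · exact (ncom l (by omega) ra.hl (h ▸ rb.hl)).elim
    · obtain ⟨q, hq⟩ : ∃ q : ℕ → V, q = fun t => a (k + t) := ⟨_, rfl⟩
      have hqq : ∀ t, q t = a (k + t) := fun t => by rw [hq]
      have ipq : IP G q (m - k) := hq ▸ hA.ip.shift k (m-k) (by omega)
      have mid : Mid G (seg a 0 m) q (m-k) v y' u := ⟨ipq,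
        fun i hi => by rw [hqq]; exact mem_seg (by omega) (by omega),
        fun i hi => by
          rw [hqq]
          exact ⟨fun e => by have := rb.out _ (by omega) e; omega, fun e => by subst e; exact rb.hl⟩,
        fun i hi => by rw [hqq, hA.hy' _ (by omega)]; omega⟩
      have := mp1x hEH hPyr (hB.side.cfg hv hB.yI' hu vy' huv.symm uy'.symm) mid md2 (l - k) (by omega)
        (by rw [hqq, show k + (l - k) = l by omega]; exact ra.hl)
      omega
  have lg : l < g := by
    rcases Nat.lt_or_ge l g with h | h
    · exact h
    exfalso
    have : l ≠ g := fun e => ncom l (by omega) ra.hl (e ▸ rb.hf)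
    have h1 : l ≤ g + 1 := by
      by_contra h2
      have := overlap hEH hA hu hv huv ra rb (by omega) (by omega)
      omega
    have h2 : l = g + 1 := by omega
    subst h2
    exact ncom g (by omega) (tone hEH hPyr hA hu hv huv (by omega) rb.hf
      (fun i hi e => by have := rb.out i (by omega) e; omega) ra.hl ⟨f, fg, ra.hf⟩) rb.hf
  have sA : ∀ i ≤ m, a i ∈ seg a 0 m := fun i hi => mem_seg (by omega) hi
  have sB : ∀ i ≤ n, p i ∈ seg p 0 n := fun i hi => mem_seg (by omega) hi
  have o2 := holeAB hEH hB.side hu hB.yI' uy' hA.ip hB.ip sA sB l m (c+1) n (by omega) le_rfl (by omega)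
    le_rfl (fun i h1 h2 => ⟨fun e => by have := ra.out _ (by omega) e; omega, fun e => e ▸ ra.hl⟩)
    (fun i h1 h2 => hA.hy' i (by omega))
    (fun i h1 h2 => ⟨fun e => by have := ru.out _ (by omega) e; omega, fun e => e ▸ ru.hl⟩)
    (fun i h1 h2 => hB.hy' i (by omega))
  have o3 := holeAB hEH hB.side hB.yI hB.yI' yy hA.ip hB.ip sA sB 0 m 0 n (by omega) le_rfl (by omega)
    le_rfl (fun i h1 h2 => hA.hy i (by omega)) (fun i h1 h2 => hA.hy' i (by omega))
    (fun i h1 h2 => hB.hy i (by omega)) (fun i h1 h2 => hB.hy' i (by omega))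
  have o4 := holeAB hEH hB.side hu hv huv hA.ip hB.ip sA sB l g c c (by omega) (by omega) (by omega)
    (by omega) (fun i h1 h2 => ⟨fun e => by have := ra.out _ (by omega) e; omega, fun e => e ▸ ra.hl⟩)
    (fun i h1 h2 => ⟨fun e => by have := rb.out _ (by omega) e; omega, fun e => e ▸ rb.hf⟩)
    (fun i h1 h2 => ⟨fun e => by omega, fun e => e ▸ uc⟩)
    (fun i h1 h2 => ⟨fun e => by omega, fun e => e ▸ rv.hf⟩)
  have o5 := holeAB hEH hB.side hB.yI hv vy.symm hA.ip hB.ip sA sB 0 g 0 c (by omega) (by omega) (by omega)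
    (by omega) (fun i h1 h2 => hA.hy i (by omega))
    (fun i h1 h2 => ⟨fun e => by have := rb.out _ (by omega) e; omega, fun e => e ▸ rb.hf⟩)
    (fun i h1 h2 => hB.hy i (by omega))
    (fun i h1 h2 => ⟨fun e => by have := rv.out _ (by omega) e; omega, fun e => e ▸ rv.hf⟩)
  rw [Nat.odd_iff] at o2 o3 o4 o5
  omega

theorem tight (hEH : ¬ContainsEvenHole G) (hPyr : ¬ContainsPyramid G) {A I : Set V} {p : ℕ → V} {n : ℕ}
    {y y' : V} (h : BP G A I p n y y') {u v : V} (hu : u ∈ I) (hv : v ∈ I) (huv : u ≠ v)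
    {fu lv c : ℕ} (ru : Rng G p n u fu (c+1)) (rv : Rng G p n v c lv) (hz : fu + 2 ≤ c + 1)
    (hvz : c + 2 ≤ lv) : False := by
  have b1 := ru.fl
  have b2 := ru.ln
  have b3 := rv.fl
  have b4 := rv.ln
  have uc := tight0 hEH hPyr h hu hv huv ru rv hz hvz
  obtain ⟨p', h', hp', hs, hr⟩ := h.rev
  have ru' := hr _ _ _ ru
  have rv' := hr _ _ _ rv
  rw [show n - c = n - (c+1) + 1 by omega] at rv'
  have vc := tight0 hEH hPyr h' hv hu huv.symm rv' ru' (by omega) (by omega)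
  have md2 := h'.mdTight (fv := 0) hv hu rv' ru' (by omega) (by omega)
    (by rw [hp' _ (by omega), show n - (n - (c+1) + 1) = c by omega]; exact uc)
  rw [hs] at md2
  rw [hp' _ (by omega), show n - (n - (c+1)) = c + 1 by omega] at vc
  have md1 := h.mdTight (fv := 0) hu hv ru rv hz hvz vc
  have md3 := h.mdEnds hu ru hz
  have md4 := h.mdEnds hv rv hvz
  have uy := h.yne ru hz
  have uy' := h.yne' ru hz
  have vy := h.yne rv hvz
  have vy' := h.yne' rv hvz
  have yy := h.yy (by omega)
  have ncom : ∀ a ∈ A, G.Adj u a → G.Adj v a → False := by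
    intro a ha h1 h2
    have := h.side.anti a ha (p c) (mem_seg (by omega) (by omega))
    exact c4 hEH huv (h.side.ind u hu v hv) this.1 this.2 h1 uc h2 rv.hf
  obtain ⟨J, hJ⟩ : ∃ J : Set V, J = {y, u, v, y'} := ⟨_, rfl⟩
  have yJ : y ∈ J := by simp [hJ]
  have yJ' : y' ∈ J := by simp [hJ]
  have uJ : u ∈ J := by simp [hJ]
  have vJ : v ∈ J := by simp [hJ]
  have sJ := h.side.sub (J := J) (by
    rw [hJ]; rintro w (rfl | rfl | rfl | rfl); exacts [h.yI, hu, hv, h.yI'])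
  obtain ⟨m, a, ipa, aA, att, ⟨α, hα, α0⟩, ⟨β, hβ, βm⟩⟩ := wlem hEH hPyr sJ ⟨y, yJ⟩
  have segA : seg a 0 m ⊆ A := by rintro _ ⟨t, _, ht, rfl⟩; exact aA t ht
  have S' : Side G (seg a 0 m) (seg p 0 n) J := ⟨ipa.conn (by omega) le_rfl, sJ.cB,
    sJ.anti.mono segA subset_rfl, sJ.ind, fun x hx k => sJ.nA x hx (segA k), sJ.nB,
    fun x hx => by obtain ⟨i, hi, k⟩ := att x hx; exact ⟨_, mem_seg (by omega) hi, k⟩, sJ.aB⟩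
  have hm : m ≠ 0 := by
    rintro rfl
    obtain ⟨i, hi, k⟩ := att u uJ
    obtain ⟨j, hj, k'⟩ := att v vJ
    obtain rfl : i = 0 := by omega
    obtain rfl : j = 0 := by omega
    exact ncom _ (aA 0 le_rfl) k k'
  obtain ⟨E0, hE0⟩ : ∃ E0 : V → Prop, ∀ w, E0 w ↔ ∀ i ≤ m, (G.Adj w (a i) ↔ i = 0) := ⟨_, fun _ => Iff.rfl⟩
  obtain ⟨Em, hEm⟩ : ∃ Em : V → Prop, ∀ w, Em w ↔ ∀ i ≤ m, (G.Adj w (a i) ↔ i = m) := ⟨_, fun _ => Iff.rfl⟩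
  rw [← hE0] at α0
  rw [← hEm] at βm
  have F : ∀ x ∈ J, ∀ z ∈ J, ∀ w ∈ J, E0 x → Em z → Md G (seg p 0 n) x z w → x ≠ z → x ≠ w → z ≠ w → E0 w := by
    intro x hx z hz w hw h0 hm md n1 n2 n3
    have key := mp1x hEH hPyr (S'.cfg hx hz hw n1 n2 n3) ⟨ipa, fun i hi => mem_seg (by omega) hi,
      (hE0 x).1 h0, (hEm z).1 hm⟩ md
    obtain ⟨i, hi, k⟩ := att w hw
    have := key i hi k
    subst this
    exact (hE0 w).2 fun i hi => ⟨key i hi, fun e => e ▸ k⟩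
  have F' : ∀ x ∈ J, ∀ z ∈ J, ∀ w ∈ J, E0 x → Em z → Md G (seg p 0 n) z x w → x ≠ z → x ≠ w → z ≠ w → Em w := by
    intro x hx z hz w hw h0 hm md n1 n2 n3
    have key := mp1y hEH hPyr (S'.cfg hx hz hw n1 n2 n3) ⟨ipa, fun i hi => mem_seg (by omega) hi,
      (hE0 x).1 h0, (hEm z).1 hm⟩ md
    obtain ⟨i, hi, k⟩ := att w hw
    have := key i hi k
    subst this
    exact (hEm w).2 fun i hi => ⟨key i hi, fun e => e ▸ k⟩
  have X0 : E0 u → E0 v → False := fun h1 h2 =>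
    ncom _ (aA 0 (by omega)) (((hE0 u).1 h1 0 (by omega)).2 rfl) (((hE0 v).1 h2 0 (by omega)).2 rfl)
  have Xm : Em u → Em v → False := fun h1 h2 =>
    ncom _ (aA m (by omega)) (((hEm u).1 h1 m (by omega)).2 rfl) (((hEm v).1 h2 m (by omega)).2 rfl)
  have Xe : ∀ w, E0 w → Em w → False := fun w h1 h2 =>
    hm (((hE0 w).1 h1 m le_rfl).1 (((hEm w).1 h2 m le_rfl).2 rfl))
  have ends : (E0 y ∧ Em y') ∨ (E0 y' ∧ Em y) := by
    rw [hJ] at hα hβ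
    rcases hα with rfl | rfl | rfl | rfl <;> rcases hβ with rfl | rfl | rfl | rfl
    · exact (Xe _ α0 βm).elim
    · exact (Xm βm (F' _ yJ _ uJ _ vJ α0 βm md1 uy.symm vy.symm huv)).elim
    · exact Or.inl ⟨α0, F' _ yJ _ vJ _ yJ' α0 βm md4 vy.symm yy vy'⟩
    · exact Or.inl ⟨α0, βm⟩
    · exact (X0 α0 (F _ uJ _ yJ _ vJ α0 βm md1 uy huv vy.symm)).elim
    · exact (Xe _ α0 βm).elim
    · exact Or.inl ⟨F _ uJ _ vJ _ yJ α0 βm md1.swap huv uy vy, F' _ uJ _ vJ _ yJ' α0 βm md2.swap huv uy' vy'⟩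
    · exact Or.inl ⟨F _ uJ _ yJ' _ yJ α0 βm md3.swap uy' uy yy.symm, βm⟩
    · exact Or.inr ⟨F _ vJ _ yJ _ yJ' α0 βm md4 vy vy' yy, βm⟩
    · exact Or.inr ⟨F _ vJ _ uJ _ yJ' α0 βm md2.swap huv.symm vy' uy', F' _ vJ _ uJ _ yJ α0 βm md1.swap huv.symm vy uy⟩
    · exact (Xe _ α0 βm).elim
    · exact (X0 (F _ vJ _ yJ' _ uJ α0 βm md2 vy' huv.symm uy'.symm) α0).elim
    · exact Or.inr ⟨α0, βm⟩
    · exact Or.inr ⟨α0, F' _ yJ' _ uJ _ yJ α0 βm md3.swap uy'.symm yy.symm uy⟩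
    · exact (Xm (F' _ yJ' _ vJ _ uJ α0 βm md2 vy'.symm uy'.symm huv.symm) βm).elim
    · exact (Xe _ α0 βm).elim
  have fin : ∀ a' : ℕ → V, BP G (seg p 0 n) J a' m y y' → seg a' 0 m ⊆ A → False := by
    intro a' hA hsub
    exact tight_fin hEH hPyr hA ⟨hA.side.flip, h.ip, yJ, yJ', h.hy, h.hy'⟩ uJ vJ huv ru rv hz hvz uc md1 md2
      fun i hi => ncom _ (hsub (mem_seg (by omega) hi))
  rcases ends with ⟨k1, k2⟩ | ⟨k1, k2⟩
  · exact fin a ⟨S'.flip, ipa, yJ, yJ', (hE0 _).1 k1, (hEm _).1 k2⟩ segA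
  · have hb : BP G (seg p 0 n) J a m y' y := ⟨S'.flip, ipa, yJ', yJ, (hE0 _).1 k1, (hEm _).1 k2⟩
    obtain ⟨a', h1, -, h2, -⟩ := hb.rev
    exact fin a' h1 (h2 ▸ segA)

theorem nest (hEH : ¬ContainsEvenHole G) (hPyr : ¬ContainsPyramid G) {A I : Set V} {p : ℕ → V} {n : ℕ}
    {y y' : V} (h : BP G A I p n y y') {u v : V} (hu : u ∈ I) (hv : v ∈ I) (huv : u ≠ v)
    {fu lu fv lv : ℕ} (ru : Rng G p n u fu lu) (rv : Rng G p n v fv lv) (hz : fu + 2 ≤ lu)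
    (hvz : fv + 2 ≤ lv) (hf : fu ≤ fv) : lu ≤ fv := by
  have h1 := overlap hEH h hu hv huv ru rv hvz hf
  by_contra h2
  obtain rfl : lu = fv + 1 := by omega
  exact tight hEH hPyr h hu hv huv ru rv hz hvz

/-- two distinct nonadjacent neighbours -/
def Two (G : SimpleGraph V) (A : Set V) (z : V) : Prop :=
  ∃ a ∈ A, ∃ b ∈ A, G.Adj z a ∧ G.Adj z b ∧ a ≠ b ∧ ¬ G.Adj a b

theorem triple (hEH : ¬ContainsEvenHole G) (hPyr : ¬ContainsPyramid G) {A B I : Set V}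
    (h : Side G A B I) {x y z : V} (hx : x ∈ I) (hy : y ∈ I) (hz : z ∈ I) (xy : x ≠ y) (xz : x ≠ z)
    (yz : y ≠ z) : ∃ w, (w = x ∨ w = y ∨ w = z) ∧ (Two G A w ∨ Two G B w) := by
  obtain ⟨J, hJ⟩ : ∃ J : Set V, J = {x, y, z} := ⟨_, rfl⟩
  have sJ := h.sub (J := J) (by rw [hJ]; rintro w (rfl | rfl | rfl) <;> assumption)
  obtain ⟨m, a, ipa, aA, att, ⟨α, hα, α0⟩, ⟨β, hβ, βm⟩⟩ := wlem hEH hPyr sJ ⟨x, by simp [hJ]⟩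
  have key : ∃ α β γ, α ∈ J ∧ β ∈ J ∧ γ ∈ J ∧ α ≠ β ∧ α ≠ γ ∧ β ≠ γ ∧
      (∀ i ≤ m, (G.Adj α (a i) ↔ i = 0)) ∧ (∀ i ≤ m, (G.Adj β (a i) ↔ i = m)) := by
    by_cases hm : m = 0
    · subst hm
      refine ⟨x, y, z, by simp [hJ], by simp [hJ], by simp [hJ], xy, xz, yz, ?_, ?_⟩
      · intro i hi
        obtain ⟨j, hj, k⟩ := att x (by simp [hJ])
        obtain rfl : i = 0 := by omega
        obtain rfl : j = 0 := by omega
        simp [k]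
      · intro i hi
        obtain ⟨j, hj, k⟩ := att y (by simp [hJ])
        obtain rfl : i = 0 := by omega
        obtain rfl : j = 0 := by omega
        simp [k]
    · have hab : α ≠ β := by
        rintro rfl
        exact hm ((α0 m le_rfl).1 ((βm m le_rfl).2 rfl))
      have : ∃ γ ∈ J, α ≠ γ ∧ β ≠ γ := by
        rw [hJ] at hα hβ ⊢
        have yx := xy.symm
        have zx := xz.symm
        have zy := yz.symm
        rcases hα with rfl | rfl | rfl <;> rcases hβ with rfl | rfl | rfl <;> simp_all
      obtain ⟨γ, h1, h2, h3⟩ := this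
      exact ⟨α, β, γ, hα, hβ, h1, hab, h2, h3, α0, βm⟩
  obtain ⟨α, β, γ, hα, hβ, hγ, ab, ac, bc, h0, hm⟩ := key
  have c := sJ.cfg hα hβ hγ ab ac bc
  by_cases hno : ∀ i j, i ≤ m → j ≤ m → i + 2 ≤ j → ¬ (G.Adj γ (a i) ∧ G.Adj γ (a j))
  · obtain ⟨w, hw⟩ := mp2 hEH hPyr c ⟨ipa, aA, h0, hm⟩ (att γ hγ) hno
    have : w ∈ J ∧ Two G B w := by
      rcases hw with ⟨rfl, md⟩ | ⟨rfl, md⟩ | ⟨rfl, md⟩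
      · exact ⟨hα, md.two c.nxy c.nxz⟩
      · exact ⟨hβ, md.two (fun e => c.nxy e.symm) c.nyz⟩
      · exact ⟨hγ, md.two (fun e => c.nxz e.symm) (fun e => c.nyz e.symm)⟩
    rw [hJ] at this
    exact ⟨w, this.1, Or.inr this.2⟩
  · push Not at hno
    obtain ⟨i, j, hi, hj, hij, k1, k2⟩ := hno
    rw [hJ] at hγ
    refine ⟨γ, hγ, Or.inl ⟨_, aA i hi, _, aA j hj, k1, k2, fun e => ?_, fun e => ?_⟩⟩
    · have := ipa.inj _ _ hi hj e; omega
    · have := (ipa.adj _ _ hi hj).1 e; omega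

theorem Two.rng {p : ℕ → V} {n : ℕ} (hp : IP G p n) {u : V} (h : Two G (seg p 0 n) u) :
    ∃ f l, Rng G p n u f l ∧ f + 2 ≤ l := by
  obtain ⟨_, ⟨i, _, hi, rfl⟩, _, ⟨j, _, hj, rfl⟩, h1, h2, h3, h4⟩ := h
  obtain ⟨f, l, r⟩ := rng_exists (G := G) (p := p) (n := n) (u := u) ⟨_, mem_seg (by omega) hi, h1⟩
  refine ⟨f, l, r, ?_⟩
  have o1 := r.out i hi h1
  have o2 := r.out j hj h2
  have : i ≠ j := fun e => h3 (by rw [e])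
  have : ¬ (j = i + 1 ∨ i = j + 1) := fun e => h4 ((hp.adj i j hi hj).2 e)
  omega

theorem spider {k : ℕ} {r : V} (q : Fin 3 → ℕ → V) (hq : ∀ j, IP G (q j) k) (q0 : ∀ j, q j 0 = r)
    (hx : ∀ a b : Fin 3, a < b → ∀ i, 0 < i → i ≤ k → ∀ j, 0 < j → j ≤ k →
      q a i ≠ q b j ∧ ¬ G.Adj (q a i) (q b j)) : ContainsSpider G k := by
  have hx' : ∀ a b : Fin 3, a ≠ b → ∀ i, 0 < i → i ≤ k → ∀ j, 0 < j → j ≤ k →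
      q a i ≠ q b j ∧ ¬ G.Adj (q a i) (q b j) := by
    intro a b hab i h1 h2 j h3 h4
    rcases lt_or_gt_of_ne hab with h | h
    · exact hx a b h i h1 h2 j h3 h4
    · have := hx b a h j h3 h4 i h1 h2
      exact ⟨this.1.symm, fun e => this.2 e.symm⟩
  refine ⟨r, fun j m => q j (m + 1), ?_, ?_, ?_, ?_⟩
  · intro j m e
    rw [← q0 j] at e
    have := (hq j).inj _ _ (by omega) (by omega) e
    omega
  · intro j1 m1 j2 m2 e
    by_cases h : j1 = j2
    · subst h
      have := (hq j1).inj _ _ (by omega) (by omega) e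
      exact ⟨rfl, Fin.ext (by omega)⟩
    · exact ((hx' j1 j2 h (m1+1) (by omega) (by omega) (m2+1) (by omega) (by omega)).1 e).elim
  · intro j m
    rw [← q0 j, (hq j).adj _ _ (by omega) (by omega)]
    omega
  · intro j1 m1 j2 m2
    by_cases h : j1 = j2
    · subst h
      simp only [true_and]
      rw [(hq j1).adj _ _ (by omega) (by omega)]; omega
    · exact ⟨fun e => ((hx' j1 j2 h (m1+1) (by omega) (by omega) (m2+1) (by omega) (by omega)).2 e).elim,
        fun e => (h e.1).elim⟩

theorem IP.cons {q : ℕ → V} {n : ℕ} (hq : IP G q n) {x : V} (hx : ∀ i ≤ n, x ≠ q i)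
    (ha : ∀ i ≤ n, (G.Adj x (q i) ↔ i = 0)) :
    ∃ r : ℕ → V, IP G r (n+1) ∧ r 0 = x ∧ ∀ i, r (i+1) = q i := by
  refine ⟨fun t => if t ≤ 0 then x else q (t - 0 - 1), ?_, by simp, fun i => by simp⟩
  have := IP.concat (r := fun _ => x) (s := 0) (n := n) (p := q) (G := G)
    ⟨fun i j _ _ _ => by omega, fun i j _ _ => by simp; omega⟩ hq
    (fun i _ j hj e => hx j hj e) fun i hi j hj => ?_
  · rw [show 0 + n + 1 = n + 1 by omega] at this; exact this
  · rw [ha j hj]; omega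

theorem spider_at {A I : Set V} {p : ℕ → V} {n k : ℕ} {y y' x : V} (hk : 1 ≤ k) (h : BP G A I p n y y')
    (hx : x ∈ I) {f l : ℕ} (r : Rng G p n x f l) (hz : f + 2 ≤ l) (hf : 2 * k - 2 ≤ f)
    (hl : l + (k - 1) ≤ n) : ContainsSpider G k := by
  have hxy := h.yne r hz
  have nf : ∀ i, i < f → ¬ G.Adj x (p i) := fun i hi e => by have := r.out i (by omega) e; omega
  obtain ⟨k, rfl⟩ : ∃ k', k = k' + 1 := ⟨k - 1, by omega⟩
  obtain ⟨q1, hq1, q10, q1s⟩ := IP.cons (x := x) (n := k) ((h.ip.rev f (by omega)).mono (show k ≤ f by omega))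
    (fun i hi => h.nI hx (by omega)) (fun i hi =>
      ⟨fun e => by have := r.out _ (by omega) e; omega, fun e => by subst e; exact r.hf⟩)
  obtain ⟨q2, hq2, q20, q2s⟩ := IP.cons (x := x) (n := k) (h.ip.shift l k (by omega))
    (fun i hi => h.nI hx (by omega)) (fun i hi =>
      ⟨fun e => by have := r.out _ (by omega) e; omega, fun e => by subst e; exact r.hl⟩)
  obtain ⟨q3, hq3, q30, q3s⟩ : ∃ q3, IP G q3 (k+1) ∧ q3 0 = x ∧ ∀ i, 0 < i → i ≤ k + 1 →
      q3 i ∈ A ∨ (q3 i = y ∧ 1 ≤ k) ∨ ∃ j, j + 2 ≤ k ∧ q3 i = p j := by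
    obtain ⟨N, q, hN, hq, q0, qN, qA⟩ := path_via h.side.cA (h.side.aA x hx) (h.side.aA y h.yI)
      (h.side.nA x hx) (h.side.nA y h.yI) hxy (h.side.ind x hx y h.yI)
    by_cases hk2 : k + 1 ≤ N
    · refine ⟨q, hq.mono hk2, q0, fun i h1 h2 => ?_⟩
      rcases Nat.lt_or_ge i N with h3 | h3
      · exact Or.inl (qA i h1 h3)
      · exact Or.inr (Or.inl ⟨by rw [← qN]; congr 1; omega, by omega⟩)
    · have hc := IP.concat hq (h.ip.mono (show k - 2 ≤ n by omega)) ?_ ?_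
      · obtain ⟨q3, hq3⟩ : ∃ q3 : ℕ → V, q3 = fun t => if t ≤ N then q t else p (t - N - 1) := ⟨_, rfl⟩
        have e3 : ∀ t, q3 t = if t ≤ N then q t else p (t - N - 1) := fun t => by rw [hq3]
        rw [← hq3] at hc
        refine ⟨q3, hc.mono (by omega), by rw [e3, if_pos (by omega), q0], fun i h1 h2 => ?_⟩
        rcases lt_trichotomy i N with h3 | h3 | h3
        · left; rw [e3, if_pos (by omega)]; exact qA i h1 h3
        · right; left; rw [e3, if_pos (by omega), h3]; exact ⟨qN, by omega⟩
        · right; right; rw [e3, if_neg (by omega)]; exact ⟨_, by omega, rfl⟩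
      · intro i hi j hj e
        rcases Nat.eq_zero_or_pos i with rfl | h1
        · rw [q0] at e; exact h.nI hx (by omega) e
        · rcases Nat.lt_or_ge i N with h3 | h3
          · exact h.pA (show j ≤ n by omega) (e ▸ qA i h1 h3)
          · obtain rfl : i = N := by omega
            rw [qN] at e; exact h.nI h.yI (by omega) e
      · intro i hi j hj
        rcases Nat.eq_zero_or_pos i with rfl | h1
        · rw [q0]
          exact ⟨fun e => (nf j (by omega) e).elim, fun e => by omega⟩
        · rcases Nat.lt_or_ge i N with h3 | h3
          · exact ⟨fun e => ((h.side.anti _ (qA i h1 h3) (p j) (mem_seg (by omega) (by omega))).2 e).elim,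
              fun e => by omega⟩
          · obtain rfl : i = N := by omega
            rw [qN, h.hy j (by omega)]; simp
  have cross3 : ∀ s, s ≤ n → k ≤ s → ∀ i, 0 < i → i ≤ k + 1 → p s ≠ q3 i ∧ ¬ G.Adj (p s) (q3 i) := by
    intro s h1 h2 i h3 h4
    rcases q3s i h3 h4 with h5 | ⟨h5, h6⟩ | ⟨j, h5, h6⟩
    · exact h.side.anti.symm _ (mem_seg (by omega) h1) _ h5
    · rw [h5]
      exact ⟨(h.nI h.yI h1).symm, fun e => by have := (h.hy s h1).1 e.symm; omega⟩
    · rw [h6]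
      exact ⟨fun e => by have := h.ip.inj _ _ h1 (by omega) e; omega,
        fun e => by have := (h.ip.adj _ _ h1 (by omega)).1 e; omega⟩
  refine spider (r := x) ![q1, q2, q3] ?_ ?_ ?_
  · intro j; fin_cases j
    exacts [hq1, hq2, hq3]
  · intro j; fin_cases j
    exacts [q10, q20, q30]
  · intro a b hab i h1 h2 j h3 h4
    obtain ⟨i', rfl⟩ : ∃ i', i = i' + 1 := ⟨i - 1, by omega⟩
    have hcases : (a = 0 ∧ b = 1) ∨ (a = 0 ∧ b = 2) ∨ (a = 1 ∧ b = 2) := by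
      revert a b; decide
    rcases hcases with ⟨rfl, rfl⟩ | ⟨rfl, rfl⟩ | ⟨rfl, rfl⟩
    · obtain ⟨j', rfl⟩ : ∃ j', j = j' + 1 := ⟨j - 1, by omega⟩
      show q1 (i'+1) ≠ q2 (j'+1) ∧ ¬ G.Adj (q1 (i'+1)) (q2 (j'+1))
      rw [q1s, q2s]
      exact ⟨fun e => by have := h.ip.inj _ _ (by omega) (by omega) e; omega,
        fun e => by have := (h.ip.adj _ _ (by omega) (by omega)).1 e; omega⟩
    · show q1 (i'+1) ≠ q3 j ∧ ¬ G.Adj (q1 (i'+1)) (q3 j)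
      rw [q1s]
      exact cross3 _ (by omega) (by omega) j h3 h4
    · show q2 (i'+1) ≠ q3 j ∧ ¬ G.Adj (q2 (i'+1)) (q3 j)
      rw [q2s]
      exact cross3 _ (by omega) (by omega) j h3 h4

theorem half (hEH : ¬ContainsEvenHole G) (hPyr : ¬ContainsPyramid G) {A I : Set V} {p : ℕ → V} {n k : ℕ}
    {y y' : V} (hk : 1 ≤ k) (h : BP G A I p n y y') (Z : Finset V) (hZ : ∀ z ∈ Z, z ∈ I ∧ Two G (seg p 0 n) z)
    (hc : 2 * k - 1 ≤ Z.card) : ContainsSpider G k := by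
  have : ∀ z, ∃ f l, z ∈ Z → Rng G p n z f l ∧ f + 2 ≤ l := by
    intro z
    by_cases hz : z ∈ Z
    · obtain ⟨f, l, k⟩ := (hZ z hz).2.rng h.ip
      exact ⟨f, l, fun _ => k⟩
    · exact ⟨0, 0, fun k => (hz k).elim⟩
  choose f l hfl using this
  have nst : ∀ u ∈ Z, ∀ v ∈ Z, u ≠ v → f u ≤ f v → l u ≤ f v := fun u hu v hv huv hle =>
    nest hEH hPyr h (hZ u hu).1 (hZ v hv).1 huv (hfl u hu).1 (hfl v hv).1 (hfl u hu).2 (hfl v hv).2 hle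
  have inj : Set.InjOn f Z := by
    intro u hu v hv e
    by_contra huv
    have := nst u hu v hv huv e.le
    have := (hfl u hu).2
    omega
  have hcard : (Z.image f).card = Z.card := Finset.card_image_of_injOn inj
  let e := (Z.image f).orderEmbOfFin hcard
  have : ∀ i, ∃ x ∈ Z, f x = e i := fun i =>
    Finset.mem_image.1 (Finset.orderEmbOfFin_mem (Z.image f) hcard i)
  choose x xZ hx using this
  have step : ∀ i j : Fin Z.card, i < j → l (x i) ≤ f (x j) := by
    intro i j hij
    have hlt : e i < e j := e.strictMono hij
    refine nst _ (xZ i) _ (xZ j) (fun k => ?_) (by rw [hx, hx]; exact hlt.le)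
    have : e i = e j := by rw [← hx, ← hx, k]
    omega
  have lo : ∀ i (hi : i < Z.card), 2 * i ≤ f (x ⟨i, hi⟩) := by
    intro i
    induction i with
    | zero => intro _; omega
    | succ i ih =>
      intro hi
      have h1 := ih (by omega)
      have h2 := step ⟨i, by omega⟩ ⟨i+1, hi⟩ (by simp)
      have h3 := (hfl _ (xZ ⟨i, by omega⟩)).2
      omega
  have up : ∀ d i (hi : i < Z.card), i + d + 1 = Z.card → l (x ⟨i, hi⟩) + d ≤ n := by
    intro d
    induction d with
    | zero => intro i hi _; have := (hfl _ (xZ ⟨i, hi⟩)).1.ln; omega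
    | succ d ih =>
      intro i hi hd
      have h1 := ih (i+1) (by omega) (by omega)
      have h2 := step ⟨i, by omega⟩ ⟨i+1, by omega⟩ (by simp)
      have h3 := (hfl _ (xZ ⟨i+1, by omega⟩)).2
      omega
  have hi : k - 1 < Z.card := by omega
  have h1 := lo (k-1) hi
  have h2 := up (Z.card - 1 - (k-1)) (k-1) hi (by omega)
  exact spider_at hk h (hZ _ (xZ ⟨k-1, hi⟩)).1 (hfl _ (xZ ⟨k-1, hi⟩)).1 (hfl _ (xZ ⟨k-1, hi⟩)).2 (by omega)
    (by omega)

/-- Main structural lemma -/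
theorem main_lemma (hEH : ¬ContainsEvenHole G) (hPyr : ¬ContainsPyramid G) {A B : Set V} {k : ℕ}
    (hk : 1 ≤ k) (I : Finset V) (h : Side G A B I) (hI : I.card = 4 * k - 1) : ContainsSpider G k := by
  classical
  have hne : (I : Set V).Nonempty := by
    rw [Finset.coe_nonempty, ← Finset.card_pos]; omega
  obtain ⟨m, a, ipa, aA, atta, ⟨α, hα, α0⟩, ⟨β, hβ, βm⟩⟩ := wlem hEH hPyr h hne
  have segA : seg a 0 m ⊆ A := by rintro _ ⟨t, _, ht, rfl⟩; exact aA t ht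
  have S1 : Side G (seg a 0 m) B I := ⟨ipa.conn (by omega) le_rfl, h.cB,
    h.anti.mono segA subset_rfl, h.ind, fun x hx k => h.nA x hx (segA k), h.nB,
    fun x hx => by obtain ⟨i, hi, k⟩ := atta x hx; exact ⟨_, mem_seg (by omega) hi, k⟩, h.aB⟩
  obtain ⟨n, p, ipp, pB, attp, ⟨γ, hγ, γ0⟩, ⟨δ, hδ, δn⟩⟩ := wlem hEH hPyr S1.flip hne
  have segB : seg p 0 n ⊆ B := by rintro _ ⟨t, _, ht, rfl⟩; exact pB t ht
  have S2 : Side G (seg a 0 m) (seg p 0 n) I := ⟨S1.cA, ipp.conn (by omega) le_rfl,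
    S1.anti.mono subset_rfl segB, h.ind, S1.nA, fun x hx k => h.nB x hx (segB k), S1.aA,
    fun x hx => by obtain ⟨i, hi, k⟩ := attp x hx; exact ⟨_, mem_seg (by omega) hi, k⟩⟩
  let ZA := I.filter (fun z => Two G (seg a 0 m) z)
  let ZB := I.filter (fun z => Two G (seg p 0 n) z)
  have hU : (I \ (ZA ∪ ZB)).card ≤ 2 := by
    by_contra hlt
    obtain ⟨x, hx, y, hy, z, hz, xy, xz, yz⟩ := Finset.two_lt_card.1 (not_le.1 hlt)
    obtain ⟨w, hw, hT⟩ := triple hEH hPyr S2 (x := x) (y := y) (z := z)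
      (Finset.mem_coe.2 (Finset.mem_sdiff.1 hx).1) (Finset.mem_coe.2 (Finset.mem_sdiff.1 hy).1)
      (Finset.mem_coe.2 (Finset.mem_sdiff.1 hz).1) xy xz yz
    have hwm : w ∈ I \ (ZA ∪ ZB) := by rcases hw with rfl | rfl | rfl <;> assumption
    simp only [ZA, ZB, Finset.mem_sdiff, Finset.mem_union, Finset.mem_filter, not_or, not_and] at hwm
    rcases hT with hT | hT
    · exact hwm.2.1 hwm.1 hT
    · exact hwm.2.2 hwm.1 hT
  have h1 : I.card ≤ (I \ (ZA ∪ ZB)).card + (ZA ∪ ZB).card := by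
    have := Finset.card_le_card_sdiff_add_card (s := I) (t := ZA ∪ ZB)
    omega
  have h2 := Finset.card_union_le ZA ZB
  have hcase : 2 * k - 1 ≤ ZA.card ∨ 2 * k - 1 ≤ ZB.card := by omega
  rcases hcase with hc | hc
  · exact half hEH hPyr hk ⟨S2.flip, ipa, hα, hβ, α0, βm⟩ ZA
      (fun z hz => by simp only [ZA, Finset.mem_filter] at hz; exact hz) hc
  · exact half hEH hPyr hk ⟨S2, ipp, hγ, hδ, γ0, δn⟩ ZB
      (fun z hz => by simp only [ZB, Finset.mem_filter] at hz; exact hz) hc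


/-- Finite Ramsey theorem, on finsets of vertices of an arbitrary graph. -/
theorem ramsey_exists (t k : ℕ) : ∃ n, ∀ (W : Type) (H : SimpleGraph W) (S : Finset W), n ≤ S.card →
    (∃ T ⊆ S, H.IsNClique t T) ∨ (∃ T ⊆ S, Hᶜ.IsNClique k T) := by
  classical
  induction t generalizing k with
  | zero => exact ⟨0, fun W H S _ => Or.inl ⟨∅, by simp, by simp⟩⟩
  | succ t iht =>
    induction k with
    | zero => exact ⟨0, fun W H S _ => Or.inr ⟨∅, by simp, by simp⟩⟩
    | succ k ihk =>
      obtain ⟨a, ha⟩ := iht (k+1)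
      obtain ⟨b, hb⟩ := ihk
      refine ⟨a + b + 1, fun W H S hS => ?_⟩
      obtain ⟨v, hv⟩ : S.Nonempty := by rw [← Finset.card_pos]; omega
      have hc := Finset.card_filter_add_card_filter_not (s := S.erase v) (fun w => H.Adj v w)
      rw [Finset.card_erase_of_mem hv] at hc
      by_cases h1 : a ≤ ((S.erase v).filter (fun w => H.Adj v w)).card
      · rcases ha W H _ h1 with ⟨T, hT, hc⟩ | ⟨T, hT, hc⟩
        · refine Or.inl ⟨insert v T, ?_, hc.insert fun w hw => (Finset.mem_filter.1 (hT hw)).2⟩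
          intro x hx
          rcases Finset.mem_insert.1 hx with rfl | hx
          · exact hv
          · exact Finset.mem_of_mem_erase (Finset.mem_filter.1 (hT hx)).1
        · exact Or.inr ⟨T, fun x hx => Finset.mem_of_mem_erase (Finset.mem_filter.1 (hT hx)).1, hc⟩
      · rcases hb W H ((S.erase v).filter (fun w => ¬ H.Adj v w)) (by omega) with ⟨T, hT, hc⟩ | ⟨T, hT, hc⟩
        · exact Or.inl ⟨T, fun x hx => Finset.mem_of_mem_erase (Finset.mem_filter.1 (hT hx)).1, hc⟩
        · refine Or.inr ⟨insert v T, ?_, hc.insert fun w hw => ?_⟩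
          · intro x hx
            rcases Finset.mem_insert.1 hx with rfl | hx
            · exact hv
            · exact Finset.mem_of_mem_erase (Finset.mem_filter.1 (hT hx)).1
          · have := Finset.mem_filter.1 (hT hw)
            exact (compl_adj _ _ _).2 ⟨fun k => (Finset.ne_of_mem_erase this.1) k.symm, this.2⟩

theorem ramsey_mem (t k : ℕ) : RamseyProp (ramseyNumber t k) t k := by
  apply Nat.sInf_mem (s := {n | RamseyProp n t k})
  obtain ⟨n, hn⟩ := ramsey_exists t k
  refine ⟨n, fun H => ?_⟩
  rcases hn (Fin n) H Finset.univ (by simp) with ⟨T, _, h⟩ | ⟨T, _, h⟩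
  · exact Or.inl ⟨T, h⟩
  · exact Or.inr ⟨T, h⟩

theorem ramsey_indep {t k : ℕ} (hK : G.CliqueFree t) {S : Finset V} (hS : ramseyNumber t k ≤ S.card) :
    ∃ I ⊆ S, I.card = k ∧ ∀ x ∈ I, ∀ y ∈ I, ¬ G.Adj x y := by
  classical
  let φ : Fin (ramseyNumber t k) ↪ V :=
    (Fin.castLEEmb hS).trans (S.equivFin.symm.toEmbedding.trans (Function.Embedding.subtype _))
  have hφ : ∀ i, φ i ∈ S := fun i => (S.equivFin.symm (Fin.castLE hS i)).2
  rcases ramsey_mem t k (G.comap φ) with ⟨T, h⟩ | ⟨T, h⟩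
  · exact (hK (T.map φ) (h.map.mono (map_comap_le _ _))).elim
  · refine ⟨T.map φ, ?_, by simpa using h.card_eq, ?_⟩
    · intro x hx
      obtain ⟨i, _, rfl⟩ := Finset.mem_map.1 hx
      exact hφ i
    · intro x hx y hy hxy
      obtain ⟨i, hi, rfl⟩ := Finset.mem_map.1 hx
      obtain ⟨j, hj, rfl⟩ := Finset.mem_map.1 hy
      have := h.isClique hi hj (fun e => by subst e; exact G.loopless.irrefl _ hxy)
      exact ((compl_adj _ _ _).1 this).2 hxy

theorem ramsey_pos {t k : ℕ} (ht : 1 ≤ t) (hk : 1 ≤ k) : 1 ≤ ramseyNumber t k := by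
  by_contra h
  have h0 : ramseyNumber t k = 0 := by omega
  have key : ∀ {j : ℕ} (H : SimpleGraph (Fin (ramseyNumber t k))) (T : Finset (Fin (ramseyNumber t k))),
      H.IsNClique j T → j = 0 := by
    rw [h0]
    intro j H T hT
    rw [← hT.card_eq]
    rw [Finset.card_eq_zero]
    exact Finset.eq_empty_of_isEmpty T
  rcases ramsey_mem t k ⊥ with ⟨T, h⟩ | ⟨T, h⟩
  · have := key _ _ h; omega
  · have := key _ _ h; omega

theorem clbound (hEH : ¬ContainsEvenHole G) (hPyr : ¬ContainsPyramid G) {k t : ℕ} (hk : 1 ≤ k)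
    (hK : G.CliqueFree t) (hSp : ¬ContainsSpider G k) {A B : Set V} (hA : Conn G A) (hB : Conn G B)
    (hAB : Anti G A B) (S : Finset V) (hS : ∀ x ∈ S, x ∉ A ∧ x ∉ B ∧ Att G x A ∧ Att G x B) :
    S.card < ramseyNumber t (4 * k - 1) := by
  by_contra hc
  obtain ⟨I, hIS, hIc, hI⟩ := ramsey_indep hK (not_lt.1 hc)
  exact hSp (main_lemma hEH hPyr hk I ⟨hA, hB, hAB, fun x hx y hy => hI x hx y hy,
    fun x hx => (hS x (hIS hx)).1, fun x hx => (hS x (hIS hx)).2.1,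
    fun x hx => (hS x (hIS hx)).2.2.1, fun x hx => (hS x (hIS hx)).2.2.2⟩ hIc)


theorem td_mk {ι : Type} {T : SimpleGraph ι} {B : ι → Finset V} (hT : T.IsTree)
    (h1 : ∀ v : V, ∃ i, v ∈ B i) (h2 : ∀ u v : V, G.Adj u v → ∃ i, u ∈ B i ∧ v ∈ B i)
    (h3 : ∀ (v : V) (i j : ι), v ∈ B i → v ∈ B j → ∃ p : T.Walk i j, ∀ x ∈ p.support, v ∈ B x) :
    IsTreeDecomp G T B := by
  classical
  refine ⟨hT, h1, h2, fun v i j hi hj p hp x hx => ?_⟩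
  obtain ⟨q, hq⟩ := h3 v i j hi hj
  have : p = q.bypass := (hT.existsUnique_path i j).unique hp q.bypass_isPath
  rw [this] at hx
  exact hq x (q.support_bypass_subset hx)

theorem td_walk {ι : Type} {T : SimpleGraph ι} {B : ι → Finset V} (h : IsTreeDecomp G T B)
    {v : V} {i j : ι} (hi : v ∈ B i) (hj : v ∈ B j) :
    ∃ p : T.Walk i j, ∀ x ∈ p.support, v ∈ B x := by
  obtain ⟨p, hp, _⟩ := h.1.existsUnique_path i j
  exact ⟨p, h.2.2.2 v i j hi hj p hp⟩

theorem td_iso {ι κ : Type} {T : SimpleGraph ι} {B : ι → Finset V} (h : IsTreeDecomp G T B)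
    (e : κ ≃ ι) : IsTreeDecomp G (T.comap e) (B ∘ e) := by
  let φ : T.comap e ≃g T := Iso.comap e T
  refine td_mk (φ.isTree_iff.2 h.1) ?_ ?_ ?_
  · intro v
    obtain ⟨i, hi⟩ := h.2.1 v
    exact ⟨e.symm i, by simpa using hi⟩
  · intro u v huv
    obtain ⟨i, hi⟩ := h.2.2.1 u v huv
    exact ⟨e.symm i, by simpa using hi⟩
  · intro v i j hi hj
    obtain ⟨p, hp⟩ := td_walk h hi hj
    let q := p.map φ.symm.toHom
    have key : ∀ x ∈ q.support, v ∈ (B ∘ e) x := by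
      intro x hx
      simp only [q, Walk.support_map, List.mem_map] at hx
      obtain ⟨y, hy, rfl⟩ := hx
      have : e (φ.symm.toHom y) = y := φ.apply_symm_apply y
      simp only [Function.comp, this]
      exact hp y hy
    have hi' : φ.symm.toHom (e i) = i := φ.symm_apply_apply i
    have hj' : φ.symm.toHom (e j) = j := φ.symm_apply_apply j
    exact ⟨q.copy hi' hj', by simpa using key⟩

theorem glue_tree {ι : Type} [Fintype ι] {T : SimpleGraph ι} (hT : T.IsTree) (i : ι) :
    ((T ⊕g T) ⊔ edge (Sum.inl i) (Sum.inr i)).IsTree := by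
  classical
  rw [isTree_iff_connected_and_card] at hT ⊢
  refine ⟨hT.1.sum_sup_edge hT.1, ?_⟩
  have h1 : Nat.card (T ⊕g T).edgeSet = Nat.card T.edgeSet + Nat.card T.edgeSet := by
    rw [Nat.card_congr edgeSetSumEquiv, Nat.card_sum]
  have h2 : ((T ⊕g T) ⊔ edge (Sum.inl i) (Sum.inr i)).edgeSet
      = insert s(Sum.inl i, Sum.inr i) (T ⊕g T).edgeSet := by
    rw [edgeSet_sup, edge_edgeSet_of_ne (by simp), Set.union_comm]; rfl
  have h3 : Nat.card ((T ⊕g T) ⊔ edge (Sum.inl i) (Sum.inr i)).edgeSet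
      = Nat.card (T ⊕g T).edgeSet + 1 := by
    rw [h2, Nat.card_coe_set_eq, Nat.card_coe_set_eq, Set.ncard_insert_of_notMem]
    simp
  rw [h3, h1, Nat.card_sum, ← hT.2]
  omega

open Classical in
theorem glue {ι : Type} [Fintype ι] {T : SimpleGraph ι} {B : ι → Finset V} (h : IsTreeDecomp G T B)
    (i₀ : ι) (P Q : Set V) (cov : ∀ x, x ∈ P ∨ x ∈ Q) (hPQ : ∀ x, x ∈ P → x ∈ Q → x ∈ B i₀)
    (ne : ∀ x ∈ P, x ∉ Q → ∀ y ∈ Q, y ∉ P → ¬ G.Adj x y) :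
    IsTreeDecomp G ((T ⊕g T) ⊔ edge (Sum.inl i₀) (Sum.inr i₀))
      (Sum.elim (fun i => (B i).filter (· ∈ P)) (fun i => (B i).filter (· ∈ Q))) := by
  have hadj : ((T ⊕g T) ⊔ edge (Sum.inl i₀) (Sum.inr i₀)).Adj (Sum.inl i₀) (Sum.inr i₀) := by
    simp [edge_adj]
  let fl : T →g ((T ⊕g T) ⊔ edge (Sum.inl i₀) (Sum.inr i₀)) :=
    (Hom.ofLE le_sup_left).comp Embedding.sumInl.toHom
  let fr : T →g ((T ⊕g T) ⊔ edge (Sum.inl i₀) (Sum.inr i₀)) :=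
    (Hom.ofLE le_sup_left).comp Embedding.sumInr.toHom
  have L : ∀ (v : V) (i j : ι), v ∈ P → v ∈ B i → v ∈ B j →
      ∃ p : ((T ⊕g T) ⊔ edge (Sum.inl i₀) (Sum.inr i₀)).Walk (Sum.inl i) (Sum.inl j), ∀ x ∈ p.support,
        v ∈ (Sum.elim (fun i => (B i).filter (· ∈ P)) (fun i => (B i).filter (· ∈ Q))) x := by
    intro v i j hv hi hj
    obtain ⟨p, hp⟩ := td_walk h hi hj
    refine ⟨p.map fl, fun x hx => ?_⟩
    have hx : x ∈ (p.map fl).support := hx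
    rw [Walk.support_map, List.mem_map] at hx
    obtain ⟨y, hy, rfl⟩ := hx
    exact Finset.mem_filter.2 ⟨hp y hy, hv⟩
  have R : ∀ (v : V) (i j : ι), v ∈ Q → v ∈ B i → v ∈ B j →
      ∃ p : ((T ⊕g T) ⊔ edge (Sum.inl i₀) (Sum.inr i₀)).Walk (Sum.inr i) (Sum.inr j), ∀ x ∈ p.support,
        v ∈ (Sum.elim (fun i => (B i).filter (· ∈ P)) (fun i => (B i).filter (· ∈ Q))) x := by
    intro v i j hv hi hj
    obtain ⟨p, hp⟩ := td_walk h hi hj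
    refine ⟨p.map fr, fun x hx => ?_⟩
    have hx : x ∈ (p.map fr).support := hx
    rw [Walk.support_map, List.mem_map] at hx
    obtain ⟨y, hy, rfl⟩ := hx
    exact Finset.mem_filter.2 ⟨hp y hy, hv⟩
  have LR : ∀ (v : V) (i j : ι), v ∈ P → v ∈ Q → v ∈ B i → v ∈ B j →
      ∃ p : ((T ⊕g T) ⊔ edge (Sum.inl i₀) (Sum.inr i₀)).Walk (Sum.inl i) (Sum.inr j), ∀ x ∈ p.support,
        v ∈ (Sum.elim (fun i => (B i).filter (· ∈ P)) (fun i => (B i).filter (· ∈ Q))) x := by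
    intro v i j hv hv2 hi hj
    obtain ⟨p, hp⟩ := L v i i₀ hv hi (hPQ v hv hv2)
    obtain ⟨q, hq⟩ := R v i₀ j hv2 (hPQ v hv hv2) hj
    refine ⟨p.append (Walk.cons hadj q), fun x hx => ?_⟩
    rcases (Walk.mem_support_append_iff _ _).1 hx with hx | hx
    · exact hp x hx
    · rw [Walk.support_cons, List.mem_cons] at hx
      rcases hx with rfl | hx
      · exact hp _ p.end_mem_support
      · exact hq x hx
  refine td_mk (glue_tree h.1 i₀) ?_ ?_ ?_
  · intro v
    obtain ⟨i, hi⟩ := h.2.1 v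
    rcases cov v with hv | hv
    · exact ⟨Sum.inl i, Finset.mem_filter.2 ⟨hi, hv⟩⟩
    · exact ⟨Sum.inr i, Finset.mem_filter.2 ⟨hi, hv⟩⟩
  · intro u v huv
    obtain ⟨i, hu, hv⟩ := h.2.2.1 u v huv
    have : (u ∈ P ∧ v ∈ P) ∨ (u ∈ Q ∧ v ∈ Q) := by
      by_contra hc
      have a1 := cov u
      have a2 := cov v
      have a3 := ne u
      have a4 := ne v
      have a5 := huv.symm
      tauto
    rcases this with k | k
    · exact ⟨Sum.inl i, Finset.mem_filter.2 ⟨hu, k.1⟩, Finset.mem_filter.2 ⟨hv, k.2⟩⟩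
    · exact ⟨Sum.inr i, Finset.mem_filter.2 ⟨hu, k.1⟩, Finset.mem_filter.2 ⟨hv, k.2⟩⟩
  · rintro v (i | i) (j | j) hi hj
    · have hi := Finset.mem_filter.1 hi
      have hj := Finset.mem_filter.1 hj
      exact L v i j hi.2 hi.1 hj.1
    · have hi := Finset.mem_filter.1 hi
      have hj := Finset.mem_filter.1 hj
      exact LR v i j hi.2 hj.2 hi.1 hj.1
    · have hi := Finset.mem_filter.1 hi
      have hj := Finset.mem_filter.1 hj
      obtain ⟨p, hp⟩ := LR v j i hj.2 hi.2 hj.1 hi.1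
      exact ⟨p.reverse, by simpa using hp⟩
    · have hi := Finset.mem_filter.1 hi
      have hj := Finset.mem_filter.1 hj
      exact R v i j hi.2 hi.1 hj.1

open Classical in
/-- number of (ordered) pairs sharing a bag -/
noncomputable def fill {ι : Type} (B : ι → Finset V) : ℕ :=
  ((Finset.univ : Finset (V × V)).filter (fun q => ∃ i, q.1 ∈ B i ∧ q.2 ∈ B i)).card

/-- There is a tree decomposition in which no bag pair can be separated through the bag. -/
theorem exists_min_td (G : SimpleGraph V) : ∃ (m : ℕ) (T : SimpleGraph (Fin m)) (B : Fin m → Finset V),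
    IsTreeDecomp G T B ∧ ∀ (i₀ : Fin m) (P Q : Set V), (∀ x, x ∈ P ∨ x ∈ Q) →
      (∀ x, x ∈ P → x ∈ Q → x ∈ B i₀) → (∀ x ∈ P, x ∉ Q → ∀ y ∈ Q, y ∉ P → ¬ G.Adj x y) →
      ∀ u ∈ B i₀, ∀ v ∈ B i₀, u ∈ P → u ∉ Q → v ∈ Q → v ∉ P → False := by
  classical
  let S : Set ℕ := {n | ∃ (m : ℕ) (T : SimpleGraph (Fin m)) (B : Fin m → Finset V),
    IsTreeDecomp G T B ∧ fill B = n}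
  have hS : S.Nonempty := by
    refine ⟨_, 1, ⊥, fun _ => Finset.univ, td_mk IsTree.of_subsingleton ?_ ?_ ?_, rfl⟩
    · intro v; exact ⟨0, by simp⟩
    · intro u v _; exact ⟨0, by simp⟩
    · intro v i j _ _
      obtain rfl := Subsingleton.elim i j
      exact ⟨Walk.nil, by simp⟩
  obtain ⟨m, T, B, hTD, hf⟩ := Nat.sInf_mem hS
  refine ⟨m, T, B, hTD, fun i₀ P Q cov hPQ ne u hu v hv huP huQ hvQ hvP => ?_⟩
  have hg := glue hTD i₀ P Q cov hPQ ne
  have hg2 := td_iso hg (Fintype.equivFin (Fin m ⊕ Fin m)).symm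
  have hle := Nat.sInf_le (show _ ∈ S from ⟨_, _, _, hg2, rfl⟩)
  rw [← hf] at hle
  refine absurd hle (not_le.2 ?_)
  apply Finset.card_lt_card
  refine (Finset.ssubset_iff_of_subset ?_).2 ⟨(u, v), by simp; exact ⟨i₀, hu, hv⟩, ?_⟩
  · intro q hq
    simp only [Finset.mem_filter, Finset.mem_univ, true_and, Function.comp] at hq ⊢
    obtain ⟨i, h1, h2⟩ := hq
    rcases hj : (Fintype.equivFin (Fin m ⊕ Fin m)).symm i with j | j
    · rw [hj] at h1 h2
      exact ⟨j, (Finset.mem_filter.1 h1).1, (Finset.mem_filter.1 h2).1⟩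
    · rw [hj] at h1 h2
      exact ⟨j, (Finset.mem_filter.1 h1).1, (Finset.mem_filter.1 h2).1⟩
  · intro hq
    simp only [Finset.mem_filter, Finset.mem_univ, true_and, Function.comp] at hq
    obtain ⟨i, h1, h2⟩ := hq
    rcases hj : (Fintype.equivFin (Fin m ⊕ Fin m)).symm i with j | j
    · rw [hj] at h1 h2
      exact hvP (Finset.mem_filter.1 h2).2
    · rw [hj] at h1 h2
      exact huQ (Finset.mem_filter.1 h1).2

/-- A connected set outside a largest bag misses a vertex of the bag. -/
theorem not_full {ι : Type} {T : SimpleGraph ι} {B : ι → Finset V} (h : IsTreeDecomp G T B) (i₀ : ι)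
    (hmax : ∀ i, (B i).card ≤ (B i₀).card) {D : Set V} (hD : Conn G D) (hDd : ∀ d ∈ D, d ∉ B i₀) :
    ∃ x ∈ B i₀, ¬ Att G x D := by
  classical
  by_contra hc
  push Not at hc
  let TD : Set ι := {i | ∃ d ∈ D, d ∈ B i}
  have cvx : ∀ i ∈ TD, ∀ j ∈ TD, ∃ p : T.Walk i j, ∀ x ∈ p.support, x ∈ TD := by
    rintro i ⟨d, hd, hdi⟩ j ⟨d', hd', hdj⟩
    have := hD.2 {e | ∀ j, e ∈ B j → ∃ p : T.Walk i j, ∀ x ∈ p.support, x ∈ TD} ⟨d, hd, ?_⟩ ?_ hd' j hdj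
    · exact this
    · intro j hj
      obtain ⟨p, hp⟩ := td_walk h hdi hj
      exact ⟨p, fun x hx => ⟨d, hd, hp x hx⟩⟩
    · intro a ha haS b hb hab j hj
      obtain ⟨l, hla, hlb⟩ := h.2.2.1 a b hab
      obtain ⟨p, hp⟩ := haS l hla
      obtain ⟨q, hq⟩ := td_walk h hlb hj
      refine ⟨p.append q, fun x hx => ?_⟩
      rcases (Walk.mem_support_append_iff _ _).1 hx with hx | hx
      · exact hp x hx
      · exact ⟨b, hb, hq x hx⟩
  have hex : ∃ n, ∃ t ∈ TD, ∃ p : T.Walk i₀ t, p.length = n := by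
    obtain ⟨d, hd⟩ := hD.1
    obtain ⟨t, ht⟩ := h.2.1 d
    obtain ⟨p⟩ := h.1.connected.preconnected i₀ t
    exact ⟨_, t, ⟨d, hd, ht⟩, p, rfl⟩
  obtain ⟨t, ht, p, hp⟩ := Nat.find_spec hex
  have hmin : ∀ s ∈ TD, ∀ q : T.Walk i₀ s, p.length ≤ q.length := fun s hs q => by
    rw [hp]; exact Nat.find_min' hex ⟨s, hs, q, rfl⟩
  have honly : ∀ y ∈ p.bypass.support, y ∈ TD → y = t := by
    intro y hy hyT
    by_contra hne
    have h1 := Walk.length_takeUntil_lt hy hne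
    have h2 := hmin y hyT (p.bypass.takeUntil y hy)
    have h3 := p.length_bypass_le
    omega
  have hsub : B i₀ ⊆ B t := by
    intro x hx
    obtain ⟨d, hd, hxd⟩ := hc x hx
    obtain ⟨j, hxj, hdj⟩ := h.2.2.1 x d hxd
    obtain ⟨q, hq⟩ := cvx t ht j ⟨d, hd, hdj⟩
    have hq2 : ∀ y ∈ q.bypass.support, y ∈ TD := fun y hy => hq y (q.support_bypass_subset hy)
    have hpath : (p.bypass.append q.bypass).IsPath := by
      rw [Walk.isPath_def, Walk.support_append]
      have hqn := q.bypass_isPath.support_nodup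
      rw [← Walk.cons_tail_support, List.nodup_cons] at hqn
      refine List.Nodup.append p.bypass_isPath.support_nodup hqn.2 ?_
      intro y hy1 hy2
      have := honly y hy1 (hq2 y (List.mem_of_mem_tail hy2))
      subst this
      exact hqn.1 hy2
    exact h.2.2.2 x i₀ j hx hxj _ hpath t ((Walk.mem_support_append_iff _ _).2 (Or.inl p.bypass.end_mem_support))
  obtain ⟨d, hd, hdt⟩ := ht
  have hlt : B i₀ ⊂ B t := (Finset.ssubset_iff_of_subset hsub).2 ⟨d, hdt, hDd d hd⟩
  exact absurd (hmax t) (not_le.2 (Finset.card_lt_card hlt))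


/-- `D` is a connected component of the complement of `Ω`. -/
structure IsCp (G : SimpleGraph V) (Ω : Finset V) (D : Set V) : Prop where
  conn : Conn G D
  dis : ∀ d ∈ D, d ∉ Ω
  cl : ∀ c ∈ D, ∀ x, x ∉ Ω → G.Adj c x → x ∈ D

theorem exists_cp {Ω : Finset V} {a : V} (ha : a ∉ Ω) : ∃ D, IsCp G Ω D ∧ a ∈ D := by
  obtain ⟨C, h1, h2, h3, h4⟩ := exists_comp (G := G) (A := {a}) (X := {x | x ∉ Ω}) (conn_singleton a)
    (by rintro x rfl; exact ha)
  exact ⟨C, ⟨h3, fun d hd => h2 hd, fun c hc x hx k => h4 c hc x hx k⟩, h1 rfl⟩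

theorem IsCp.sub {Ω : Finset V} {D E : Set V} (hD : IsCp G Ω D) (hE : IsCp G Ω E) {a : V} (h1 : a ∈ D)
    (h2 : a ∈ E) : D ⊆ E :=
  hD.conn.2 E ⟨a, h1, h2⟩ fun x _ hxE y hyD k => hE.cl x hxE y (hD.dis y hyD) k

theorem IsCp.eq {Ω : Finset V} {D E : Set V} (hD : IsCp G Ω D) (hE : IsCp G Ω E) {a : V} (h1 : a ∈ D)
    (h2 : a ∈ E) : D = E :=
  Set.Subset.antisymm (hD.sub hE h1 h2) (hE.sub hD h2 h1)

theorem IsCp.anti {Ω : Finset V} {D E : Set V} (hD : IsCp G Ω D) (hE : IsCp G Ω E) (hne : D ≠ E) :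
    Anti G D E := by
  intro x hx y hy
  refine ⟨?_, fun k => ?_⟩
  · rintro rfl; exact hne (hD.eq hE hx hy)
  · exact hne (hD.eq hE (hD.cl x hx y (hE.dis y hy) k) hy)

/-- Bound on a bag with the PMC-like properties. -/
theorem omega_bound (hEH : ¬ContainsEvenHole G) (hPyr : ¬ContainsPyramid G) {k t : ℕ} (hk : 1 ≤ k)
    (ht : 2 ≤ t) (hK : G.CliqueFree t) (hSp : ¬ContainsSpider G k) (Ω : Finset V)
    (ha : ∀ u ∈ Ω, ∀ v ∈ Ω, u ≠ v → ¬ G.Adj u v → ∃ D, IsCp G Ω D ∧ Att G u D ∧ Att G v D)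
    (hb : ∀ D, IsCp G Ω D → ∃ x ∈ Ω, ¬ Att G x D) :
    Ω.card ≤ (t - 1) * (ramseyNumber t (4 * k - 1)) ^ 3 := by
  classical
  have hR := ramsey_pos (t := t) (k := 4 * k - 1) (by omega) (by omega)
  have CL := fun {A B : Set V} => clbound (A := A) (B := B) hEH hPyr hk hK hSp
  generalize ramseyNumber t (4 * k - 1) = R at *
  have hND : ∀ D, IsCp G Ω D → (Ω.filter (fun y => Att G y D)).card < R := by
    intro D hD
    obtain ⟨x, hx, hxD⟩ := hb D hD
    refine CL hD.conn (conn_star (x := x) (F := {E | IsCp G Ω E ∧ Att G x E}) fun E hE => ⟨hE.1.conn, hE.2⟩)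
      ?_ _ ?_
    · intro d hd y hy
      rcases hy with rfl | ⟨E, ⟨hE, hxE⟩, hyE⟩
      · exact ⟨fun e => hD.dis d hd (e ▸ hx), fun k => hxD ⟨d, hd, k.symm⟩⟩
      · exact hD.anti hE (fun e => hxD (e ▸ hxE)) d hd y hyE
    · intro y hy
      obtain ⟨hy, hyD⟩ := Finset.mem_filter.1 hy
      have hxy : x ≠ y := fun e => hxD (e ▸ hyD)
      refine ⟨fun h => hD.dis y h hy, ?_, hyD, ?_⟩
      · rintro (h | ⟨E, ⟨hE, hxE⟩, hyE⟩)
        · exact hxy h.symm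
        · exact hE.dis y hyE hy
      · by_cases hadj : G.Adj x y
        · exact ⟨x, Or.inl rfl, hadj.symm⟩
        · obtain ⟨E, hE, hxE, e, he, hye⟩ := ha x hx y hy hxy hadj
          exact ⟨e, Or.inr ⟨E, ⟨hE, hxE⟩, he⟩, hye⟩
  have hR1 : 1 ≤ R ^ 3 := Nat.one_le_pow _ _ hR
  by_cases hcl : ∀ u ∈ Ω, ∀ v ∈ Ω, u ≠ v → G.Adj u v
  · have hlt : Ω.card < t := by
      by_contra hc
      obtain ⟨S, hS, hSc⟩ := Finset.exists_subset_card_eq (not_lt.1 hc)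
      exact hK S ⟨fun u hu v hv huv => hcl u (hS hu) v (hS hv) huv, hSc⟩
    calc Ω.card ≤ (t - 1) * 1 := by omega
      _ ≤ _ := Nat.mul_le_mul_left _ hR1
  push Not at hcl
  obtain ⟨u, hu, v, hv, huv, hnadj⟩ := hcl
  obtain ⟨D₀, hD₀, hD₀u, hD₀v⟩ := ha u hu v hv huv hnadj
  let F : Finset (Set V) := Finset.univ.filter (fun D => IsCp G Ω D ∧ Att G u D ∧ Att G v D)
  have hF : ∀ D, D ∈ F ↔ IsCp G Ω D ∧ Att G u D ∧ Att G v D := fun D => by simp [F]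
  let A0 : Set V := insert u (⋃₀ {E | IsCp G Ω E ∧ Att G u E ∧ ¬ Att G v E})
  let B0 : Set V := insert v (⋃₀ {E | IsCp G Ω E ∧ Att G v E ∧ ¬ Att G u E})
  have cA0 : Conn G A0 := conn_star fun E hE => ⟨hE.1.conn, hE.2.1⟩
  have cB0 : Conn G B0 := conn_star fun E hE => ⟨hE.1.conn, hE.2.1⟩
  have an : Anti G A0 B0 := by
    rintro x (rfl | ⟨E, ⟨hE, hEu, hEv⟩, hxE⟩) y (rfl | ⟨E', ⟨hE', hEv', hEu'⟩, hyE⟩)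
    · exact ⟨huv, hnadj⟩
    · exact ⟨fun e => hE'.dis y hyE (e ▸ hu), fun k => hEu' ⟨y, hyE, k⟩⟩
    · exact ⟨fun e => hE.dis x hxE (e ▸ hv), fun k => hEv ⟨x, hxE, k.symm⟩⟩
    · exact hE.anti hE' (fun e => hEu' (e ▸ hEu)) x hxE y hyE
  let W : Set V := {w | w ∉ A0 ∧ ¬ Att G w A0}
  have hBW : B0 ⊆ W := fun y hy =>
    ⟨fun h => (an y h y hy).1 rfl, fun ⟨x, hx, k⟩ => (an x hx y hy).2 k.symm⟩
  obtain ⟨B1, hB01, hB1W, cB1, hB1⟩ := exists_comp cB0 hBW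
  let S1 : Finset V := Finset.univ.filter (fun x => x ∉ A0 ∧ x ∉ B1 ∧ Att G x A0 ∧ Att G x B1)
  have hS1c : S1.card < R := by
    refine CL cA0 cB1 ?_ _ ?_
    · intro x hx y hy
      exact ⟨fun e => (hB1W hy).1 (e ▸ hx), fun k => (hB1W hy).2 ⟨x, hx, k.symm⟩⟩
    · intro x hx; exact (Finset.mem_filter.1 hx).2
  have hvB : v ∈ B1 := hB01 (Or.inl rfl)
  have meet : ∀ D ∈ F, ∃ b ∈ D, b ∈ S1 := by
    intro D hDF
    obtain ⟨hD, hDu, hDv⟩ := (hF D).1 hDF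
    have cE := hD.conn.insert hDv
    obtain ⟨d, hd, hud⟩ := hDu
    have hdB : d ∉ B1 := fun h => (hB1W h).2 ⟨u, Or.inl rfl, hud.symm⟩
    obtain ⟨a, haE, haB, b, hbE, hbB, hab⟩ := cE.exit (P := B1) ⟨v, Or.inl rfl, hvB⟩
      (fun h => hdB (h (Or.inr hd)))
    have hbD : b ∈ D := by
      rcases hbE with rfl | h
      · exact (hbB hvB).elim
      · exact h
    have hbA : b ∉ A0 := by
      rintro (rfl | ⟨E, ⟨hE, hEu, hEv⟩, hbE⟩)
      · exact hD.dis _ hbD hu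
      · exact hEv ((hD.eq hE hbD hbE) ▸ hDv)
    have hbW : Att G b A0 := by
      by_contra hc
      exact hbB (hB1 a haB b ⟨hbA, hc⟩ hab)
    exact ⟨b, hbD, Finset.mem_filter.2 ⟨Finset.mem_univ _, hbA, hbB, hbW, a, haB, hab.symm⟩⟩
  have hFc : F.card ≤ S1.card := by
    have : ∀ D, ∃ b, D ∈ F → b ∈ D ∧ b ∈ S1 := by
      intro D
      by_cases h : D ∈ F
      · obtain ⟨b, h1, h2⟩ := meet D h
        exact ⟨b, fun _ => ⟨h1, h2⟩⟩
      · exact ⟨u, fun k => (h k).elim⟩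
    choose g hg using this
    refine Finset.card_le_card_of_injOn g (fun D hD => (hg D hD).2) ?_
    intro D hD E hE e
    have h1 := (hg D hD).1
    have h2 := (hg E hE).1
    rw [← e] at h2
    exact ((hF D).1 hD).1.eq ((hF E).1 hE).1 h1 h2
  have hcov : Ω ⊆ S1 ∪ F.biUnion (fun D => Ω.filter (fun y => Att G y D)) := by
    intro x hx
    rw [Finset.mem_union, Finset.mem_biUnion]
    by_cases hxF : ∃ D ∈ F, Att G x D
    · obtain ⟨D, hD, hxD⟩ := hxF
      exact Or.inr ⟨D, hD, Finset.mem_filter.2 ⟨hx, hxD⟩⟩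
    left
    push Not at hxF
    have hxu : u ≠ x := by rintro rfl; exact hxF D₀ ((hF _).2 ⟨hD₀, hD₀u, hD₀v⟩) hD₀u
    have hxv : v ≠ x := by rintro rfl; exact hxF D₀ ((hF _).2 ⟨hD₀, hD₀u, hD₀v⟩) hD₀v
    have attA : Att G x A0 := by
      by_cases hadj : G.Adj u x
      · exact ⟨u, Or.inl rfl, hadj.symm⟩
      · obtain ⟨E, hE, huE, hxE⟩ := ha u hu x hx hxu hadj
        have hvE : ¬ Att G v E := fun k => hxF E ((hF _).2 ⟨hE, huE, k⟩) hxE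
        obtain ⟨e, he, hxe⟩ := hxE
        exact ⟨e, Or.inr ⟨E, ⟨hE, huE, hvE⟩, he⟩, hxe⟩
    have attB : Att G x B0 := by
      by_cases hadj : G.Adj v x
      · exact ⟨v, Or.inl rfl, hadj.symm⟩
      · obtain ⟨E, hE, hvE, hxE⟩ := ha v hv x hx hxv hadj
        have huE : ¬ Att G u E := fun k => hxF E ((hF _).2 ⟨hE, k, hvE⟩) hxE
        obtain ⟨e, he, hxe⟩ := hxE
        exact ⟨e, Or.inr ⟨E, ⟨hE, hvE, huE⟩, he⟩, hxe⟩
    refine Finset.mem_filter.2 ⟨Finset.mem_univ _, ?_, fun h => (hB1W h).2 attA, attA, attB.mono hB01⟩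
    rintro (h | ⟨E, ⟨hE, _⟩, hxE⟩)
    · exact hxu h.symm
    · exact hE.dis x hxE hx
  have hc1 := Finset.card_le_card hcov
  have hc2 := Finset.card_union_le S1 (F.biUnion (fun D => Ω.filter (fun y => Att G y D)))
  have hc3 := Finset.card_biUnion_le_card_mul F (fun D => Ω.filter (fun y => Att G y D)) (R - 1)
    (fun D hD => by have := hND D ((hF D).1 hD).1; omega)
  obtain ⟨r, rfl⟩ : ∃ r, R = r + 1 := ⟨R - 1, by omega⟩
  have hc4 : F.card * (r + 1 - 1) ≤ r * r := Nat.mul_le_mul (by omega) (by omega)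
  have h1 : Ω.card ≤ r + r * r := by omega
  calc Ω.card ≤ r + r * r := h1
    _ ≤ 1 * (r + 1) ^ 3 := by ring_nf; nlinarith
    _ ≤ _ := Nat.mul_le_mul_right _ (by omega)

/-- Two nonadjacent vertices of a bag that cannot be separated through the bag see a common component. -/
theorem common_cp {Ω : Finset V} (hsep : ∀ (P Q : Set V), (∀ x, x ∈ P ∨ x ∈ Q) →
      (∀ x, x ∈ P → x ∈ Q → x ∈ Ω) → (∀ x ∈ P, x ∉ Q → ∀ y ∈ Q, y ∉ P → ¬ G.Adj x y) →
      ∀ u ∈ Ω, ∀ v ∈ Ω, u ∈ P → u ∉ Q → v ∈ Q → v ∉ P → False) :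
    ∀ u ∈ Ω, ∀ v ∈ Ω, u ≠ v → ¬ G.Adj u v → ∃ D, IsCp G Ω D ∧ Att G u D ∧ Att G v D := by
  classical
  intro u hu v hv huv hn
  by_contra hc
  push Not at hc
  let Z : Set V := {x | ∃ D, IsCp G Ω D ∧ x ∈ D ∧ Att G v D}
  have hZ : ∀ x ∈ Z, x ∉ Ω := fun x ⟨D, hD, hx, _⟩ => hD.dis x hx
  refine hsep {x | (x ∈ Ω ∧ x ≠ v) ∨ (x ∉ Ω ∧ x ∉ Z)} {x | (x ∈ Ω ∧ x ≠ u) ∨ (x ∉ Ω ∧ x ∈ Z)}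
    ?_ ?_ ?_ u hu v hv (Or.inl ⟨hu, huv⟩) ?_ (Or.inl ⟨hv, huv.symm⟩) ?_
  · intro x
    by_cases h1 : x ∈ Ω
    · by_cases h2 : x = v
      · exact Or.inr (Or.inl ⟨h1, fun e => huv (e.symm.trans h2)⟩)
      · exact Or.inl (Or.inl ⟨h1, h2⟩)
    · by_cases h2 : x ∈ Z
      · exact Or.inr (Or.inr ⟨h1, h2⟩)
      · exact Or.inl (Or.inr ⟨h1, h2⟩)
  · rintro x (h | h) (h' | h')
    · exact h.1
    · exact h.1
    · exact h'.1
    · exact (h.2 h'.2).elim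
  · intro x hxP hxQ y hyQ hyP hadj
    have hx : x = u ∨ (x ∉ Ω ∧ x ∉ Z) := by
      simp only [Set.mem_setOf_eq] at hxP hxQ; tauto
    have hy : y = v ∨ (y ∉ Ω ∧ y ∈ Z) := by
      simp only [Set.mem_setOf_eq] at hyP hyQ; tauto
    rcases hx with rfl | ⟨hx1, hx2⟩ <;> rcases hy with rfl | ⟨hy1, D, hD, hyD, hDv⟩
    · exact hn hadj
    · exact hc D hD ⟨y, hyD, hadj⟩ hDv
    · obtain ⟨D, hD, hxD⟩ := exists_cp (G := G) hx1
      exact hx2 ⟨D, hD, hxD, x, hxD, hadj.symm⟩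
    · exact hx2 ⟨D, hD, hD.cl y hyD x hx1 hadj.symm, hDv⟩
  · rintro (h | h)
    · exact h.2 rfl
    · exact h.1 hu
  · rintro (h | h)
    · exact h.2 rfl
    · exact h.1 hv

theorem tw_main (G : SimpleGraph V) (k t : ℕ) (hk : 1 ≤ k) (ht : 1 ≤ t)
    (hEH : ¬ContainsEvenHole G) (hPyr : ¬ContainsPyramid G)
    (hK : G.CliqueFree t) (hS : ¬ContainsSpider G k) :
    treewidth G ≤ (t - 1) * (ramseyNumber t (4 * k - 1)) ^ 3 - 1 := by
  classical
  obtain ⟨m, T, B, hTD, hsep⟩ := exists_min_td G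
  refine Nat.sInf_le ⟨m, T, B, hTD, fun i => ?_⟩
  by_cases ht1 : t = 1
  · subst ht1
    have : B i = ∅ := by
      rw [Finset.eq_empty_iff_forall_notMem]
      intro x _
      exact hK {x} ⟨by simp, by simp⟩
    rw [this]; simp
  have : Nonempty (Fin m) := ⟨i⟩
  obtain ⟨i₀, hi₀⟩ := Finite.exists_max (fun i => (B i).card)
  have := omega_bound hEH hPyr hk (by omega) hK hS (B i₀) (common_cp (hsep i₀))
    (fun D hD => not_full hTD i₀ hi₀ hD.conn hD.dis)
  have := hi₀ i
  omega

end TW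

/-- For `k ≥ 1` and `t ≥ 1`, every (even hole, pyramid, `K_t`,
`S_{k,k,k}`)-free graph has treewidth at most `(t-1)·R(t, 4k-1)³ - 1`. -/
theorem statement15 (G : SimpleGraph V) (k t : ℕ) (hk : 1 ≤ k) (ht : 1 ≤ t)
    (hEH : ¬ContainsEvenHole G) (hPyr : ¬ContainsPyramid G)
    (hK : G.CliqueFree t) (hS : ¬ContainsSpider G k) :
    treewidth G ≤ (t - 1) * (ramseyNumber t (4 * k - 1)) ^ 3 - 1 := by
  exact TW.tw_main G k t hk ht hEH hPyr hK hS
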